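/- Let M be a non-quasianalytic weight sequence of moderate growth such that m_k := M_k/k! is log-convex, and let d ≥ 1. Then the ring of germs at 0 ∈ ℝ^d of complex-valued E^{(M)}-functions has property (D): for every function f defined on an open neighborhood of 0 in ℝ^d and every integer j ≥ 1, if f^j and f^{j+1} are of class E^{(M)} on some open neighborhood of 0, then f is of class E^{(M)} on some open neighborhood of 0. -/

import Mathlib

open Filter Set Asymptotics MeasureTheory

noncomputable section

/-- `M` is a weight sequence: `M 0 = 1`, positive, `M 1 ≥ 1`, log-convex and
`M k ^ (1/k) → ∞`. -/
def IsWeightSeq (M : ℕ → ℝ) : Prop :=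
  M 0 = 1 ∧ (∀ k, 0 < M k) ∧ 1 ≤ M 1 ∧
    (∀ k : ℕ, 1 ≤ k → M k ^ 2 ≤ M (k - 1) * M (k + 1)) ∧
    Tendsto (fun k : ℕ => M k ^ (1 / (k : ℝ))) atTop atTop

/-- The sequence `m k = M k / k!`. -/
def mseq (M : ℕ → ℝ) : ℕ → ℝ := fun k => M k / (Nat.factorial k : ℝ)

/-- Log-convexity of a sequence. -/
def LogConvexSeq (m : ℕ → ℝ) : Prop := ∀ k : ℕ, 1 ≤ k → m k ^ 2 ≤ m (k - 1) * m (k + 1)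

/-- `m k ^ (1/k) → ∞`. -/
def RootTendsToInfty (m : ℕ → ℝ) : Prop :=
  Tendsto (fun k : ℕ => m k ^ (1 / (k : ℝ))) atTop atTop

/-- Moderate growth of a sequence. -/
def ModerateGrowth (M : ℕ → ℝ) : Prop :=
  ∃ C : ℝ, 0 < C ∧ ∀ j k : ℕ, M (j + k) ≤ C ^ (j + k) * M j * M k

/-- Derivation closedness of a sequence. -/
def DerivClosed (M : ℕ → ℝ) : Prop :=
  ∃ C : ℝ, 0 < C ∧ ∀ k : ℕ, M (k + 1) ≤ C ^ (k + 1) * M k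

/-- Non-quasianalyticity: `∑_{k≥1} M (k-1) / M k = ∑_{k≥1} 1/μ_k < ∞`. -/
def NonQuasianalytic (M : ℕ → ℝ) : Prop := Summable fun k : ℕ => M k / M (k + 1)

/-- Quasianalyticity: `∑_{k≥1} 1/μ_k = ∞`. -/
def Quasianalytic (M : ℕ → ℝ) : Prop := ¬ NonQuasianalytic M

/-- The associated function `h_m (t) = inf_k m k * t ^ k`. -/
def hFun (m : ℕ → ℝ) (t : ℝ) : ℝ := ⨅ k : ℕ, m k * t ^ k

/-- `Γ̄_m (t) = min {k | h_m t = m k * t ^ k}`. -/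
def GammaBar (m : ℕ → ℝ) (t : ℝ) : ℕ := sInf {k : ℕ | hFun m t = m k * t ^ k}

/-- `Γ̲_m (t) = min {k | m (k+1) / m k ≥ 1 / t}`. -/
def GammaLow (m : ℕ → ℝ) (t : ℝ) : ℕ := sInf {k : ℕ | 1 / t ≤ m (k + 1) / m k}

/-- The set whose supremum is `mg (M, N)`. -/
def mgSet (M N : ℕ → ℝ) : Set ℝ :=
  {x | ∃ j k : ℕ, 1 ≤ j + k ∧ x = (M (j + k) / (N j * N k)) ^ (1 / (j + k : ℝ))}

/-- `mg (M, N) = sup_{j+k ≥ 1} (M (j+k) / (N j * N k)) ^ (1/(j+k))`. -/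
def mg (M N : ℕ → ℝ) : ℝ := sSup (mgSet M N)

/-- `mg (M, N) < ∞`. -/
def MgFinite (M N : ℕ → ℝ) : Prop := BddAbove (mgSet M N)

/-- A weight sequence is regular: `m k ^ (1/k) → ∞`, derivation closed, and
`Γ̄_m (C t) ≤ Γ̲_m t` for some `C ≥ 1`. -/
def RegularWS (M : ℕ → ℝ) : Prop :=
  RootTendsToInfty (mseq M) ∧ DerivClosed M ∧
    ∃ C : ℝ, 1 ≤ C ∧ ∀ t : ℝ, 0 < t → GammaBar (mseq M) (C * t) ≤ GammaLow (mseq M) t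

/-- `f` is of class `E^{M}` (Roumieu) on the open set `U`. -/
def RoumieuOn {E : Type*} [NormedAddCommGroup E] [NormedSpace ℝ E]
    (M : ℕ → ℝ) (f : E → ℂ) (U : Set E) : Prop :=
  ContDiffOn ℝ (⊤ : ℕ∞) f U ∧
    ∀ V : Set E, IsOpen V → IsCompact (closure V) → closure V ⊆ U →
      ∃ C σ : ℝ, 0 < C ∧ 0 < σ ∧
        ∀ x ∈ V, ∀ k : ℕ, ‖iteratedFDerivWithin ℝ k f U x‖ ≤ C * σ ^ k * M k

/-- `f` is of class `E^{(M)}` (Beurling) on the open set `U`. -/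
def BeurlingOn {E : Type*} [NormedAddCommGroup E] [NormedSpace ℝ E]
    (M : ℕ → ℝ) (f : E → ℂ) (U : Set E) : Prop :=
  ContDiffOn ℝ (⊤ : ℕ∞) f U ∧
    ∀ V : Set E, IsOpen V → IsCompact (closure V) → closure V ⊆ U →
      ∀ σ : ℝ, 0 < σ → ∃ C : ℝ, 0 < C ∧
        ∀ x ∈ V, ∀ k : ℕ, ‖iteratedFDerivWithin ℝ k f U x‖ ≤ C * σ ^ k * M k

/-- A weight matrix: a nonempty, pointwise totally ordered family of weight sequences. -/
def IsWeightMatrix (W : Set (ℕ → ℝ)) : Prop :=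
  W.Nonempty ∧ (∀ M ∈ W, IsWeightSeq M) ∧
    ∀ M ∈ W, ∀ N ∈ W, (∀ k, M k ≤ N k) ∨ (∀ k, N k ≤ M k)

/-- R-regularity of a weight matrix. -/
def RRegular (W : Set (ℕ → ℝ)) : Prop :=
  (∀ M ∈ W, RootTendsToInfty (mseq M)) ∧
    (∀ M ∈ W, ∃ N ∈ W, ∃ C : ℝ, 1 ≤ C ∧ ∀ j : ℕ, M (j + 1) ≤ C ^ (j + 1) * N j) ∧
    (∀ M ∈ W, ∃ N ∈ W, ∃ C : ℝ, 1 ≤ C ∧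
      ∀ t : ℝ, 0 < t → GammaBar (mseq N) (C * t) ≤ GammaLow (mseq M) t)

/-- B-regularity of a weight matrix. -/
def BRegular (W : Set (ℕ → ℝ)) : Prop :=
  (∀ M ∈ W, RootTendsToInfty (mseq M)) ∧
    (∀ M ∈ W, ∃ N ∈ W, ∃ C : ℝ, 1 ≤ C ∧ ∀ j : ℕ, N (j + 1) ≤ C ^ j * M j) ∧
    (∀ M ∈ W, ∃ N ∈ W, ∃ C : ℝ, 1 ≤ C ∧
      ∀ t : ℝ, 0 < t → GammaBar (mseq M) (C * t) ≤ GammaLow (mseq N) t)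

/-- R-moderate growth of a weight matrix. -/
def RModerateGrowth (W : Set (ℕ → ℝ)) : Prop := ∀ M ∈ W, ∃ N ∈ W, MgFinite M N

/-- B-moderate growth of a weight matrix. -/
def BModerateGrowth (W : Set (ℕ → ℝ)) : Prop := ∀ M ∈ W, ∃ N ∈ W, MgFinite N M

/-- `f` is of class `E^{W}` (Roumieu, weight matrix) on the open set `U`. -/
def MatrixRoumieuOn {E : Type*} [NormedAddCommGroup E] [NormedSpace ℝ E]
    (W : Set (ℕ → ℝ)) (f : E → ℂ) (U : Set E) : Prop :=
  ContDiffOn ℝ (⊤ : ℕ∞) f U ∧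
    ∀ V : Set E, IsOpen V → IsCompact (closure V) → closure V ⊆ U →
      ∃ M ∈ W, ∃ C σ : ℝ, 0 < C ∧ 0 < σ ∧
        ∀ x ∈ V, ∀ k : ℕ, ‖iteratedFDerivWithin ℝ k f U x‖ ≤ C * σ ^ k * M k

/-- `f` is of class `E^{(W)}` (Beurling, weight matrix) on the open set `U`. -/
def MatrixBeurlingOn {E : Type*} [NormedAddCommGroup E] [NormedSpace ℝ E]
    (W : Set (ℕ → ℝ)) (f : E → ℂ) (U : Set E) : Prop :=
  ContDiffOn ℝ (⊤ : ℕ∞) f U ∧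
    ∀ V : Set E, IsOpen V → IsCompact (closure V) → closure V ⊆ U →
      ∀ M ∈ W, ∀ σ : ℝ, 0 < σ → ∃ C : ℝ, 0 < C ∧
        ∀ x ∈ V, ∀ k : ℕ, ‖iteratedFDerivWithin ℝ k f U x‖ ≤ C * σ ^ k * M k

/-- `ω` is a weight function. -/
def IsWeightFunction (ω : ℝ → ℝ) : Prop :=
  ContinuousOn ω (Ici 0) ∧ MonotoneOn ω (Ici 0) ∧ (∀ t ∈ Ici (0 : ℝ), 0 ≤ ω t) ∧
    ((fun t => ω (2 * t)) =O[atTop] ω) ∧ (ω =o[atTop] fun t : ℝ => t) ∧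
    ((fun t => Real.log t) =o[atTop] ω) ∧ ConvexOn ℝ (Ici 0) fun t => ω (Real.exp t)

/-- The Young conjugate `φ*_ω (s) = sup_{t ≥ 0} (s t - ω (e^t))`. -/
def phiStar (ω : ℝ → ℝ) (s : ℝ) : ℝ := sSup ((fun t => s * t - ω (Real.exp t)) '' Ici 0)

/-- Non-quasianalyticity of a weight function. -/
def NonQuasianalyticW (ω : ℝ → ℝ) : Prop := IntegrableOn (fun t => ω t / t ^ 2) (Ici 1)

/-- `f` is of class `E^{ω}` (Roumieu) on the open set `U`. -/
def OmegaRoumieuOn {E : Type*} [NormedAddCommGroup E] [NormedSpace ℝ E]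
    (ω : ℝ → ℝ) (f : E → ℂ) (U : Set E) : Prop :=
  ContDiffOn ℝ (⊤ : ℕ∞) f U ∧
    ∀ V : Set E, IsOpen V → IsCompact (closure V) → closure V ⊆ U →
      ∃ C ρ : ℝ, 0 < C ∧ 0 < ρ ∧
        ∀ x ∈ V, ∀ k : ℕ,
          ‖iteratedFDerivWithin ℝ k f U x‖ ≤ C * Real.exp (phiStar ω (ρ * k) / ρ)

/-- `f` is of class `E^{(ω)}` (Beurling) on the open set `U`. -/
def OmegaBeurlingOn {E : Type*} [NormedAddCommGroup E] [NormedSpace ℝ E]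
    (ω : ℝ → ℝ) (f : E → ℂ) (U : Set E) : Prop :=
  ContDiffOn ℝ (⊤ : ℕ∞) f U ∧
    ∀ V : Set E, IsOpen V → IsCompact (closure V) → closure V ⊆ U →
      ∀ ρ : ℝ, 0 < ρ → ∃ C : ℝ, 0 < C ∧
        ∀ x ∈ V, ∀ k : ℕ,
          ‖iteratedFDerivWithin ℝ k f U x‖ ≤ C * Real.exp (phiStar ω (ρ * k) / ρ)

/-- The open ellipse `Ω_ε` with vertices `± cosh ε` and co-vertices `± i sinh ε`. -/
def OmegaE (ε : ℝ) : Set ℂ :=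
  {z : ℂ | (z.re / Real.cosh ε) ^ 2 + (z.im / Real.sinh ε) ^ 2 < 1}

/-- The sequence space `Λ^{M}`. -/
def Lambda (M : ℕ → ℝ) : Set (ℕ → ℂ) :=
  {c | ∃ ρ : ℝ, 0 < ρ ∧ ∃ C : ℝ, ∀ k, ‖c k‖ ≤ C * ρ ^ k * M k}

/-- `L(M)`: all non-quasianalytic weight sequences `N ≥ M` with `n = N/k!` log-convex. -/
def LM (M : ℕ → ℝ) : Set (ℕ → ℝ) :=
  {N | IsWeightSeq N ∧ NonQuasianalytic N ∧ (∀ k, M k ≤ N k) ∧ LogConvexSeq (mseq N)}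

/-- A quasianalytic weight sequence `M` is intersectable if `Λ^{M} = ⋂_{N ∈ L(M)} Λ^{N}`. -/
def Intersectable (M : ℕ → ℝ) : Prop := Lambda M = ⋂ N ∈ LM M, Lambda N



/-- the d-bar operator -/
def jdbar (g : ℂ → ℂ) (z : ℂ) : ℂ := (fderiv ℝ g z 1 + Complex.I * fderiv ℝ g z Complex.I) / 2

def jcis (θ : ℝ) : ℂ := (Real.cos θ + Real.sin θ * Complex.I : ℂ)

lemma jcis_ne (θ : ℝ) : jcis θ ≠ 0 := by
  have : jcis θ = Complex.exp (θ * Complex.I) := by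
    simp [jcis, Complex.exp_mul_I]
  rw [this]; exact Complex.exp_ne_zero _

lemma jcis_cont : Continuous jcis := by unfold jcis; fun_prop

lemma jcis_hasDeriv (θ : ℝ) : HasDerivAt jcis (Complex.I * jcis θ) θ := by
  have h1 : HasDerivAt (fun θ : ℝ => ((Real.cos θ : ℝ) : ℂ)) ((-Real.sin θ : ℝ) : ℂ) θ :=
    (Real.hasDerivAt_cos θ).ofReal_comp
  have h2 : HasDerivAt (fun θ : ℝ => ((Real.sin θ : ℝ) : ℂ)) ((Real.cos θ : ℝ) : ℂ) θ :=
    (Real.hasDerivAt_sin θ).ofReal_comp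
  have := h1.add (h2.mul_const Complex.I)
  refine HasDerivAt.congr_deriv (f := jcis) this ?_
  unfold jcis
  push_cast
  linear_combination -(Complex.sin θ) * Complex.I_mul_I

lemma jcis_norm (θ : ℝ) : ‖jcis θ‖ = 1 := by
  have : jcis θ = Complex.exp (θ * Complex.I) := by
    simp [jcis, Complex.exp_mul_I]
  rw [this]; exact Complex.norm_exp_ofReal_mul_I θ

lemma jdbar_rot (g : ℂ → ℂ) (z : ℂ) (θ : ℝ) :
    jdbar g z / jcis θ = (1/2 : ℂ) * fderiv ℝ g z (jcis θ) +
      (Complex.I / 2) * fderiv ℝ g z (Complex.I * jcis θ) := by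
  have h1 : jcis θ = Real.cos θ • (1:ℂ) + Real.sin θ • Complex.I := by simp [jcis]
  have h2 : Complex.I * jcis θ = Real.cos θ • Complex.I + (-Real.sin θ) • (1:ℂ) := by
    simp [jcis]; linear_combination (Complex.sin θ) * Complex.I_mul_I
  rw [div_eq_iff (jcis_ne θ), h2]
  nth_rewrite 1 [h1]
  rw [map_add, map_add, map_smul, map_smul, map_smul, map_smul]
  unfold jdbar jcis
  simp only [Complex.real_smul]
  have := Complex.cos_sq_add_sin_sq (θ:ℂ)
  have hI := Complex.I_mul_I
  push_cast
  generalize (fderiv ℝ g z) 1 = a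
  generalize (fderiv ℝ g z) Complex.I = b
  generalize Complex.cos (θ:ℂ) = c at *
  generalize Complex.sin (θ:ℂ) = s at *
  have hI2 : Complex.I ^ 2 = -1 := Complex.I_sq
  have e : (1 / 2 * (c * a + s * b) + Complex.I / 2 * (c * b + -s * a)) * (c + s * Complex.I)
    = (c^2 * (a + Complex.I * b) + c * s * (b - b + Complex.I^2 * b + b) - s^2 * Complex.I^2 * a
        + s^2 * b * Complex.I ) / 2 := by ring
  rw [e, hI2]
  linear_combination -((a + Complex.I * b)/2) * this

lemma j_pompeiu0 (g : ℂ → ℂ) (hg : ContDiff ℝ 1 g) (hc : HasCompactSupport g) :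
    ∫ z : ℂ, jdbar g z / z = - (Real.pi : ℂ) * g 0 := by
  obtain ⟨R, hR0, hR⟩ : ∃ R : ℝ, 0 < R ∧ ∀ z : ℂ, R ≤ ‖z‖ → g z = 0 := by
    obtain ⟨R, hR⟩ := hc.isCompact.isBounded.subset_ball (0:ℂ)
    refine ⟨max R 1, by positivity, fun z hz => ?_⟩
    by_contra h
    have := hR (subset_tsupport g h)
    simp at this
    exact absurd (le_trans (le_max_left _ _) hz) (not_le.2 this)
  have hR' : ∀ z : ℂ, R < ‖z‖ → fderiv ℝ g z = 0 := by
    intro z hz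
    have : g =ᶠ[nhds z] fun _ => 0 := by
      filter_upwards [(isOpen_lt continuous_const continuous_norm).mem_nhds hz] with y hy
      exact hR y hy.le
    rw [this.fderiv_eq]; simp
  have hcont : Continuous (fderiv ℝ g) := hg.continuous_fderiv (by norm_num)
  let A : ℝ × ℝ → ℂ := fun p => fderiv ℝ g (p.1 * jcis p.2) (jcis p.2)
  let B : ℝ × ℝ → ℂ := fun p => fderiv ℝ g (p.1 * jcis p.2) (Complex.I * jcis p.2)
  have hA : Continuous A := by
    have := jcis_cont
    exact (hcont.comp (by fun_prop)).clm_apply (by fun_prop)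
  have hB : Continuous B := by
    have := jcis_cont
    exact (hcont.comp (by fun_prop)).clm_apply (by fun_prop)
  have hz : ∀ p : ℝ × ℝ, R < p.1 → fderiv ℝ g (p.1 * jcis p.2) = 0 := by
    intro p hp
    apply hR'
    rw [norm_mul, jcis_norm, mul_one, Complex.norm_real]
    exact hp.trans_le (le_abs_self _)
  have hIntg : ∀ F : ℝ × ℝ → ℂ, Continuous F → (∀ p : ℝ × ℝ, R < p.1 → F p = 0) →
      IntegrableOn F (Ioi 0 ×ˢ Ioo (-Real.pi) Real.pi) := by
    intro F hF hF0
    have h1 : IntegrableOn F (Icc 0 R ×ˢ Icc (-Real.pi) Real.pi) :=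
      hF.continuousOn.integrableOn_compact (isCompact_Icc.prod isCompact_Icc)
    apply h1.of_forall_sdiff_eq_zero (by measurability)
    intro p hp
    apply hF0
    by_contra h
    apply hp.2
    have := hp.1
    simp only [mem_prod, mem_Ioi, mem_Ioo, mem_Icc] at this ⊢
    exact ⟨⟨this.1.le, not_lt.1 h⟩, this.2.1.le, this.2.2.le⟩
  have hAi := hIntg A hA (fun p hp => by simp only [A]; rw [hz p hp]; rfl)
  have hBi := hIntg B hB (fun p hp => by simp only [B]; rw [hz p hp]; rfl)
  rw [← Complex.integral_comp_polarCoord_symm]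
  have e1 : ∫ p in polarCoord.target, p.1 • (jdbar g (Complex.polarCoord.symm p) / Complex.polarCoord.symm p)
     = ∫ p in (Ioi (0:ℝ) ×ˢ Ioo (-Real.pi) Real.pi), ((1/2 : ℂ) * A p + (Complex.I / 2) * B p) := by
    apply setIntegral_congr_fun (by measurability)
    intro p hp
    have hp1 : 0 < p.1 := hp.1
    have hs : Complex.polarCoord.symm p = p.1 * jcis p.2 := by
      rw [Complex.polarCoord_symm_apply]; rfl
    simp only [A, B]
    rw [← jdbar_rot, hs, Complex.real_smul]
    have : (p.1 : ℂ) ≠ 0 := by exact_mod_cast hp1.ne'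
    have := jcis_ne p.2
    field_simp
  rw [e1, integral_add (hAi.const_mul _) (hBi.const_mul _), integral_const_mul, integral_const_mul]
  have hB0 : ∫ p in (Ioi (0:ℝ) ×ˢ Ioo (-Real.pi) Real.pi), B p = 0 := by
    rw [Measure.volume_eq_prod, setIntegral_prod _ hBi]
    apply setIntegral_eq_zero_of_forall_eq_zero
    intro ρ hρ
    have hρ' : 0 < ρ := hρ
    have hd : ∀ θ : ℝ, HasDerivAt (fun θ : ℝ => g (ρ * jcis θ)) (ρ * B (ρ, θ)) θ := by
      intro θ
      have h1 : HasDerivAt (fun θ : ℝ => (ρ : ℂ) * jcis θ) (ρ * (Complex.I * jcis θ)) θ :=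
        (jcis_hasDeriv θ).const_mul _
      have h2 := ((hg.differentiable (by norm_num)) (ρ * jcis θ)).hasFDerivAt.comp_hasDerivAt θ h1
      refine HasDerivAt.congr_deriv (f := fun θ : ℝ => g (ρ * jcis θ)) h2 ?_
      simp only [B]
      rw [← Complex.real_smul, ← Complex.real_smul, map_smul, Complex.real_smul, Complex.real_smul]
    have h3 : ∫ θ in (-Real.pi)..Real.pi, (ρ : ℂ) * B (ρ, θ) = 0 := by
      rw [intervalIntegral.integral_eq_sub_of_hasDerivAt (fun θ _ => hd θ)]
      · simp [jcis]
      · apply Continuous.intervalIntegrable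
        fun_prop
    rw [intervalIntegral.integral_const_mul] at h3
    have h4 := (mul_eq_zero.1 h3).resolve_left (by exact_mod_cast hρ'.ne')
    rw [intervalIntegral.integral_of_le (by linarith [Real.pi_pos]), integral_Ioc_eq_integral_Ioo] at h4
    exact h4
  have hA0 : ∫ p in (Ioi (0:ℝ) ×ˢ Ioo (-Real.pi) Real.pi), A p = -(2 * Real.pi : ℂ) * g 0 := by
    rw [Measure.volume_eq_prod, ← Measure.prod_restrict, integral_prod_symm _ (by rw [Measure.prod_restrict]; exact hAi)]
    have : ∀ θ : ℝ, ∫ ρ in Ioi (0:ℝ), A (ρ, θ) = - g 0 := by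
      intro θ
      have hd : ∀ ρ : ℝ, HasDerivAt (fun ρ : ℝ => g (ρ * jcis θ)) (A (ρ, θ)) ρ := by
        intro ρ
        have h1 : HasDerivAt (fun ρ : ℝ => (ρ : ℂ) * jcis θ) (1 * jcis θ) ρ := by
          have := (hasDerivAt_id ρ).ofReal_comp
          simpa using this.mul_const (jcis θ)
        have h2 := ((hg.differentiable (by norm_num)) (ρ * jcis θ)).hasFDerivAt.comp_hasDerivAt ρ h1
        refine HasDerivAt.congr_deriv (f := fun ρ : ℝ => g (ρ * jcis θ)) h2 ?_
        simp [A]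
      rw [integral_Ioi_of_hasDerivAt_of_tendsto (m := 0) (f := fun ρ : ℝ => g (ρ * jcis θ))]
      · simp
      · exact (hd 0).continuousAt.continuousWithinAt
      · intro x _; exact hd x
      · have h1 : IntegrableOn (fun ρ => A (ρ, θ)) (Icc 0 R) :=
          (show Continuous (fun ρ => A (ρ, θ)) by fun_prop).continuousOn.integrableOn_compact isCompact_Icc
        apply h1.of_forall_sdiff_eq_zero (by measurability)
        intro ρ hp
        simp only [A]
        rw [hz (ρ, θ)]; · rfl
        by_contra h
        exact hp.2 ⟨le_of_lt hp.1, not_lt.1 h⟩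
      · apply tendsto_const_nhds.congr'
        filter_upwards [eventually_ge_atTop R] with ρ hρ
        rw [hR]
        rw [norm_mul, jcis_norm, mul_one, Complex.norm_real]
        exact hρ.trans (le_abs_self _)
    simp_rw [this]
    rw [setIntegral_const]
    simp [Measure.real]
    rw [ENNReal.toReal_ofReal (by positivity)]
    push_cast; ring_nf; simp
  rw [hA0, hB0]; ring


lemma j_ker_int (p : ℝ) (hp2 : p < 2) (r : ℝ) :
    IntegrableOn (fun z : ℂ => ‖z‖ ^ (-p)) (Metric.ball 0 r) := by
  rw [integrableOn_fun_norm_addHaar volume (f := fun y : ℝ => y ^ (-p))]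
  rcases le_or_gt r 0 with hr | hr
  · simp [Ioo_eq_empty (not_lt.2 hr)]
  have h := (intervalIntegral.intervalIntegrable_rpow' (a := 0) (b := r) (r := 1 - p) (by linarith)).1
  have h2 := h.mono_set Ioo_subset_Ioc_self
  refine h2.congr_fun ?_ measurableSet_Ioo
  intro y hy
  simp only [Complex.finrank_real_complex, smul_eq_mul]
  rw [sub_eq_add_neg, Real.rpow_add hy.1]
  norm_num

lemma j_kernel (p : ℝ) (hp0 : 0 < p) (hp2 : p < 2) : ∃ K : ℝ, 0 ≤ K ∧ ∀ α : ℂ,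
    IntegrableOn (fun z : ℂ => ‖z - α‖ ^ (-p)) (Metric.closedBall 0 1) ∧
    ∫ z in Metric.closedBall (0:ℂ) 1, ‖z - α‖ ^ (-p) ≤ K := by
  set Φ : ℂ → ℝ := (Metric.ball 0 1).indicator (fun z => ‖z‖ ^ (-p)) with hΦ
  have hΦi : Integrable Φ := (integrable_indicator_iff measurableSet_ball).2 (j_ker_int p hp2 1)
  have hΦ0 : ∀ z, 0 ≤ Φ z := fun z => indicator_nonneg (fun z _ => by positivity) z
  have hc : IntegrableOn (fun _ : ℂ => (1:ℝ)) (Metric.closedBall 0 1) :=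
    continuous_const.continuousOn.integrableOn_compact (isCompact_closedBall _ _)
  have hb : ∀ α z : ℂ, ‖z - α‖ ^ (-p) ≤ Φ (z - α) + 1 := by
    intro α z
    by_cases h : z - α ∈ Metric.ball (0:ℂ) 1
    · simp only [hΦ, indicator_of_mem h]; linarith
    · simp only [hΦ, indicator_of_notMem h, zero_add]
      have : 1 ≤ ‖z - α‖ := by simpa using h
      exact Real.rpow_le_one_of_one_le_of_nonpos this (by linarith)
  have hi : ∀ α, IntegrableOn (fun z : ℂ => Φ (z - α) + 1) (Metric.closedBall 0 1) := by
    intro α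
    exact (hΦi.comp_sub_right α).integrableOn.add hc
  have hi2 : ∀ α : ℂ, IntegrableOn (fun z : ℂ => ‖z - α‖ ^ (-p)) (Metric.closedBall 0 1) := by
    intro α
    refine (hi α).mono' (Measurable.aestronglyMeasurable (by fun_prop)) ?_
    refine Eventually.of_forall fun z => ?_
    rw [Real.norm_of_nonneg (by positivity)]
    exact hb α z
  refine ⟨(∫ z, Φ z) + ∫ z in Metric.closedBall (0:ℂ) 1, (1:ℝ), ?_, fun α => ⟨hi2 α, ?_⟩⟩
  · exact add_nonneg (integral_nonneg hΦ0) (integral_nonneg fun _ => zero_le_one)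
  · calc _ ≤ ∫ z in Metric.closedBall (0:ℂ) 1, (Φ (z - α) + 1) :=
          integral_mono (hi2 α) (hi α) (hb α)
      _ = (∫ z in Metric.closedBall (0:ℂ) 1, Φ (z - α)) + ∫ z in Metric.closedBall (0:ℂ) 1, (1:ℝ) :=
          integral_add (hΦi.comp_sub_right α).integrableOn hc
      _ ≤ _ := by
          gcongr
          rw [← integral_sub_right_eq_self Φ α]
          exact setIntegral_le_integral (hΦi.comp_sub_right α) (Eventually.of_forall fun z => hΦ0 _)

lemma j_inv_locint : LocallyIntegrable (fun z : ℂ => z⁻¹) := by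
  rw [locallyIntegrable_iff]
  intro k hk
  obtain ⟨r, hr⟩ := hk.isBounded.subset_ball (0:ℂ)
  refine IntegrableOn.mono_set ?_ hr
  refine (j_ker_int 1 (by norm_num) r).mono' (by fun_prop) ?_
  refine Eventually.of_forall fun z => ?_
  rw [norm_inv, Real.rpow_neg_one]

lemma j_dbar_solve (V : ℂ → ℂ) (hV : ContDiff ℝ 1 V) (hc : HasCompactSupport V) :
    ∃ u : ℂ → ℂ, Differentiable ℝ u ∧ (∀ w, jdbar u w = V w) ∧
      ∀ w, ‖u w‖ ≤ ∫ z, ‖V z‖ * ‖z - w‖ ^ (-1 : ℝ) := by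
  set L := ContinuousLinearMap.mul ℝ ℂ
  set u0 : ℂ → ℂ := MeasureTheory.convolution (fun z : ℂ => z⁻¹) V L volume with hu0
  have hd : ∀ w, HasFDerivAt u0 _ w := fun w =>
    hc.hasFDerivAt_convolution_right L j_inv_locint hV w
  have hpi : (Real.pi : ℂ) ≠ 0 := by exact_mod_cast Real.pi_ne_zero
  have hcf : Continuous (fderiv ℝ V) := hV.continuous_fderiv (by norm_num)
  have hval : ∀ w v, fderiv ℝ u0 w v = ∫ t : ℂ, t⁻¹ * fderiv ℝ V (w - t) v := by
    intro w v
    rw [(hd w).fderiv, convolution_precompR_apply L j_inv_locint (hc.fderiv ℝ) hcf]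
    rfl
  have hIntg : ∀ w v, Integrable (fun t : ℂ => t⁻¹ * fderiv ℝ V (w - t) v) := by
    intro w v
    have hcs : HasCompactSupport (fun a => fderiv ℝ V a v) := hc.fderiv_apply (𝕜 := ℝ) v
    exact hcs.convolutionExists_right L j_inv_locint (by fun_prop) w
  have hdb : ∀ w, jdbar u0 w = Real.pi * V w := by
    intro w
    have hg : ContDiff ℝ 1 (fun z => V (w - z)) := hV.comp (by fun_prop)
    have hgc : HasCompactSupport (fun z => V (w - z)) :=
      hc.comp_homeomorph (Homeomorph.subLeft w)
    have h := j_pompeiu0 _ hg hgc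
    have h1 : ∀ z, fderiv ℝ (fun z => V (w - z)) z = - fderiv ℝ V (w - z) := by
      intro z
      have e := ((hV.differentiable (by norm_num)) (w - z)).hasFDerivAt.comp z
        ((hasFDerivAt_id (𝕜 := ℝ) z).const_sub w)
      refine HasFDerivAt.fderiv (e.congr_fderiv ?_)
      ext v; simp
    unfold jdbar
    rw [hval, hval, ← integral_const_mul, ← integral_add (hIntg w 1) ((hIntg w _).const_mul _),
      ← integral_div]
    unfold jdbar at h
    simp only [h1, sub_zero] at h
    have : ∀ z : ℂ, (z⁻¹ * fderiv ℝ V (w - z) 1 + Complex.I * (z⁻¹ * fderiv ℝ V (w - z) Complex.I)) / 2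
       = - (((-fderiv ℝ V (w - z)) 1 + Complex.I * (-fderiv ℝ V (w - z)) Complex.I) / 2 / z) := by
      intro z
      simp only [neg_apply]
      rw [div_eq_mul_inv _ z]; ring
    simp_rw [this]
    rw [integral_neg, h]; ring
  refine ⟨fun w => (Real.pi : ℂ)⁻¹ * u0 w, ?_, ?_, ?_⟩
  · intro w; exact ((hd w).differentiableAt).const_mul _
  · intro w
    have : fderiv ℝ (fun w => (Real.pi : ℂ)⁻¹ * u0 w) w = (Real.pi : ℂ)⁻¹ • fderiv ℝ u0 w :=
      fderiv_const_mul ((hd w).differentiableAt) _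
    unfold jdbar at hdb ⊢
    have h := hdb w
    rw [this]
    simp only [smul_apply, smul_eq_mul]
    have e : V w = (Real.pi : ℂ)⁻¹ * (Real.pi * V w) := by field_simp
    rw [e, ← h]; ring
  · intro w
    have h1 : ‖u0 w‖ ≤ ∫ t : ℂ, ‖t⁻¹ * V (w - t)‖ := norm_integral_le_integral_norm _
    have h2 : ∫ t : ℂ, ‖t⁻¹ * V (w - t)‖ = ∫ z, ‖V z‖ * ‖z - w‖ ^ (-1 : ℝ) := by
      rw [← integral_sub_left_eq_self _ volume w]
      congr 1; ext z
      rw [norm_mul, norm_inv, Real.rpow_neg_one, sub_sub_cancel, norm_sub_rev, mul_comm]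
    rw [← h2]
    refine le_trans ?_ h1
    rw [norm_mul, norm_inv, Complex.norm_real, Real.norm_of_nonneg Real.pi_pos.le]
    have : Real.pi⁻¹ ≤ 1 := inv_le_one_of_one_le₀ (by linarith [Real.pi_gt_three])
    nlinarith [norm_nonneg (u0 w)]


def jwl (a b : ℂ) : ℂ →L[ℝ] ℂ :=
  a • (ContinuousLinearMap.id ℝ ℂ) + b • (Complex.conjCLE : ℂ →L[ℝ] ℂ)

lemma jwl_apply (a b v : ℂ) : jwl a b v = a * v + b * (starRingEnd ℂ v) := by
  simp [jwl]

lemma jwl_dbar {F : ℂ → ℂ} {a b z : ℂ} (h : HasFDerivAt F (jwl a b) z) : jdbar F z = b := by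
  unfold jdbar
  rw [h.fderiv, jwl_apply, jwl_apply]
  simp
  linear_combination (a / 2 - b / 2) * Complex.I_mul_I

lemma jwl_mul {F G : ℂ → ℂ} {a b c d z : ℂ} (h : HasFDerivAt F (jwl a b) z)
    (h' : HasFDerivAt G (jwl c d) z) :
    HasFDerivAt (fun z => F z * G z) (jwl (a * G z + F z * c) (b * G z + F z * d)) z := by
  refine (h.mul h').congr_fderiv ?_
  ext v
  all_goals simp [jwl_apply]; ring

lemma jwl_comp {F φ : ℂ → ℂ} {a b c z : ℂ} (h : HasFDerivAt F (jwl a b) z)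
    (h' : HasDerivAt φ c (F z)) : HasFDerivAt (fun z => φ (F z)) (jwl (c * a) (c * b)) z := by
  have h2 : HasFDerivAt φ (jwl c 0) (F z) := by
    refine (h'.hasFDerivAt.restrictScalars ℝ).congr_fderiv ?_
    ext v
    all_goals simp [jwl_apply, mul_comm]
  refine (h2.comp z h).congr_fderiv ?_
  ext v
  all_goals simp [jwl_apply]; ring

lemma jwl_poly (G : Polynomial ℂ) (z : ℂ) :
    HasFDerivAt (fun z => G.eval z) (jwl (G.derivative.eval z) 0) z := by
  refine ((G.hasDerivAt z).hasFDerivAt.restrictScalars ℝ).congr_fderiv ?_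
  ext v
  all_goals simp [jwl_apply, mul_comm]

lemma jwl_conj_poly (G : Polynomial ℂ) (z : ℂ) :
    HasFDerivAt (fun z => starRingEnd ℂ (G.eval z))
      (jwl 0 (starRingEnd ℂ (G.derivative.eval z))) z := by
  have h := ((Complex.conjCLE : ℂ ≃L[ℝ] ℂ) : ℂ →L[ℝ] ℂ).hasFDerivAt.comp z (jwl_poly G z)
  refine HasFDerivAt.congr_fderiv (f := fun z => starRingEnd ℂ (G.eval z)) h ?_
  ext v
  all_goals simp [jwl_apply]

def jD (G : Polynomial ℂ) (τ : ℝ) (z : ℂ) : ℝ := ‖G.eval z‖ ^ 2 + τ ^ 2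

lemma jD_pos (G : Polynomial ℂ) {τ : ℝ} (hτ : 0 < τ) (z : ℂ) : 0 < jD G τ z := by
  unfold jD; positivity

lemma jD_eq (G : Polynomial ℂ) (τ : ℝ) (z : ℂ) :
    (jD G τ z : ℂ) = G.eval z * starRingEnd ℂ (G.eval z) + (τ : ℂ) ^ 2 := by
  unfold jD
  rw [Complex.mul_conj, Complex.normSq_eq_norm_sq]; push_cast; ring

def jF (G H : Polynomial ℂ) (τ : ℝ) (z : ℂ) : ℂ :=
  H.eval z * starRingEnd ℂ (G.eval z) * (jD G τ z : ℂ)⁻¹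

def jb (G H : Polynomial ℂ) (τ : ℝ) (z : ℂ) : ℂ :=
  H.eval z * starRingEnd ℂ (G.derivative.eval z) * (τ : ℂ) ^ 2 * ((jD G τ z : ℂ)⁻¹) ^ 2

lemma jwl_congr {F : ℂ → ℂ} {a b b' z : ℂ} (h : HasFDerivAt F (jwl a b) z) (e : b = b') :
    HasFDerivAt F (jwl a b') z := e ▸ h

lemma jF_deriv (G H : Polynomial ℂ) {τ : ℝ} (hτ : 0 < τ) (z : ℂ) :
    ∃ a, HasFDerivAt (jF G H τ) (jwl a (jb G H τ z)) z := by
  have hD0 : (jD G τ z : ℂ) ≠ 0 := by exact_mod_cast (jD_pos G hτ z).ne'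
  have hD0' := (jwl_mul (jwl_poly G z) (jwl_conj_poly G z)).add_const ((τ : ℂ) ^ 2)
  have hD := HasFDerivAt.congr_of_eventuallyEq (f₁ := fun z => (jD G τ z : ℂ)) hD0'
    (Eventually.of_forall fun z => jD_eq G τ z)
  have h := jwl_mul (jwl_mul (jwl_poly H z) (jwl_conj_poly G z))
    (jwl_comp hD (hasDerivAt_inv hD0))
  refine ⟨_, jwl_congr h ?_⟩
  unfold jb
  rw [jD_eq] at hD0 ⊢
  field_simp
  ring

lemma jF_contDiff_b (G H : Polynomial ℂ) {τ : ℝ} (hτ : 0 < τ) : ContDiff ℝ 1 (jb G H τ) := by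
  have hp : ∀ P : Polynomial ℂ, ContDiff ℝ 1 (fun z => P.eval z) := fun P =>
    by simpa using ContDiff.restrict_scalars ℝ (P.contDiff_aeval (𝕜 := ℂ) 1)
  have hpc : ∀ P : Polynomial ℂ, ContDiff ℝ 1 (fun z => starRingEnd ℂ (P.eval z)) := fun P =>
    ((Complex.conjCLE : ℂ ≃L[ℝ] ℂ) : ℂ →L[ℝ] ℂ).contDiff.comp (hp P)
  unfold jb
  have hD : ContDiff ℝ 1 (fun z => (jD G τ z : ℂ)) := by
    simp_rw [jD_eq]
    exact ((hp G).mul (hpc G)).add contDiff_const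
  exact (((hp H).mul (hpc _)).mul contDiff_const).mul
    ((hD.inv fun z => by exact_mod_cast (jD_pos G hτ z).ne').pow 2)

lemma j_polylog (G : Polynomial ℂ) (z : ℂ) (hz : z ∉ G.roots) :
    ‖G.derivative.eval z‖ ≤ ‖G.eval z‖ * (G.roots.map (fun α => ‖z - α‖⁻¹)).sum := by
  by_cases hG : G = 0
  · simp [hG]
  have h0 : G.eval z ≠ 0 := by
    intro h; exact hz ((Polynomial.mem_roots hG).2 h)
  have h := (IsAlgClosed.splits G).eval_derivative_div_eval_of_ne_zero h0
  have h1 : G.derivative.eval z = G.eval z * (G.roots.map (fun α => 1 / (z - α))).sum := by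
    rw [← h]; field_simp
  rw [h1, norm_mul]
  gcongr
  generalize G.roots = S
  induction S using Multiset.induction with
  | empty => simp
  | cons a S ih =>
    simp only [Multiset.map_cons, Multiset.sum_cons]
    refine (norm_add_le _ _).trans ?_
    rw [norm_div, norm_one, one_div]
    gcongr

lemma j_rpow_sum (S : Multiset ℂ) (x : ℂ → ℝ) (hx : ∀ a, 0 ≤ x a) (θ : ℝ) (h0 : 0 < θ) (h1 : θ ≤ 1) :
    (S.map x).sum ^ θ ≤ (S.map (fun a => x a ^ θ)).sum := by
  induction S using Multiset.induction with
  | empty => simp [Real.zero_rpow h0.ne']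
  | cons a S ih =>
    simp only [Multiset.map_cons, Multiset.sum_cons]
    refine (Real.rpow_add_le_add_rpow (hx a) ?_ h0.le h1).trans ?_
    · apply Multiset.sum_nonneg; simp only [Multiset.mem_map]; rintro _ ⟨a, _, rfl⟩; exact hx a
    · gcongr

lemma j_young (x y θ : ℝ) (hx : 0 ≤ x) (hy : 0 ≤ y) (hθ : 0 < θ) :
    x ^ (-θ) * y ^ (-1 : ℝ) ≤ x ^ (-(1 + θ)) + y ^ (-(1 + θ)) := by
  rcases hx.eq_or_lt with rfl | hx
  · rw [Real.zero_rpow (by linarith)]; simp; positivity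
  rcases hy.eq_or_lt with rfl | hy
  · rw [Real.zero_rpow (by norm_num : (-1:ℝ) ≠ 0)]; simp; positivity
  rcases le_total x y with h | h
  · have : y ^ (-1 : ℝ) ≤ x ^ (-1 : ℝ) := Real.rpow_le_rpow_of_nonpos hx h (by norm_num)
    have e : x ^ (-(1 + θ)) = x ^ (-θ) * x ^ (-1 : ℝ) := by rw [← Real.rpow_add hx]; ring_nf
    have : 0 ≤ y ^ (-(1 + θ)) := by positivity
    have h3 : x ^ (-θ) * y ^ (-1 : ℝ) ≤ x ^ (-θ) * x ^ (-1 : ℝ) := by gcongr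
    linarith
  · have : x ^ (-θ : ℝ) ≤ y ^ (-θ : ℝ) := Real.rpow_le_rpow_of_nonpos hy h (by linarith)
    have e : y ^ (-(1 + θ)) = y ^ (-θ) * y ^ (-1 : ℝ) := by rw [← Real.rpow_add hy]; ring_nf
    have : 0 ≤ x ^ (-(1 + θ)) := by positivity
    have h3 : x ^ (-θ) * y ^ (-1 : ℝ) ≤ y ^ (-θ) * y ^ (-1 : ℝ) := by gcongr
    linarith


/-- existence of the root `b` with `b^(4j) = D`. -/
lemma jD_root (G : Polynomial ℂ) (j : ℕ) (hj : 1 ≤ j) {s : ℝ} (hs : 0 < s) (z : ℂ) :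
    ∃ b : ℝ, s ≤ b ∧ b ^ (4 * j) = jD G (s ^ (2 * j)) z ∧ ‖G.eval z‖ ≤ b ^ (2 * j) := by
  have hD := jD_pos G (show 0 < s ^ (2 * j) by positivity) z
  refine ⟨(jD G (s ^ (2 * j)) z) ^ ((1:ℝ) / (4 * j : ℕ)), ?_, ?_, ?_⟩
  all_goals
    have h4 : 4 * j ≠ 0 := by omega
    have e : ((jD G (s ^ (2 * j)) z) ^ ((1:ℝ) / (4 * j : ℕ))) ^ (4 * j) = jD G (s ^ (2 * j)) z := by
      rw [one_div, Real.rpow_inv_natCast_pow hD.le h4]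
    have hb0 : 0 < (jD G (s ^ (2 * j)) z) ^ ((1:ℝ) / (4 * j : ℕ)) := by positivity
    generalize (jD G (s ^ (2 * j)) z) ^ ((1:ℝ) / (4 * j : ℕ)) = b at *
  · refine le_of_pow_le_pow_left₀ h4 hb0.le ?_
    rw [e]; unfold jD
    have : (s ^ (2 * j)) ^ 2 = s ^ (4 * j) := by rw [← pow_mul]; ring_nf
    nlinarith [sq_nonneg ‖G.eval z‖]
  · exact e
  · refine le_of_pow_le_pow_left₀ two_ne_zero (by positivity) ?_
    rw [← pow_mul, show 2 * j * 2 = 4 * j by ring, e]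
    unfold jD
    nlinarith [sq_nonneg (s ^ (2 * j))]

lemma jH_bound (G H : Polynomial ℂ) (j : ℕ) (hj : 1 ≤ j) {s : ℝ} (hs : 0 < s) (z : ℂ) (b : ℝ)
    (hb : s ≤ b) (hbG : ‖G.eval z‖ ≤ b ^ (2 * j))
    (hQ : ‖(H.eval z) ^ j - (G.eval z) ^ (j + 1)‖ ≤ (s ^ (2 * j)) ^ (j + 1)) :
    ‖H.eval z‖ ≤ 2 * b ^ (2 * j + 2) := by
  have hb0 : 0 < b := hs.trans_le hb
  refine le_of_pow_le_pow_left₀ (by omega : j ≠ 0) (by positivity) ?_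
  have h1 : ‖H.eval z‖ ^ j ≤ ‖G.eval z‖ ^ (j + 1) + (s ^ (2 * j)) ^ (j + 1) := by
    rw [← norm_pow, ← norm_pow]
    have := norm_sub_norm_le ((H.eval z) ^ j) ((G.eval z) ^ (j + 1))
    linarith
  have h2 : ‖G.eval z‖ ^ (j + 1) ≤ (b ^ (2 * j)) ^ (j + 1) := by gcongr
  have h3 : (s ^ (2 * j)) ^ (j + 1) ≤ (b ^ (2 * j)) ^ (j + 1) := by gcongr
  have h4 : (2 * b ^ (2 * j + 2)) ^ j = 2 ^ j * (b ^ (2 * j)) ^ (j + 1) := by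
    rw [mul_pow, ← pow_mul, ← pow_mul]; ring_nf
  rw [h4]
  have h5 : (2:ℝ) ≤ 2 ^ j := by
    calc (2:ℝ) = 2 ^ 1 := by norm_num
      _ ≤ 2 ^ j := pow_le_pow_right₀ (by norm_num) hj
  have : 0 < (b ^ (2 * j)) ^ (j + 1) := by positivity
  nlinarith

lemma jb_bound (G H : Polynomial ℂ) (j : ℕ) (hj : 1 ≤ j) {s A : ℝ} (hs : 0 < s) (hA : 1 ≤ A) (z : ℂ)
    (hz : z ∉ G.roots) (hG' : ‖G.derivative.eval z‖ ≤ A)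
    (hQ : ‖(H.eval z) ^ j - (G.eval z) ^ (j + 1)‖ ≤ (s ^ (2 * j)) ^ (j + 1)) :
    ‖jb G H (s ^ (2 * j)) z‖ ≤
      2 * A * s * (G.roots.map (fun α => ‖z - α‖ ^ (-(1 - 1 / (2 * j : ℝ))))).sum := by
  obtain ⟨b, hb, hbD, hbG⟩ := jD_root G j hj hs z
  have hb0 : 0 < b := hs.trans_le hb
  have hH := jH_bound G H j hj hs z b hb hbG hQ
  have hj' : (1:ℝ) ≤ j := by exact_mod_cast hj
  set θ : ℝ := 1 - 1 / (2 * j : ℝ) with hθ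
  have hθ0 : 0 < θ := by
    rw [hθ]; have : 1 / (2 * j : ℝ) ≤ 1 / 2 := by
      apply one_div_le_one_div_of_le <;> linarith
    linarith
  have hθ1 : θ ≤ 1 := by rw [hθ]; have : 0 ≤ 1 / (2 * j : ℝ) := by positivity
                         linarith
  set Sg := (G.roots.map (fun α => ‖z - α‖⁻¹)).sum with hSg
  have hSg0 : 0 ≤ Sg := by
    apply Multiset.sum_nonneg; simp only [Multiset.mem_map]; rintro _ ⟨a, _, rfl⟩; positivity
  have hG1 : ‖G.derivative.eval z‖ ≤ A * (b ^ (2 * j - 1) * Sg ^ θ) := by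
    have h1 := j_polylog G z hz
    set x := ‖G.derivative.eval z‖ with hx
    have hx0 : 0 ≤ x := norm_nonneg _
    have e1 : x = x ^ (1 - θ) * x ^ θ := by
      rcases hx0.eq_or_lt with h | h
      · rw [← h, Real.zero_rpow hθ0.ne']; simp
      · rw [← Real.rpow_add h]; simp
    have e2 : x ^ (1 - θ) ≤ A := by
      calc x ^ (1 - θ) ≤ A ^ (1 - θ) := by gcongr
        _ ≤ A ^ (1:ℝ) := Real.rpow_le_rpow_of_exponent_le hA (by linarith)
        _ = A := Real.rpow_one A
    have e3 : x ^ θ ≤ b ^ (2 * j - 1) * Sg ^ θ := by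
      calc x ^ θ ≤ (b ^ (2 * j) * Sg) ^ θ := by gcongr; exact h1.trans (by gcongr)
        _ = (b ^ (2 * j)) ^ θ * Sg ^ θ := Real.mul_rpow (by positivity) hSg0
        _ = _ := by
          congr 1
          rw [← Real.rpow_natCast, ← Real.rpow_mul hb0.le, ← Real.rpow_natCast]
          congr 1
          rw [Nat.cast_sub (by omega), hθ]; push_cast; field_simp
    rw [e1]; gcongr
  have hsum : Sg ^ θ ≤ (G.roots.map (fun α => ‖z - α‖ ^ (-θ))).sum := by
    refine (j_rpow_sum _ _ (fun a => by positivity) θ hθ0 hθ1).trans (le_of_eq ?_)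
    congr 2; ext α
    rw [Real.rpow_neg (norm_nonneg _), Real.inv_rpow (norm_nonneg _)]
  refine le_trans ?_ (mul_le_mul_of_nonneg_left hsum (by positivity))
  have hn : ‖jb G H (s ^ (2 * j)) z‖ = ‖H.eval z‖ * ‖G.derivative.eval z‖ * (s ^ (4 * j)) / b ^ (8 * j) := by
    unfold jb
    rw [← hbD]
    simp only [norm_mul, norm_pow, norm_inv, Complex.norm_real, RCLike.norm_conj, norm_pow]
    rw [Real.norm_of_nonneg hs.le, Real.norm_of_nonneg hb0.le, ← pow_mul, inv_pow, ← pow_mul, div_eq_mul_inv]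
    congr 3 <;> ring_nf
  rw [hn, div_le_iff₀ (by positivity)]
  calc ‖H.eval z‖ * ‖G.derivative.eval z‖ * s ^ (4 * j)
      ≤ (2 * b ^ (2 * j + 2)) * (A * (b ^ (2 * j - 1) * Sg ^ θ)) * (s * b ^ (4 * j - 1)) := by
        gcongr
        calc s ^ (4 * j) = s * s ^ (4 * j - 1) := by rw [← pow_succ']; congr 1; omega
          _ ≤ _ := by gcongr
    _ = 2 * A * s * Sg ^ θ * (b ^ (2 * j + 2) * b ^ (2 * j - 1) * b ^ (4 * j - 1)) := by ring
    _ = 2 * A * s * Sg ^ θ * b ^ (8 * j) := by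
        rw [← pow_add, ← pow_add]; congr 2; omega

lemma j_multiint (p : ℝ) (K : ℝ) (hK : ∀ α : ℂ,
    IntegrableOn (fun z : ℂ => ‖z - α‖ ^ (-p)) (Metric.closedBall 0 1) ∧
    ∫ z in Metric.closedBall (0:ℂ) 1, ‖z - α‖ ^ (-p) ≤ K) (w : ℂ) (S : Multiset ℂ) :
    IntegrableOn (fun z : ℂ => (S.map fun α => ‖z - α‖ ^ (-p) + ‖z - w‖ ^ (-p)).sum)
      (Metric.closedBall 0 1) ∧
    ∫ z in Metric.closedBall (0:ℂ) 1, (S.map fun α => ‖z - α‖ ^ (-p) + ‖z - w‖ ^ (-p)).sum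
      ≤ S.card * (2 * K) := by
  induction S using Multiset.induction with
  | empty => simp
  | cons a S ih =>
    simp only [Multiset.map_cons, Multiset.sum_cons, Multiset.card_cons]
    have h1 : IntegrableOn (fun z : ℂ => ‖z - a‖ ^ (-p) + ‖z - w‖ ^ (-p)) (Metric.closedBall 0 1) :=
      (hK a).1.add (hK w).1
    refine ⟨h1.add ih.1, ?_⟩
    rw [integral_add h1 ih.1, integral_add (hK a).1 (hK w).1]
    push_cast
    linarith [(hK a).2, (hK w).2, ih.2]


lemma j_holo_of_dbar {F : ℂ → ℂ} {z : ℂ} (h : DifferentiableAt ℝ F z) (h0 : jdbar F z = 0) :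
    DifferentiableAt ℂ F z := by
  rw [differentiableAt_complex_iff_differentiableAt_real]
  refine ⟨h, ?_⟩
  unfold jdbar at h0
  rw [smul_eq_mul]
  have := (div_eq_zero_iff.1 h0).resolve_right two_ne_zero
  linear_combination (-Complex.I) * this + (fderiv ℝ F z Complex.I) * Complex.I_mul_I

lemma j_approx (j : ℕ) (hj : 1 ≤ j) : ∃ K : ℝ, 1 ≤ K ∧ ∀ (G H : Polynomial ℂ) (n : ℕ) (A s r : ℝ),
    G.roots.card ≤ n → 1 ≤ A → 0 < s → 0 < r → 2 * r ≤ 1 →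
    (∀ z : ℂ, ‖z‖ ≤ 2 * r → ‖G.derivative.eval z‖ ≤ A ∧
      ‖(H.eval z) ^ j - (G.eval z) ^ (j + 1)‖ ≤ (s ^ (2 * j)) ^ (j + 1)) →
    ∃ F : ℂ → ℂ, DifferentiableOn ℂ F (Metric.ball 0 r) ∧
      ∀ z : ℂ, ‖F z - jF G H (s ^ (2 * j)) z‖ ≤ K * A * n * s := by
  have hj' : (1:ℝ) ≤ j := by exact_mod_cast hj
  set θ : ℝ := 1 - 1 / (2 * j : ℝ) with hθ
  have hθ0 : 0 < θ := by
    rw [hθ]; have : 1 / (2 * j : ℝ) ≤ 1 / 2 := by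
      apply one_div_le_one_div_of_le <;> linarith
    linarith
  have hθ1 : θ < 1 := by rw [hθ]; have : 0 < 1 / (2 * j : ℝ) := by positivity
                         linarith
  obtain ⟨K, hK0, hK⟩ := j_kernel (1 + θ) (by linarith) (by linarith)
  refine ⟨4 * K + 1, by linarith, ?_⟩
  intro G H n A s r hn hA hs hr hr1 hyp
  set τ := s ^ (2 * j) with hτdef
  have hτ : 0 < τ := by positivity
  let χ : ContDiffBump (0:ℂ) := ⟨r, 2 * r, hr, by linarith⟩
  set V : ℂ → ℂ := fun z => (χ z) • jb G H τ z with hV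
  have hVc : ContDiff ℝ 1 V := χ.contDiff.smul (jF_contDiff_b G H hτ)
  have hVs : HasCompactSupport V := χ.hasCompactSupport.smul_right
  have hV0 : ∀ z : ℂ, 2 * r ≤ ‖z‖ → V z = 0 := by
    intro z hz
    have : χ z = 0 := χ.zero_of_le_dist (by simpa [dist_zero_right] using hz)
    simp [hV, this]
  have hVle : ∀ z, ‖V z‖ ≤ ‖jb G H τ z‖ := by
    intro z
    simp only [hV, norm_smul]
    rw [Real.norm_of_nonneg χ.nonneg]
    have := χ.le_one (x := z)
    nlinarith [norm_nonneg (jb G H τ z)]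
  obtain ⟨u, hud, hub, hun⟩ := j_dbar_solve V hVc hVs
  have hFd : ∀ z, DifferentiableAt ℝ (jF G H τ) z := fun z =>
    (jF_deriv G H hτ z).choose_spec.differentiableAt
  have hFb : ∀ z, jdbar (jF G H τ) z = jb G H τ z := fun z =>
    jwl_dbar (jF_deriv G H hτ z).choose_spec
  refine ⟨fun z => jF G H τ z - u z, ?_, ?_⟩
  · intro z hz
    apply DifferentiableAt.differentiableWithinAt
    apply j_holo_of_dbar ((hFd z).sub (hud z))
    have h1 : jdbar (fun z => jF G H τ z - u z) z = jdbar (jF G H τ) z - jdbar u z := by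
      unfold jdbar
      rw [fderiv_fun_sub (hFd z) (hud z)]
      simp only [sub_apply]
      ring
    refine h1.trans ?_
    rw [hFb, hub]
    have : χ z = 1 := χ.one_of_mem_closedBall (Metric.ball_subset_closedBall hz)
    simp [hV, this]
  · intro w
    have e : jF G H τ w - u w - jF G H τ w = - u w := by ring
    rw [e, norm_neg]
    refine (hun w).trans ?_
    have e1 : ∫ z, ‖V z‖ * ‖z - w‖ ^ (-1 : ℝ) =
        ∫ z in Metric.closedBall (0:ℂ) 1, ‖V z‖ * ‖z - w‖ ^ (-1 : ℝ) := by
      rw [setIntegral_eq_integral_of_forall_compl_eq_zero]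
      intro z hz
      have : 1 < ‖z‖ := by simpa using hz
      rw [hV0 z (by linarith)]; simp
    rw [e1]
    obtain ⟨hi, hile⟩ := j_multiint (1 + θ) K hK w G.roots
    have hpt : ∀ z ∉ G.roots, ‖V z‖ * ‖z - w‖ ^ (-1 : ℝ) ≤
        2 * A * s * (G.roots.map fun α => ‖z - α‖ ^ (-(1 + θ)) + ‖z - w‖ ^ (-(1 + θ))).sum := by
      intro z hz
      have hns : 0 ≤ (G.roots.map fun α => ‖z - α‖ ^ (-(1 + θ)) + ‖z - w‖ ^ (-(1 + θ))).sum := by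
        apply Multiset.sum_nonneg; simp only [Multiset.mem_map]; rintro _ ⟨a, _, rfl⟩; positivity
      rcases le_or_gt (2 * r) ‖z‖ with h | h
      · rw [hV0 z h, norm_zero, zero_mul]; positivity
      · have hb := jb_bound G H j hj hs hA z hz (hyp z h.le).1 (hyp z h.le).2
        calc ‖V z‖ * ‖z - w‖ ^ (-1 : ℝ)
            ≤ (2 * A * s * (G.roots.map (fun α => ‖z - α‖ ^ (-θ))).sum) * ‖z - w‖ ^ (-1 : ℝ) := by
              gcongr
              exact (hVle z).trans hb
          _ = 2 * A * s * (G.roots.map (fun α => ‖z - α‖ ^ (-θ) * ‖z - w‖ ^ (-1 : ℝ))).sum := by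
              rw [Multiset.sum_map_mul_right]; ring
          _ ≤ _ := by
              gcongr
              apply Multiset.sum_map_le_sum_map
              intro α _
              exact j_young _ _ θ (norm_nonneg _) (norm_nonneg _) hθ0
    have hfin : ∀ᵐ z : ℂ ∂(volume.restrict (Metric.closedBall 0 1)), z ∉ G.roots := by
      have : (volume : Measure ℂ) {z | z ∈ G.roots} = 0 := by
        apply Set.Finite.measure_zero
        have : {z | z ∈ G.roots} = (G.roots.toFinset : Set ℂ) := by ext; simp
        rw [this]; exact Finset.finite_toSet _
      exact ae_restrict_of_ae (by rw [ae_iff]; simpa using this)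
    have hi' : IntegrableOn (fun z : ℂ => 2 * A * s *
        (G.roots.map fun α => ‖z - α‖ ^ (-(1 + θ)) + ‖z - w‖ ^ (-(1 + θ))).sum)
        (Metric.closedBall 0 1) := hi.const_mul _
    calc ∫ z in Metric.closedBall (0:ℂ) 1, ‖V z‖ * ‖z - w‖ ^ (-1 : ℝ)
        ≤ ∫ z in Metric.closedBall (0:ℂ) 1, 2 * A * s *
        (G.roots.map fun α => ‖z - α‖ ^ (-(1 + θ)) + ‖z - w‖ ^ (-(1 + θ))).sum := by
          apply integral_mono_of_nonneg
          · exact Eventually.of_forall fun z => by positivity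
          · exact hi'
          · filter_upwards [hfin] with z hz using hpt z hz
      _ ≤ 2 * A * s * (G.roots.card * (2 * K)) := by
          rw [integral_const_mul]; gcongr
      _ ≤ 2 * A * s * (n * (2 * K)) := by gcongr
      _ ≤ _ := by
          have : 0 ≤ A * n * s := by positivity
          nlinarith


def jfd (k : ℕ) (a : ℕ → ℂ) : ℂ :=
  ∑ i ∈ Finset.range (k + 1), ((-1 : ℂ) ^ (k - i) * (k.choose i : ℂ)) * a i

lemma jfd_add (k : ℕ) (a b : ℕ → ℂ) : jfd k (fun i => a i + b i) = jfd k a + jfd k b := by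
  simp only [jfd, mul_add, Finset.sum_add_distrib]

lemma jfd_sub (k : ℕ) (a b : ℕ → ℂ) : jfd k (fun i => a i - b i) = jfd k a - jfd k b := by
  simp only [jfd, mul_sub, Finset.sum_sub_distrib]

lemma jfd_mul (k : ℕ) (c : ℂ) (a : ℕ → ℂ) : jfd k (fun i => c * a i) = c * jfd k a := by
  simp only [jfd, Finset.mul_sum]
  exact Finset.sum_congr rfl fun i _ => by ring

lemma jfd_sum {ι : Type*} (k : ℕ) (s : Finset ι) (a : ι → ℕ → ℂ) :
    jfd k (fun i => ∑ m ∈ s, a m i) = ∑ m ∈ s, jfd k (a m) := by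
  simp only [jfd, Finset.mul_sum]
  rw [Finset.sum_comm]

lemma jfd_congr (k : ℕ) {a b : ℕ → ℂ} (h : ∀ i ≤ k, a i = b i) : jfd k a = jfd k b := by
  unfold jfd
  refine Finset.sum_congr rfl fun i hi => ?_
  rw [h i (by simp at hi; omega)]

lemma jfd_le (k : ℕ) (a : ℕ → ℂ) (S : ℝ) (h : ∀ i ≤ k, ‖a i‖ ≤ S) : ‖jfd k a‖ ≤ 2 ^ k * S := by
  unfold jfd
  have e : (2:ℝ) ^ k * S = ∑ i ∈ Finset.range (k + 1), (k.choose i : ℝ) * S := by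
    rw [← Finset.sum_mul]
    congr 1
    exact_mod_cast (Nat.sum_range_choose k).symm
  rw [e]
  refine (norm_sum_le _ _).trans (Finset.sum_le_sum fun i hi => ?_)
  rw [norm_mul, norm_mul, norm_pow, norm_neg, norm_one, one_pow, one_mul, Complex.norm_natCast]
  gcongr
  exact h i (by simp at hi; omega)

lemma jfd_pow_lt (k m : ℕ) (h : m < k) : jfd k (fun i => (i : ℂ) ^ m) = 0 := by
  have h1 := congrFun (fwdDiff_iter_pow_eq_zero_of_lt (R := ℂ) h) 0
  rw [fwdDiff_iter_eq_sum_shift] at h1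
  rw [jfd, Pi.zero_apply] at *
  rw [← h1]
  refine Finset.sum_congr rfl fun i _ => ?_
  simp

lemma jfd_pow_eq (k : ℕ) : jfd k (fun i => (i : ℂ) ^ k) = k.factorial := by
  have h1 := congrFun (fwdDiff_iter_eq_factorial (R := ℂ) (n := k)) 0
  rw [fwdDiff_iter_eq_sum_shift] at h1
  rw [jfd]
  rw [Pi.natCast_apply] at h1
  rw [← h1]
  refine Finset.sum_congr rfl fun i _ => ?_
  simp

lemma jfd_holo (D : ℂ → ℂ) (ρ S : ℝ) (hρ : 0 < ρ) (hD : DifferentiableOn ℂ D (Metric.ball 0 ρ))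
    (hS : ∀ z ∈ Metric.ball (0:ℂ) ρ, ‖D z‖ ≤ S) (k : ℕ) (h : ℝ) (hh : 0 < h) (hk : k * h ≤ ρ / 2) :
    ‖jfd k (fun i => D ((i * h : ℝ) : ℂ))‖ ≤ 3 * S * (3 * (k * h) / ρ) ^ k := by
  have hS0 : 0 ≤ S := (norm_nonneg _).trans (hS 0 (by simpa using hρ))
  set R := 3 * ρ / 4 with hR
  have hR0 : 0 < R := by positivity
  set c : ℕ → ℂ := fun m => ((m.factorial : ℂ))⁻¹ * iteratedDeriv m D 0 with hc
  have hcle : ∀ m, ‖c m‖ ≤ S / R ^ m := by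
    intro m
    have hsub : Metric.closedBall (0:ℂ) R ⊆ Metric.ball 0 ρ :=
      Metric.closedBall_subset_ball (by rw [hR]; linarith)
    have h1 := Complex.norm_iteratedDeriv_le_of_forall_mem_sphere_norm_le (f := D) (c := 0) (C := S) m hR0
      ((hD.mono hsub).diffContOnCl_ball (subset_refl _)) (fun z hz => hS z (hsub (Metric.sphere_subset_closedBall hz)))
    rw [hc]; simp only
    rw [norm_mul, norm_inv, Complex.norm_natCast]
    have : (0:ℝ) < m.factorial := by exact_mod_cast m.factorial_pos
    rw [inv_mul_le_iff₀ this]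
    calc _ ≤ _ := h1
      _ = _ := by ring
  have hrem : ∀ z : ℂ, ‖z‖ ≤ k * h → ‖D z - ∑ m ∈ Finset.range k, c m * z ^ m‖ ≤
      3 * S * (k * h / R) ^ k := by
    intro z hz
    have hzb : z ∈ Metric.ball (0:ℂ) ρ := by simp; linarith
    have h1 := Complex.hasSum_taylorSeries_on_ball hD hzb
    have h2 : HasSum (fun m => c m * z ^ m) (D z) := by
      refine h1.congr_fun ?_
      intro m; simp [hc]; ring
    rw [← hasSum_nat_add_iff' k] at h2
    set q := k * h / R with hq
    have hq0 : 0 ≤ q := by positivity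
    have hq1 : q ≤ 2 / 3 := by
      rw [hq, div_le_iff₀ hR0, hR]; linarith
    have h3 : HasSum (fun m => S * q ^ k * q ^ m) (S * q ^ k * (1 - q)⁻¹) :=
      (hasSum_geometric_of_lt_one hq0 (by linarith)).mul_left _
    have h4 := h2.norm_le_of_bounded h3 (fun m => by
      rw [norm_mul, norm_pow]
      calc ‖c (m + k)‖ * ‖z‖ ^ (m + k) ≤ S / R ^ (m + k) * (k * h) ^ (m + k) := by
            gcongr; exact hcle _
        _ = S * q ^ k * q ^ m := by
            rw [mul_assoc, ← pow_add, add_comm k m, hq, div_pow (k * h) R, div_mul_eq_mul_div, mul_div_assoc])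
    refine h4.trans ?_
    have : (1 - q)⁻¹ ≤ 3 := by
      rw [inv_le_comm₀ (by linarith) (by norm_num)]; linarith
    have h5 : 0 ≤ S * q ^ k := by positivity
    nlinarith
  have e : jfd k (fun i => D ((i * h : ℝ) : ℂ)) =
      jfd k (fun i => D ((i * h : ℝ) : ℂ) - ∑ m ∈ Finset.range k, c m * ((i * h : ℝ) : ℂ) ^ m) := by
    rw [jfd_sub, jfd_sum]
    rw [Finset.sum_eq_zero, sub_zero]
    intro m hm
    have : (fun i : ℕ => c m * ((i * h : ℝ) : ℂ) ^ m) = fun i : ℕ => (c m * (h:ℂ) ^ m) * (i:ℂ) ^ m := by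
      ext i; push_cast; ring
    rw [this, jfd_mul, jfd_pow_lt k m (by simpa using hm), mul_zero]
  rw [e]
  refine (jfd_le k _ (3 * S * (k * h / R) ^ k) ?_).trans ?_
  · intro i hi
    apply hrem
    rw [Complex.norm_real, Real.norm_of_nonneg (by positivity)]
    gcongr
  · calc 2 ^ k * (3 * S * (k * h / R) ^ k) = 3 * S * (2 * (k * h / R)) ^ k := by
          rw [mul_pow 2]; ring
      _ ≤ _ := by
        gcongr
        rw [hR, mul_div_assoc', div_le_div_iff₀ (by positivity) hρ]
        have : 0 ≤ k * h * ρ := by positivity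
        nlinarith

lemma jF_norm_eq (G H : Polynomial ℂ) {τ : ℝ} (hτ : 0 < τ) (z : ℂ) :
    ‖jF G H τ z‖ = ‖H.eval z‖ * ‖G.eval z‖ / jD G τ z := by
  unfold jF
  rw [norm_mul, norm_mul, RCLike.norm_conj, norm_inv, Complex.norm_real,
    Real.norm_of_nonneg (jD_pos G hτ z).le, div_eq_mul_inv]

lemma jF_bound (G H : Polynomial ℂ) (j : ℕ) (hj : 1 ≤ j) {s : ℝ} (hs : 0 < s) (z : ℂ)
    (hQ : ‖(H.eval z) ^ j - (G.eval z) ^ (j + 1)‖ ≤ (s ^ (2 * j)) ^ (j + 1)) :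
    ‖jF G H (s ^ (2 * j)) z‖ ≤ 2 * (1 + ‖G.eval z‖ + s ^ (2 * j)) := by
  obtain ⟨b, hb, hbD, hbG⟩ := jD_root G j hj hs z
  have hb0 : 0 < b := hs.trans_le hb
  have hH := jH_bound G H j hj hs z b hb hbG hQ
  rw [jF_norm_eq G H (by positivity), ← hbD, div_le_iff₀ (by positivity)]
  have hb2 : b ^ 2 ≤ 1 + ‖G.eval z‖ + s ^ (2 * j) := by
    have h1 : b ^ (2 * j) ≤ ‖G.eval z‖ + s ^ (2 * j) := by
      refine le_of_pow_le_pow_left₀ two_ne_zero (by positivity) ?_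
      rw [← pow_mul, show 2 * j * 2 = 4 * j by ring, hbD]
      unfold jD
      have : 0 ≤ ‖G.eval z‖ * s ^ (2 * j) := by positivity
      nlinarith
    rcases le_total b 1 with h | h
    · have : b ^ 2 ≤ 1 := pow_le_one₀ hb0.le h
      have : 0 ≤ ‖G.eval z‖ + s ^ (2 * j) := by positivity
      linarith
    · have : b ^ 2 ≤ b ^ (2 * j) := pow_le_pow_right₀ h (by omega)
      linarith
  calc ‖H.eval z‖ * ‖G.eval z‖ ≤ (2 * b ^ (2 * j + 2)) * b ^ (2 * j) := by gcongr
    _ = 2 * b ^ 2 * b ^ (4 * j) := by rw [show 4 * j = 2 * j + 2 * j by ring]; ring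
    _ ≤ _ := by gcongr

lemma jpow_aux (j : ℕ) (hj : 1 ≤ j) {s b : ℝ} (hs : 0 < s) (hb : s ≤ b) :
    b ^ 2 * s ^ (4 * j) ≤ s ^ 2 * b ^ (4 * j) := by
  have hb0 : 0 < b := hs.trans_le hb
  have e : ∀ x : ℝ, x ^ (4 * j) = x ^ 2 * x ^ (4 * j - 2) := by
    intro x; rw [← pow_add]; congr 1; omega
  rw [e, e]
  have : s ^ (4 * j - 2) ≤ b ^ (4 * j - 2) := by gcongr
  calc b ^ 2 * (s ^ 2 * s ^ (4 * j - 2)) ≤ b ^ 2 * (s ^ 2 * b ^ (4 * j - 2)) := by gcongr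
    _ = _ := by ring

lemma jF_diff (G H : Polynomial ℂ) (j : ℕ) (hj : 1 ≤ j) {s s' : ℝ} (hs : 0 < s') (hss : s' ≤ s) (z : ℂ)
    (hQ : ‖(H.eval z) ^ j - (G.eval z) ^ (j + 1)‖ ≤ (s' ^ (2 * j)) ^ (j + 1)) :
    ‖jF G H (s ^ (2 * j)) z - jF G H (s' ^ (2 * j)) z‖ ≤ 2 * s ^ 2 := by
  have hs0 : 0 < s := hs.trans_le hss
  obtain ⟨b, hb, hbD, hbG⟩ := jD_root G j hj hs0 z
  obtain ⟨b', hb', hbD', hbG'⟩ := jD_root G j hj hs z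
  have hb0 : 0 < b := hs0.trans_le hb
  have hb0' : 0 < b' := hs.trans_le hb'
  have hH := jH_bound G H j hj hs z b' hb' hbG' hQ
  have hD : jD G (s ^ (2 * j)) z = ‖G.eval z‖ ^ 2 + s ^ (4 * j) := by
    unfold jD; rw [← pow_mul]; ring_nf
  have hD' : jD G (s' ^ (2 * j)) z = ‖G.eval z‖ ^ 2 + s' ^ (4 * j) := by
    unfold jD; rw [← pow_mul]; ring_nf
  have hsle : s' ^ (4 * j) ≤ s ^ (4 * j) := by gcongr
  have hbb : b' ≤ b := by
    refine le_of_pow_le_pow_left₀ (by omega : 4 * j ≠ 0) hb0.le ?_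
    rw [hbD, hbD', hD, hD']; linarith
  have hp : 0 < jD G (s ^ (2 * j)) z := jD_pos G (by positivity) z
  have hp' : 0 < jD G (s' ^ (2 * j)) z := jD_pos G (by positivity) z
  have e : jF G H (s ^ (2 * j)) z - jF G H (s' ^ (2 * j)) z =
      H.eval z * starRingEnd ℂ (G.eval z) *
        ((((jD G (s ^ (2 * j)) z)⁻¹ - (jD G (s' ^ (2 * j)) z)⁻¹ : ℝ)) : ℂ) := by
    unfold jF; push_cast; ring
  have e2 : ‖(((jD G (s ^ (2 * j)) z)⁻¹ - (jD G (s' ^ (2 * j)) z)⁻¹ : ℝ) : ℂ)‖ ≤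
      s ^ (4 * j) / (jD G (s ^ (2 * j)) z * jD G (s' ^ (2 * j)) z) := by
    rw [Complex.norm_real, inv_sub_inv hp.ne' hp'.ne', norm_div,
      Real.norm_of_nonneg (mul_pos hp hp').le]
    gcongr
    rw [hD, hD', Real.norm_eq_abs, abs_le]
    have : 0 < s' ^ (4 * j) := by positivity
    constructor <;> linarith
  rw [e, norm_mul, norm_mul, RCLike.norm_conj]
  calc _ ≤ (2 * b' ^ (2 * j + 2)) * b' ^ (2 * j) *
        (s ^ (4 * j) / (jD G (s ^ (2 * j)) z * jD G (s' ^ (2 * j)) z)) := by gcongr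
    _ = 2 * (b' ^ 2 * s ^ (4 * j) / b ^ (4 * j)) := by
        rw [← hbD, ← hbD', show 4 * j = 2 * j + 2 * j by ring]; field_simp; ring
    _ ≤ 2 * s ^ 2 := by
        gcongr
        rw [div_le_iff₀ (by positivity)]
        refine le_trans ?_ (jpow_aux j hj hs0 hb)
        gcongr

lemma jF_real (G H : Polynomial ℂ) (j : ℕ) (hj : 1 ≤ j) {s δ A : ℝ} (hs : 0 < s) (hA : 0 ≤ A) (z y : ℂ)
    (hδ : δ ≤ s ^ (2 * j)) (h1 : ‖y ^ j - G.eval z‖ ≤ δ) (h2 : ‖y ^ (j + 1) - H.eval z‖ ≤ δ)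
    (h3 : ‖y‖ ≤ A) :
    ‖y - jF G H (s ^ (2 * j)) z‖ ≤ δ * (1 + A) / s ^ (2 * j) + 2 * s ^ 2 := by
  obtain ⟨b, hb, hbD, hbG⟩ := jD_root G j hj hs z
  have hb0 : 0 < b := hs.trans_le hb
  have hδ0 : 0 ≤ δ := (norm_nonneg _).trans h1
  set τ := s ^ (2 * j) with hτ
  have hτ0 : 0 < τ := by positivity
  have hp : 0 < jD G τ z := jD_pos G (by positivity) z
  have hpc : (jD G τ z : ℂ) ≠ 0 := by exact_mod_cast hp.ne'
  have e : y - jF G H τ z = ((y * G.eval z - H.eval z) * starRingEnd ℂ (G.eval z) + y * (τ:ℂ) ^ 2) /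
      (jD G τ z : ℂ) := by
    unfold jF
    rw [eq_div_iff hpc, sub_mul, mul_assoc _ _ (jD G τ z : ℂ), inv_mul_cancel₀ hpc, jD_eq]; ring
  have hy : ‖y‖ ≤ 2 * b ^ 2 := by
    refine le_of_pow_le_pow_left₀ (by omega : j ≠ 0) (by positivity) ?_
    have a1 : ‖y‖ ^ j ≤ 2 * b ^ (2 * j) := by
      rw [← norm_pow]
      have := norm_sub_norm_le (y ^ j) (G.eval z)
      have : τ ≤ b ^ (2 * j) := by rw [hτ]; gcongr
      linarith
    have h5 : (2:ℝ) ≤ 2 ^ j := by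
      calc (2:ℝ) = 2 ^ 1 := by norm_num
        _ ≤ 2 ^ j := pow_le_pow_right₀ (by norm_num) hj
    rw [mul_pow, ← pow_mul]
    refine a1.trans ?_
    gcongr
  have hHG : ‖y * G.eval z - H.eval z‖ ≤ δ * (1 + A) := by
    have : y * G.eval z - H.eval z = (y ^ (j + 1) - H.eval z) - y * (y ^ j - G.eval z) := by ring
    rw [this]
    refine (norm_sub_le _ _).trans ?_
    rw [norm_mul]
    nlinarith [mul_le_mul h3 h1 (norm_nonneg _) hA]
  rw [e, norm_div, Complex.norm_real, Real.norm_of_nonneg hp.le]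
  have hnum : ‖(y * G.eval z - H.eval z) * starRingEnd ℂ (G.eval z) + y * (τ:ℂ) ^ 2‖ ≤
      δ * (1 + A) * ‖G.eval z‖ + 2 * b ^ 2 * s ^ (4 * j) := by
    refine (norm_add_le _ _).trans ?_
    rw [norm_mul, norm_mul, RCLike.norm_conj, norm_pow, Complex.norm_real, Real.norm_of_nonneg hτ0.le]
    have : τ ^ 2 = s ^ (4 * j) := by rw [hτ, ← pow_mul]; ring_nf
    rw [this]
    gcongr
  refine (div_le_div_of_nonneg_right hnum hp.le).trans ?_
  rw [add_div]
  apply add_le_add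
  · rw [div_le_div_iff₀ hp hτ0, mul_assoc]
    gcongr
    unfold jD
    nlinarith [sq_nonneg (‖G.eval z‖ - τ), sq_nonneg (‖G.eval z‖), sq_nonneg τ]
  · rw [← hbD, div_le_iff₀ (by positivity)]
    have := jpow_aux j hj hs hb
    linarith


lemma jN_tel (k : ℕ) (hk : 1 ≤ k) (Y : ℝ) (hY : 0 ≤ Y) (f : ℝ → ℂ) (F : ℕ → ℂ → ℂ)
    (hd : ∀ i, DifferentiableOn ℂ (F i) (Metric.ball 0 ((1/2:ℝ) ^ (i + 2))))
    (h0 : ∀ z ∈ Metric.ball (0:ℂ) ((1/2:ℝ) ^ 2), ‖F 0 z‖ ≤ Y)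
    (h1 : ∀ i, ∀ z ∈ Metric.ball (0:ℂ) ((1/2:ℝ) ^ (i + 3)),
      ‖F (i + 1) z - F i z‖ ≤ Y * ((1/2:ℝ) ^ (i + 1)) ^ (k + 1))
    (h2 : ∀ i, ∀ t : ℝ, 0 ≤ t → t ≤ (1/2:ℝ) ^ (i + 2) →
      ‖f t - F i t‖ ≤ Y * ((1/2:ℝ) ^ (i + 1)) ^ (k + 1))
    (h3 : ∀ t : ℝ, 0 ≤ t → t ≤ 1 → ‖f t‖ ≤ Y) (h : ℝ) (hh : 0 < h) (hkh : k * h ≤ 1) :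
    ‖jfd k (fun i => f (i * h))‖ ≤ 7 * Y * (16 * (k * h)) ^ k := by
  have hk0 : (0:ℝ) < k := by exact_mod_cast hk
  set T := k * h with hT
  have hT0 : 0 < T := by positivity
  have hiT : ∀ i : ℕ, i ≤ k → (i:ℝ) * h ≤ T := by
    intro i hi; rw [hT]; gcongr
  by_cases hT8 : 1 / 8 < T
  · have := jfd_le k (fun i => f (i * h)) Y
      (fun i hi => h3 _ (by positivity) ((hiT i hi).trans hkh))
    refine this.trans ?_
    have h4 : (2:ℝ) ^ k ≤ (16 * T) ^ k := by gcongr; linarith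
    have : 0 ≤ (16 * T) ^ k := by positivity
    nlinarith
  push Not at hT8
  obtain ⟨n, hn1, hn2⟩ := exists_nat_pow_near_of_lt_one hT0 hkh (by norm_num : (0:ℝ) < 1/2)
    (by norm_num)
  have hn3 : 3 ≤ n := by
    by_contra hcon
    have : n + 1 ≤ 3 := by omega
    have h5 : (1/2:ℝ) ^ 3 ≤ (1/2) ^ (n + 1) := pow_le_pow_of_le_one (by norm_num) (by norm_num) this
    norm_num at h5 hn1 hT8
    linarith
  obtain ⟨I, rfl⟩ : ∃ I, n = I + 3 := ⟨n - 3, by omega⟩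
  have key : ∀ I : ℕ, T ≤ (1/2:ℝ) ^ (I + 3) →
      ‖jfd k (fun i => F I ((i * h : ℝ) : ℂ))‖ ≤ 3 * Y * (12 * T) ^ k * (2 - (1/2) ^ I) := by
    intro I
    induction I with
    | zero =>
      intro hI
      have := jfd_holo (F 0) ((1/2:ℝ) ^ 2) Y (by norm_num) (hd 0) h0 k h hh
        (by rw [← hT]; refine hI.trans ?_; norm_num)
      refine this.trans (le_of_eq ?_)
      rw [← hT, show 3 * T / (1/2:ℝ) ^ 2 = 12 * T by ring]
      ring
    | succ I ih =>
      intro hI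
      have hI' : T ≤ (1/2:ℝ) ^ (I + 3) := hI.trans
        (pow_le_pow_of_le_one (by norm_num) (by norm_num) (by omega))
      have e : jfd k (fun i => F (I + 1) ((i * h : ℝ) : ℂ)) = jfd k (fun i => F I ((i * h : ℝ) : ℂ)) +
          jfd k (fun i => (F (I + 1) ((i * h : ℝ) : ℂ) - F I ((i * h : ℝ) : ℂ))) := by
        rw [jfd_sub]; ring
      have hd' : DifferentiableOn ℂ (fun z => F (I + 1) z - F I z) (Metric.ball 0 ((1/2:ℝ) ^ (I + 3))) :=
        (hd (I + 1)).sub ((hd I).mono (Metric.ball_subset_ball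
          (pow_le_pow_of_le_one (by norm_num) (by norm_num) (by omega))))
      have := jfd_holo (fun z => F (I + 1) z - F I z) ((1/2:ℝ) ^ (I + 3)) _ (by positivity) hd' (h1 I) k h hh
        (by rw [← hT]; refine hI.trans (le_of_eq ?_); rw [show I + 1 + 3 = (I + 3) + 1 by ring, pow_succ]; ring)
      rw [e]
      refine (norm_add_le _ _).trans ((add_le_add (ih hI') this).trans (le_of_eq ?_))
      rw [← hT]
      have e2 : 3 * (Y * ((1/2:ℝ) ^ (I + 1)) ^ (k + 1)) * (3 * T / (1/2) ^ (I + 3)) ^ k =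
          3 * Y * (1/2:ℝ) ^ (I + 1) * (((1/2:ℝ) ^ (I + 1)) * (3 * T / (1/2) ^ (I + 3))) ^ k := by
        rw [mul_pow ((1/2:ℝ) ^ (I + 1)), pow_succ ((1/2:ℝ) ^ (I + 1)) k]; ring
      have e3 : ((1/2:ℝ) ^ (I + 1)) * (3 * T / (1/2) ^ (I + 3)) = 12 * T := by
        rw [show I + 3 = (I + 1) + 2 by ring, pow_add _ (I + 1) 2]
        field_simp; ring
      rw [e2, e3, pow_succ]; ring
  have e : jfd k (fun i => f (i * h)) = jfd k (fun i => F I ((i * h : ℝ) : ℂ)) +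
      jfd k (fun i => (f (i * h) - F I ((i * h : ℝ) : ℂ))) := by
    rw [jfd_sub]; ring
  have hl := jfd_le k (fun i => (f (i * h) - F I ((i * h : ℝ) : ℂ))) _
    (fun i hi => h2 I (i * h) (by positivity) ((hiT i hi).trans (hn2.trans
      (pow_le_pow_of_le_one (by norm_num) (by norm_num) (by omega)))))
  have hl2 : 2 ^ k * (Y * ((1/2:ℝ) ^ (I + 1)) ^ (k + 1)) ≤ Y * (16 * T) ^ k := by
    have a1 : (1/2:ℝ) ^ (I + 1) ≤ 1 := pow_le_one₀ (by norm_num) (by norm_num)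
    have a2 : (1/2:ℝ) ^ (I + 1) ≤ 8 * T := by
      have : (1/2:ℝ) ^ (I + 1) = 8 * (1/2:ℝ) ^ (I + 3 + 1) := by
        rw [show I + 3 + 1 = (I + 1) + 3 by ring, pow_add _ (I + 1) 3]; ring
      rw [this]; linarith
    calc 2 ^ k * (Y * ((1/2:ℝ) ^ (I + 1)) ^ (k + 1))
        = 2 ^ k * (Y * (((1/2:ℝ) ^ (I + 1)) ^ k * (1/2:ℝ) ^ (I + 1))) := by rw [pow_succ _ k]
      _ ≤ 2 ^ k * (Y * ((8 * T) ^ k * 1)) := by gcongr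
      _ = Y * (16 * T) ^ k := by
        rw [show 16 * T = 2 * (8 * T) by ring, mul_pow 2 (8 * T)]; ring
  have hk2 := key I hn2
  have a3 : 3 * Y * (12 * T) ^ k * (2 - (1/2) ^ I) ≤ 3 * Y * (16 * T) ^ k * 2 := by
    have : (0:ℝ) < (1/2) ^ I := by positivity
    have b1 : (12 * T) ^ k ≤ (16 * T) ^ k := by gcongr; norm_num
    have b2 : (0:ℝ) ≤ (12 * T) ^ k := by positivity
    have b3 : 3 * Y * (12 * T) ^ k * (2 - (1/2) ^ I) ≤ 3 * Y * (12 * T) ^ k * 2 :=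
      mul_le_mul_of_nonneg_left (by linarith) (by positivity)
    have b4 : 3 * Y * (12 * T) ^ k ≤ 3 * Y * (16 * T) ^ k :=
      mul_le_mul_of_nonneg_left b1 (by positivity)
    linarith
  rw [e]
  refine (norm_add_le _ _).trans ?_
  linarith

lemma j_poly_eval (G : Polynomial ℂ) (n : ℕ) (A : ℝ) (hn : G.natDegree < n) (hA : ∀ i, ‖G.coeff i‖ ≤ A)
    (z : ℂ) (hz : ‖z‖ ≤ 1) : ‖G.eval z‖ ≤ n * A ∧ ‖G.derivative.eval z‖ ≤ (n:ℝ) ^ 2 * A := by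
  have hA0 : 0 ≤ A := (norm_nonneg _).trans (hA 0)
  have gen : ∀ (P : Polynomial ℂ) (B : ℝ), P.natDegree < n → (∀ i < n, ‖P.coeff i‖ ≤ B) →
      ‖P.eval z‖ ≤ n * B := by
    intro P B hP hB
    rw [Polynomial.eval_eq_sum_range' hP]
    refine (norm_sum_le _ _).trans ?_
    have : (n:ℝ) * B = ∑ i ∈ Finset.range n, B := by simp
    rw [this]
    refine Finset.sum_le_sum fun i hi => ?_
    rw [norm_mul, norm_pow]
    have h1 : ‖z‖ ^ i ≤ 1 := pow_le_one₀ (norm_nonneg _) hz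
    have h2 := hB i (by simpa using hi)
    nlinarith [norm_nonneg (P.coeff i), norm_nonneg z, pow_nonneg (norm_nonneg z) i]
  refine ⟨gen G A hn (fun i _ => hA i), ?_⟩
  rw [sq, mul_assoc]
  refine gen _ _ (lt_of_le_of_lt (Polynomial.natDegree_derivative_le G) (by omega)) fun i hi => ?_
  rw [Polynomial.coeff_derivative, norm_mul, mul_comm]
  have : ‖(i:ℂ) + 1‖ ≤ n := by
    have e : (i:ℂ) + 1 = ((i + 1 : ℕ) : ℂ) := by push_cast; rfl
    rw [e, Complex.norm_natCast]; exact_mod_cast hi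
  gcongr
  exact hA _

lemma j_poly_dvd (Q : Polynomial ℂ) (n : ℕ) (C : ℝ)
    (h : ∀ t : ℝ, 0 < t → t ≤ 1 → ‖Q.eval (t : ℂ)‖ ≤ C * t ^ n) : Polynomial.X ^ n ∣ Q := by
  have hC : 0 ≤ C := by simpa using (norm_nonneg _).trans (h 1 one_pos le_rfl)
  induction n with
  | zero => simp
  | succ n ih =>
    obtain ⟨R, rfl⟩ := ih (fun t h0 h1 => (h t h0 h1).trans (by
      gcongr C * ?_
      exact pow_le_pow_of_le_one h0.le h1 (by omega)))
    have hR : ∀ t : ℝ, 0 < t → t ≤ 1 → ‖R.eval (t : ℂ)‖ ≤ C * t := by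
      intro t h0 h1
      have := h t h0 h1
      rw [Polynomial.eval_mul, Polynomial.eval_pow, Polynomial.eval_X, norm_mul, norm_pow,
        Complex.norm_real, Real.norm_of_nonneg h0.le, pow_succ] at this
      have hp : 0 < t ^ n := by positivity
      nlinarith
    have h0 : R.eval 0 = 0 := by
      have hc : Tendsto (fun t : ℝ => ‖R.eval (t : ℂ)‖) (nhdsWithin 0 (Ioi 0)) (nhds ‖R.eval ((0:ℝ) : ℂ)‖) := by
        apply Tendsto.mono_left _ nhdsWithin_le_nhds
        apply Continuous.tendsto
        exact (R.continuous.comp Complex.continuous_ofReal).norm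
      have hc2 : Tendsto (fun t : ℝ => C * t) (nhdsWithin 0 (Ioi 0)) (nhds (C * 0)) := by
        apply Tendsto.mono_left _ nhdsWithin_le_nhds
        apply Continuous.tendsto
        fun_prop
      have := le_of_tendsto_of_tendsto hc hc2 (by
        filter_upwards [Ioc_mem_nhdsGT (show (0:ℝ) < 1 by norm_num)] with t ht
        exact hR t ht.1 ht.2)
      simpa using this
    rw [pow_succ]
    apply mul_dvd_mul_left
    rwa [Polynomial.X_dvd_iff, Polynomial.coeff_zero_eq_eval_zero]

lemma j_poly_schwarz (Q : Polynomial ℂ) (n : ℕ) (B : ℝ) (hd : Polynomial.X ^ n ∣ Q)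
    (hB : ∀ z : ℂ, ‖z‖ ≤ 1 → ‖Q.eval z‖ ≤ B) (z : ℂ) (hz : ‖z‖ ≤ 1) : ‖Q.eval z‖ ≤ B * ‖z‖ ^ n := by
  obtain ⟨R, rfl⟩ := hd
  have : ‖R.eval z‖ ≤ B := by
    refine Complex.norm_le_of_forall_mem_frontier_norm_le (U := Metric.ball 0 1) Metric.isBounded_ball
      (f := fun z => R.eval z) (R.differentiable.diffContOnCl) ?_ ?_
    · intro w hw
      rw [frontier_ball (0:ℂ) one_ne_zero] at hw
      have hw' : ‖w‖ = 1 := by simpa using hw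
      have := hB w hw'.le
      rw [Polynomial.eval_mul, Polynomial.eval_pow, Polynomial.eval_X, norm_mul, norm_pow, hw'] at this
      simpa using this
    · rw [closure_ball (0:ℂ) one_ne_zero]; simpa using hz
  rw [Polynomial.eval_mul, Polynomial.eval_pow, Polynomial.eval_X, norm_mul, norm_pow, mul_comm]
  gcongr

lemma j_pow_sub (a b : ℂ) (L : ℝ) (hL : 1 ≤ L) (ha : ‖a‖ ≤ L) (hb : ‖b‖ ≤ L) (m : ℕ) :
    ‖a ^ m - b ^ m‖ ≤ m * L ^ m * ‖a - b‖ := by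
  induction m with
  | zero => simp
  | succ m ih =>
    have e : a ^ (m + 1) - b ^ (m + 1) = a * (a ^ m - b ^ m) + (a - b) * b ^ m := by ring
    rw [e]
    refine (norm_add_le _ _).trans ?_
    rw [norm_mul, norm_mul, norm_pow]
    have h1 : ‖a‖ * ‖a ^ m - b ^ m‖ ≤ L * (m * L ^ m * ‖a - b‖) := by gcongr
    have h2 : ‖b‖ ^ m ≤ L ^ m := by gcongr
    have h3 : L ^ m ≤ L ^ (m + 1) := pow_le_pow_right₀ hL (by omega)
    have h4 : ‖a - b‖ * ‖b‖ ^ m ≤ ‖a - b‖ * L ^ (m + 1) := by gcongr; exact h2.trans h3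
    push_cast
    rw [pow_succ] at *
    nlinarith


set_option maxHeartbeats 2000000 in
lemma jN_pos (j : ℕ) (hj : 1 ≤ j) : ∃ C : ℝ, 1 ≤ C ∧ ∀ (k : ℕ) (A : ℝ) (G H : Polynomial ℂ) (f : ℝ → ℂ),
    1 ≤ k → 1 ≤ A → G.natDegree < 2 * j * (j + 1) * (k + 1) → H.natDegree < 2 * j * (j + 1) * (k + 1) →
    (∀ i, ‖G.coeff i‖ ≤ A) → (∀ i, ‖H.coeff i‖ ≤ A) →
    (∀ t : ℝ, 0 ≤ t → t ≤ 1 → ‖f t ^ j - G.eval (t:ℂ)‖ ≤ A * t ^ (2 * j * (j + 1) * (k + 1)) ∧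
      ‖f t ^ (j + 1) - H.eval (t:ℂ)‖ ≤ A * t ^ (2 * j * (j + 1) * (k + 1)) ∧ ‖f t‖ ≤ A) →
    ∀ h : ℝ, 0 < h → k * h ≤ 1 →
    ‖jfd k (fun i => f (i * h))‖ ≤ C ^ (k + 1) * A ^ (2 * j + 2) * (k * h) ^ k := by
  obtain ⟨K, hK, happ⟩ := j_approx j hj
  set L : ℕ := 2 * j * (j + 1) with hL
  have hL2 : j + 1 ≤ L := by rw [hL]; nlinarith
  have hL1 : (1:ℝ) ≤ L := by exact_mod_cast (by omega : 1 ≤ L)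
  set C1 : ℝ := (4 * K + 12) * (L:ℝ) ^ 4 + 2 * (2 * L) ^ (2 * j) with hC1
  have hC1' : 1 ≤ C1 := by
    have : (1:ℝ) ≤ (L:ℝ) ^ 4 := one_le_pow₀ hL1
    have h2 : (0:ℝ) ≤ 2 * (2 * L) ^ (2 * j) := by positivity
    rw [hC1]; nlinarith
  refine ⟨7 * C1 * 256, by linarith, ?_⟩
  intro k A G H f hk hA hGd hHd hGc hHc hf h hh hkh
  set N := k + 1 with hN
  set n : ℕ := L * N with hn
  have hn1 : (1:ℝ) ≤ n := by
    have : 1 ≤ n := by rw [hn]; exact Nat.one_le_iff_ne_zero.mpr (Nat.mul_ne_zero (by omega) (by omega))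
    exact_mod_cast this
  have hnA : 1 ≤ n * A := one_le_mul_of_one_le_of_one_le hn1 hA
  -- bound on Q
  have hGz : ∀ z : ℂ, ‖z‖ ≤ 1 → ‖G.eval z‖ ≤ n * A := fun z hz => (j_poly_eval G n A hGd hGc z hz).1
  have hHz : ∀ z : ℂ, ‖z‖ ≤ 1 → ‖H.eval z‖ ≤ n * A := fun z hz => (j_poly_eval H n A hHd hHc z hz).1
  set Q : Polynomial ℂ := H ^ j - G ^ (j + 1) with hQdef
  have hQe : ∀ z : ℂ, Q.eval z = (H.eval z) ^ j - (G.eval z) ^ (j + 1) := by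
    intro z; simp [hQdef]
  have hQdvd : Polynomial.X ^ n ∣ Q := by
    set W : ℝ := (n * A) + A ^ (j + 1) with hW
    have hW1 : 1 ≤ W := by
      have : 0 ≤ A ^ (j + 1) := by positivity
      linarith
    refine j_poly_dvd Q n (j * W ^ j * A + (j + 1 : ℕ) * W ^ (j + 1) * A) fun t h0 h1 => ?_
    obtain ⟨g1, g2, g3⟩ := hf t h0.le h1
    have ht1 : ‖(t:ℂ)‖ ≤ 1 := by rw [Complex.norm_real, Real.norm_of_nonneg h0.le]; exact h1
    have w1 : ‖G.eval (t:ℂ)‖ ≤ W := (hGz _ ht1).trans (by rw [hW]; have : 0 ≤ A ^ (j + 1) := by positivity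
                                                          linarith)
    have w2 : ‖H.eval (t:ℂ)‖ ≤ W := (hHz _ ht1).trans (by rw [hW]; have : 0 ≤ A ^ (j + 1) := by positivity
                                                          linarith)
    have w3 : ∀ m, m ≤ j + 1 → ‖f t ^ m‖ ≤ W := by
      intro m hm
      rw [norm_pow]
      calc ‖f t‖ ^ m ≤ A ^ m := by gcongr
        _ ≤ A ^ (j + 1) := pow_le_pow_right₀ hA hm
        _ ≤ W := by rw [hW]; linarith
    have e : Q.eval (t:ℂ) = ((f t ^ j) ^ (j + 1) - (G.eval (t:ℂ)) ^ (j + 1)) -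
        ((f t ^ (j + 1)) ^ j - (H.eval (t:ℂ)) ^ j) := by
      rw [hQe]; ring
    rw [e]
    have b1 := j_pow_sub (f t ^ j) (G.eval (t:ℂ)) W hW1 (w3 j (by omega)) w1 (j + 1)
    have b2 := j_pow_sub (f t ^ (j + 1)) (H.eval (t:ℂ)) W hW1 (w3 (j + 1) le_rfl) w2 j
    have b3 : ((j + 1 : ℕ):ℝ) * W ^ (j + 1) * ‖f t ^ j - G.eval (t:ℂ)‖ ≤
        ((j + 1 : ℕ):ℝ) * W ^ (j + 1) * (A * t ^ n) := mul_le_mul_of_nonneg_left g1 (by positivity)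
    have b4 : (j:ℝ) * W ^ j * ‖f t ^ (j + 1) - H.eval (t:ℂ)‖ ≤
        (j:ℝ) * W ^ j * (A * t ^ n) := mul_le_mul_of_nonneg_left g2 (by positivity)
    refine (norm_sub_le _ _).trans ?_
    calc _ ≤ ((j + 1 : ℕ):ℝ) * W ^ (j + 1) * (A * t ^ n) + (j:ℝ) * W ^ j * (A * t ^ n) := by linarith
      _ = _ := by ring
  have hQB : ∀ z : ℂ, ‖z‖ ≤ 1 → ‖Q.eval z‖ ≤ 2 * (n * A) ^ (j + 1) := by
    intro z hz
    rw [hQe]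
    refine (norm_sub_le _ _).trans ?_
    rw [norm_pow, norm_pow]
    have b1 : ‖H.eval z‖ ^ j ≤ (n * A) ^ j := by gcongr; exact hHz z hz
    have b2 : ‖G.eval z‖ ^ (j + 1) ≤ (n * A) ^ (j + 1) := by gcongr; exact hGz z hz
    have b3 : (n * A) ^ j ≤ (n * A) ^ (j + 1) := pow_le_pow_right₀ hnA (by omega)
    linarith
  set s : ℝ → ℝ := fun x => 2 * (n * A) * x ^ N with hs
  have hspos : ∀ x, 0 < x → 0 < s x := fun x hx => by simp only [hs]; positivity
  have hQs : ∀ x : ℝ, 0 < x → x ≤ 1 → ∀ z : ℂ, ‖z‖ ≤ x →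
      ‖(H.eval z) ^ j - (G.eval z) ^ (j + 1)‖ ≤ ((s x) ^ (2 * j)) ^ (j + 1) := by
    intro x hx hx1 z hz
    rw [← hQe]
    refine (j_poly_schwarz Q n _ hQdvd hQB z (hz.trans hx1)).trans ?_
    rw [← pow_mul, ← hL]
    simp only [hs]
    rw [mul_pow (2 * (n * A)), ← pow_mul, mul_comm N L, ← hn]
    have c1 : 2 * (n * A) ^ (j + 1) ≤ (2 * (n * A)) ^ L := by
      calc 2 * (n * A) ^ (j + 1) ≤ 2 ^ (j + 1) * (n * A) ^ (j + 1) := by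
            gcongr
            calc (2:ℝ) = 2 ^ 1 := by norm_num
              _ ≤ 2 ^ (j + 1) := pow_le_pow_right₀ (by norm_num) (by omega)
        _ = (2 * (n * A)) ^ (j + 1) := (mul_pow _ _ _).symm
        _ ≤ _ := pow_le_pow_right₀ (by linarith) hL2
    gcongr
  set x : ℕ → ℝ := fun i => (1/2:ℝ) ^ (i + 1) with hx
  have hx0 : ∀ i, 0 < x i := fun i => by simp only [hx]; positivity
  have hx1 : ∀ i, x i ≤ 1 := fun i => pow_le_one₀ (by norm_num) (by norm_num)
  have hxs : ∀ i, x (i + 1) ≤ x i := fun i =>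
    pow_le_pow_of_le_one (by norm_num) (by norm_num) (by omega)
  have hr : ∀ i, 2 * (1/2:ℝ) ^ (i + 2) = x i := fun i => by
    simp only [hx]; rw [show i + 2 = (i + 1) + 1 by ring, pow_succ _ (i + 1)]; ring
  have hcard : G.roots.card ≤ n := (G.card_roots').trans hGd.le
  have hex : ∀ i, ∃ F : ℂ → ℂ, DifferentiableOn ℂ F (Metric.ball 0 ((1/2:ℝ) ^ (i + 2))) ∧
      ∀ z, ‖F z - jF G H (s (x i) ^ (2 * j)) z‖ ≤ K * ((n:ℝ) ^ 2 * A) * n * s (x i) := by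
    intro i
    refine happ G H n ((n:ℝ) ^ 2 * A) (s (x i)) ((1/2:ℝ) ^ (i + 2)) hcard
      (one_le_mul_of_one_le_of_one_le (one_le_pow₀ hn1) hA) (hspos _ (hx0 i)) (by positivity)
      (by rw [hr]; exact hx1 i) ?_
    intro z hz
    rw [hr] at hz
    exact ⟨(j_poly_eval G n A hGd hGc z (hz.trans (hx1 i))).2, hQs _ (hx0 i) (hx1 i) z hz⟩
  choose F hFd hFe using hex
  set P : ℝ := (n:ℝ) ^ 4 * A ^ 2 with hP
  have hP0 : 0 ≤ P := by positivity
  have hFe' : ∀ i z, ‖F i z - jF G H (s (x i) ^ (2 * j)) z‖ ≤ 2 * K * P * (x i) ^ N := by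
    intro i z
    refine (hFe i z).trans (le_of_eq ?_)
    simp only [hs, hP]; ring
  have hs2 : ∀ i, (s (x i)) ^ 2 ≤ 4 * P * (x i) ^ N := by
    intro i
    simp only [hs, hP]
    have c1 : (x i) ^ N ≤ 1 := pow_le_one₀ (hx0 i).le (hx1 i)
    have c0 : 0 ≤ (x i) ^ N := by have := hx0 i; positivity
    have c2 : (n:ℝ) ^ 2 ≤ (n:ℝ) ^ 4 := pow_le_pow_right₀ hn1 (by norm_num)
    calc (2 * (n * A) * (x i) ^ N) ^ 2 = 4 * ((n:ℝ) ^ 2 * A ^ 2) * (x i) ^ N * (x i) ^ N := by ring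
      _ ≤ 4 * ((n:ℝ) ^ 4 * A ^ 2) * (x i) ^ N * 1 := by gcongr
      _ = _ := by ring
  set Y : ℝ := C1 * 16 ^ N * A ^ (2 * j + 2) with hY
  have hn4 : P ≤ (L:ℝ) ^ 4 * 16 ^ N * A ^ (2 * j + 2) := by
    have c1 : (N:ℝ) ≤ 2 ^ N := by exact_mod_cast Nat.lt_two_pow_self.le
    have c2 : A ^ 2 ≤ A ^ (2 * j + 2) := pow_le_pow_right₀ hA (by omega)
    have c3 : (N:ℝ) ^ 4 ≤ 16 ^ N := by
      calc (N:ℝ) ^ 4 ≤ (2 ^ N) ^ 4 := by gcongr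
        _ = 16 ^ N := by rw [← pow_mul, mul_comm, pow_mul]; norm_num
    simp only [hP, hn]; push_cast
    rw [mul_pow]
    gcongr
  have hYP : (4 * K + 12) * P ≤ Y - 2 * (2 * L) ^ (2 * j) * A ^ (2 * j + 2) := by
    have c4 : (1:ℝ) ≤ 16 ^ N := one_le_pow₀ (by norm_num)
    have c5 : (4 * K + 12) * P ≤ (4 * K + 12) * ((L:ℝ) ^ 4 * 16 ^ N * A ^ (2 * j + 2)) := by gcongr
    have c6 : 2 * (2 * L) ^ (2 * j) * A ^ (2 * j + 2) * 1 ≤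
        2 * (2 * L) ^ (2 * j) * A ^ (2 * j + 2) * 16 ^ N := by gcongr
    have c7 : Y = (4 * K + 12) * ((L:ℝ) ^ 4 * 16 ^ N * A ^ (2 * j + 2)) +
      2 * (2 * L) ^ (2 * j) * A ^ (2 * j + 2) * 16 ^ N := by rw [hY, hC1]; ring
    linarith
  have hLj : (0:ℝ) ≤ 2 * (2 * L) ^ (2 * j) * A ^ (2 * j + 2) := by positivity
  have hP1 : n * A ≤ P := by
    have c2 : (n:ℝ) ≤ (n:ℝ) ^ 4 := le_self_pow₀ hn1 (by norm_num)
    have c3 : A ≤ A ^ 2 := le_self_pow₀ hA (by norm_num)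
    rw [hP]; gcongr
  have hAP : A ≤ P := by nlinarith
  have hY0 : 0 ≤ Y := by nlinarith
  have hfin := jN_tel k hk Y hY0 f F hFd ?_ ?_ ?_ ?_ h hh hkh
  · refine hfin.trans ?_
    have c0 : (7:ℝ) * Y * (16 * (k * h)) ^ k = 7 * C1 * (16 ^ N * 16 ^ k) * A ^ (2 * j + 2) * (k * h) ^ k := by
      rw [hY, mul_pow 16]; ring
    rw [c0]
    have c1 : 7 * C1 * (16 ^ N * 16 ^ k) ≤ (7 * C1 * 256) ^ N := by
      rw [mul_pow (7 * C1)]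
      have d1 : 7 * C1 ≤ (7 * C1) ^ N := le_self_pow₀ (by linarith) (by omega)
      have d2 : (16:ℝ) ^ N * 16 ^ k ≤ 256 ^ N := by
        calc (16:ℝ) ^ N * 16 ^ k ≤ 16 ^ N * 16 ^ N := by
              gcongr
              · norm_num
              · omega
          _ = 256 ^ N := by rw [← mul_pow]; norm_num
      gcongr
    gcongr
  · intro z hz
    have hz1 : ‖z‖ ≤ x 0 := by
      have : ‖z‖ < (1/2:ℝ) ^ 2 := by simpa using hz
      simp only [hx]; norm_num at this ⊢; linarith
    have b1 := hFe' 0 z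
    have b2 := jF_bound G H j hj (hspos _ (hx0 0)) z (hQs _ (hx0 0) (hx1 0) z hz1)
    have b3 := hGz z (hz1.trans (hx1 0))
    have b4 : s (x 0) ≤ 2 * L * A := by
      have c1 : (N:ℝ) ≤ 2 ^ N := by exact_mod_cast Nat.lt_two_pow_self.le
      have c2 : (N:ℝ) * (1/2) ^ N ≤ 1 := by
        calc (N:ℝ) * (1/2) ^ N ≤ 2 ^ N * (1/2) ^ N := by gcongr
          _ = 1 := by rw [← mul_pow]; norm_num
      simp only [hs, hx, hn, zero_add, pow_one]; push_cast
      calc 2 * ((L:ℝ) * N * A) * (1/2) ^ N = 2 * L * A * (N * (1/2) ^ N) := by ring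
        _ ≤ 2 * L * A * 1 := by gcongr
        _ = _ := by ring
    have b5 : s (x 0) ^ (2 * j) ≤ (2 * L) ^ (2 * j) * A ^ (2 * j + 2) := by
      calc s (x 0) ^ (2 * j) ≤ (2 * L * A) ^ (2 * j) := by
            have := (hspos _ (hx0 0)).le; gcongr
        _ = (2 * L) ^ (2 * j) * A ^ (2 * j) := by rw [mul_pow]
        _ ≤ _ := by gcongr; omega
    have b6 : (x 0) ^ N ≤ 1 := pow_le_one₀ (hx0 0).le (hx1 0)
    have b7 : 2 * K * P * (x 0) ^ N ≤ 2 * K * P * 1 := by gcongr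
    have b8 : F 0 z = (F 0 z - jF G H (s (x 0) ^ (2 * j)) z) + jF G H (s (x 0) ^ (2 * j)) z := by ring
    rw [b8]
    refine (norm_add_le _ _).trans ?_
    have : 0 ≤ K * P := by positivity
    nlinarith
  · intro i z hz
    have hz1 : ‖z‖ ≤ x (i + 1) := by
      have h1 : ‖z‖ < (1/2:ℝ) ^ (i + 3) := by simpa using hz
      have h2 : (1/2:ℝ) ^ (i + 3) ≤ x (i + 1) := pow_le_pow_of_le_one (by norm_num) (by norm_num) (by omega)
      linarith
    have b1 := hFe' i z
    have b2 := hFe' (i + 1) z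
    have b3 : (x (i + 1)) ^ N ≤ (x i) ^ N := pow_le_pow_left₀ (hx0 _).le (hxs i) _
    have b4 : s (x (i + 1)) ≤ s (x i) := by
      simp only [hs]; exact mul_le_mul_of_nonneg_left b3 (by positivity)
    have b5 := jF_diff G H j hj (hspos _ (hx0 (i + 1))) b4 z (hQs _ (hx0 (i + 1)) (hx1 (i + 1)) z hz1)
    have b6 := hs2 i
    have b7 : 2 * K * P * (x (i + 1)) ^ N ≤ 2 * K * P * (x i) ^ N := by gcongr
    have e : F (i + 1) z - F i z = (F (i + 1) z - jF G H (s (x (i + 1)) ^ (2 * j)) z)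
      - (F i z - jF G H (s (x i) ^ (2 * j)) z)
      - (jF G H (s (x i) ^ (2 * j)) z - jF G H (s (x (i + 1)) ^ (2 * j)) z) := by ring
    rw [e]
    refine (norm_sub_le _ _).trans ((add_le_add_left (norm_sub_le _ _) _).trans ?_)
    have b8 : (4 * K + 8) * P * (x i) ^ N ≤ Y * (x i) ^ N := by
      have := hx0 i; gcongr; nlinarith
    show _ ≤ Y * (x i) ^ N
    linarith
  · intro i t ht0 ht
    have ht1 : t ≤ x i := ht.trans (pow_le_pow_of_le_one (by norm_num) (by norm_num) (by omega))
    obtain ⟨g1, g2, g3⟩ := hf t ht0 (ht1.trans (hx1 i))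
    have b1 := hFe' i t
    have hxi := hx0 i
    have hxi1 := hx1 i
    set δ : ℝ := A * (x i) ^ n with hδ
    have hδt : A * t ^ n ≤ δ := by rw [hδ]; gcongr
    have hxN : (x i) ^ N ≤ 1 := pow_le_one₀ hxi.le hxi1
    have hδs' : δ ≤ (x i) ^ N * (s (x i)) ^ (2 * j) := by
      have c3 : (s (x i)) ^ (2 * j) = (2 * (n * A)) ^ (2 * j) * (x i) ^ (N * (2 * j)) := by
        show (2 * (n * A) * (x i) ^ N) ^ (2 * j) = _
        rw [mul_pow, pow_mul (x i) N]
      rw [c3, hδ]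
      have c1 : A ≤ (2 * (n * A)) ^ (2 * j) := by
        calc A ≤ 2 * (n * A) := by nlinarith
          _ ≤ _ := le_self_pow₀ (by linarith) (by omega)
      have c2 : (x i) ^ n ≤ (x i) ^ N * (x i) ^ (N * (2 * j)) := by
        rw [← pow_add]
        refine pow_le_pow_of_le_one hxi.le hxi1 ?_
        rw [hn, hL]; nlinarith [Nat.mul_le_mul hj hj]
      calc A * (x i) ^ n ≤ (2 * (n * A)) ^ (2 * j) * ((x i) ^ N * (x i) ^ (N * (2 * j))) := by gcongr
        _ = _ := by ring
    have hsp : 0 < (s (x i)) ^ (2 * j) := pow_pos (hspos _ hxi) _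
    have hδs : δ ≤ (s (x i)) ^ (2 * j) := by nlinarith
    have b2 := jF_real G H j hj (hspos _ hxi) (by linarith : 0 ≤ A) (t:ℂ) (f t) hδs (g1.trans hδt) (g2.trans hδt) g3
    have b3 : δ * (1 + A) / (s (x i)) ^ (2 * j) ≤ (x i) ^ N * (1 + A) := by
      rw [div_le_iff₀ hsp]; nlinarith
    have b4 := hs2 i
    have e : f t - F i t = (f t - jF G H (s (x i) ^ (2 * j)) t) - (F i t - jF G H (s (x i) ^ (2 * j)) t) := by
      ring
    rw [e]
    refine (norm_sub_le _ _).trans ?_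
    have b8 : (2 * K + 10) * P * (x i) ^ N ≤ Y * (x i) ^ N := by
      gcongr; nlinarith
    have b9 : (x i) ^ N * (1 + A) ≤ (x i) ^ N * (2 * P) := by gcongr; linarith
    show _ ≤ Y * (x i) ^ N
    linarith
  · intro t h0 h1
    refine (hf t h0 h1).2.2.trans ?_
    nlinarith

lemma jN (j : ℕ) (hj : 1 ≤ j) : ∃ C : ℝ, 1 ≤ C ∧ ∀ (k : ℕ) (A : ℝ) (G H : Polynomial ℂ) (f : ℝ → ℂ),
    1 ≤ A → G.natDegree < 2 * j * (j + 1) * (k + 1) → H.natDegree < 2 * j * (j + 1) * (k + 1) →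
    (∀ i, ‖G.coeff i‖ ≤ A) → (∀ i, ‖H.coeff i‖ ≤ A) →
    (∀ t : ℝ, 0 ≤ t → t ≤ 1 → ‖f t ^ j - G.eval (t:ℂ)‖ ≤ A * t ^ (2 * j * (j + 1) * (k + 1)) ∧
      ‖f t ^ (j + 1) - H.eval (t:ℂ)‖ ≤ A * t ^ (2 * j * (j + 1) * (k + 1)) ∧ ‖f t‖ ≤ A) →
    ∀ h : ℝ, 0 < h → k * h ≤ 1 →
    ‖jfd k (fun i => f (i * h))‖ ≤ C ^ (k + 1) * A ^ (2 * j + 2) * (k * h) ^ k := by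
  obtain ⟨C, hC, hN⟩ := jN_pos j hj
  refine ⟨C, hC, ?_⟩
  intro k A G H f hA hG hH hGc hHc hf h hh hkh
  rcases Nat.eq_zero_or_pos k with rfl | hk
  · have := (hf 0 le_rfl zero_le_one).2.2
    have e : jfd 0 (fun i => f (i * h)) = f 0 := by simp [jfd]
    rw [e]
    have h2 : A ≤ A ^ (2 * j + 2) := le_self_pow₀ hA (by omega)
    simp only [zero_add, pow_one, pow_zero, mul_one]
    nlinarith
  · exact hN k A G H f hk hA hG hH hGc hHc hf h hh hkh


lemma jw_mono (m : ℕ → ℝ) (h0 : m 0 = 1) (hp : ∀ k, 0 < m k) (h1 : 1 ≤ m 1)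
    (hl : ∀ k, m (k + 1) ^ 2 ≤ m k * m (k + 2)) : ∀ k, m k ≤ m (k + 1) := by
  intro k
  induction k with
  | zero => rw [h0]; exact h1
  | succ k ih =>
    have := hl k
    have h2 : m k * m (k + 2) ≤ m (k + 1) * m (k + 2) := by gcongr; exact (hp _).le
    have := hp (k + 1)
    nlinarith

lemma jw_root (m : ℕ → ℝ) (h0 : m 0 = 1) (hp : ∀ k, 0 < m k)
    (hl : ∀ k, m (k + 1) ^ 2 ≤ m k * m (k + 2)) : ∀ i, m i ^ (i + 1) ≤ m (i + 1) ^ i := by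
  intro i
  induction i with
  | zero => simp [h0]
  | succ i ih =>
    have h2 : (m (i + 1) ^ 2) ^ (i + 1) ≤ (m i * m (i + 2)) ^ (i + 1) :=
      pow_le_pow_left₀ (by positivity) (hl i) _
    rw [mul_pow] at h2
    have h3 : m i ^ (i + 1) * m (i + 2) ^ (i + 1) ≤ m (i + 1) ^ i * m (i + 2) ^ (i + 1) := by
      have := hp (i + 2); gcongr
    have h4 : (m (i + 1) ^ 2) ^ (i + 1) = m (i + 1) ^ i * m (i + 1) ^ (i + 1 + 1) := by ring
    rw [h4] at h2
    have h5 := pow_pos (hp (i + 1)) i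
    exact le_of_mul_le_mul_left (h2.trans h3) h5

lemma jw_below (m : ℕ → ℝ) (h0 : m 0 = 1) (hp : ∀ k, 0 < m k)
    (hl : ∀ k, m (k + 1) ^ 2 ≤ m k * m (k + 2)) (n : ℕ) (a : ℝ) (ha : 0 < a) (hn : m n ≤ a ^ n) :
    ∀ i ≤ n, m i ≤ a ^ i := by
  intro i hi
  induction hi using Nat.decreasingInduction with
  | self => exact hn
  | of_succ i hi ih =>
    have h1 := jw_root m h0 hp hl i
    have h2 : m (i + 1) ^ i ≤ (a ^ (i + 1)) ^ i := pow_le_pow_left₀ (hp _).le ih _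
    have h3 : m i ^ (i + 1) ≤ (a ^ i) ^ (i + 1) := by
      refine (h1.trans h2).trans (le_of_eq ?_)
      rw [← pow_mul, ← pow_mul, mul_comm]
    exact le_of_pow_le_pow_left₀ (by omega) (by positivity) h3

lemma jw_a (m : ℕ → ℝ) (h0 : m 0 = 1) (hp : ∀ k, 0 < m k) (h1 : 1 ≤ m 1)
    (hl : ∀ k, m (k + 1) ^ 2 ≤ m k * m (k + 2)) (C : ℝ) (hC : 1 ≤ C)
    (hmg : ∀ a b, m (a + b) ≤ C ^ (a + b) * m a * m b) (L : ℕ) (hL : 1 ≤ L) :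
    ∃ D : ℝ, 1 ≤ D ∧ ∀ k, ∃ a : ℝ, 1 ≤ a ∧ (∀ i ≤ L * (k + 1), m i ≤ a ^ i) ∧ a ^ k ≤ D ^ (k + 1) * m k := by
  have hmono : Monotone m := monotone_nat_of_le_succ (jw_mono m h0 hp h1 hl)
  have hm1 : ∀ k, 1 ≤ m k := fun k => by rw [← h0]; exact hmono (Nat.zero_le k)
  have hit : ∀ l q, m (l * q) ≤ C ^ (l * l * q) * m q ^ l := by
    intro l q
    induction l with
    | zero => simp [h0]
    | succ l ih =>
      rw [show (l + 1) * q = l * q + q by ring]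
      calc m (l * q + q) ≤ C ^ (l * q + q) * m (l * q) * m q := hmg _ _
        _ ≤ C ^ (l * q + q) * (C ^ (l * l * q) * m q ^ l) * m q := by
          have := hp q; gcongr
        _ = C ^ (l * l * q + l * q + q) * m q ^ (l + 1) := by ring
        _ ≤ _ := by
          have := hp q
          gcongr
          nlinarith
  refine ⟨C ^ (L + 1) * m 1, one_le_mul_of_one_le_of_one_le (one_le_pow₀ hC) h1, fun k => ?_⟩
  have hn0 : L * (k + 1) ≠ 0 := Nat.mul_ne_zero (by omega) (by omega)
  set n := L * (k + 1) with hn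
  set a : ℝ := m n ^ ((n:ℝ)⁻¹) with ha
  have han : a ^ n = m n := Real.rpow_inv_natCast_pow (hp n).le hn0
  have ha0 : 0 < a := Real.rpow_pos_of_pos (hp n) _
  have ha1 : 1 ≤ a := Real.one_le_rpow (hm1 n) (by positivity)
  refine ⟨a, ha1, jw_below m h0 hp hl n a ha0 han.ge, ?_⟩
  have h2 : (a ^ (k + 1)) ^ L ≤ (C ^ (L * (k + 1)) * m (k + 1)) ^ L := by
    rw [← pow_mul, mul_comm (k + 1), ← hn, han, mul_pow, ← pow_mul]
    refine (hit L (k + 1)).trans (le_of_eq ?_)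
    rw [hn, show L * (k + 1) * L = L * L * (k + 1) by ring]
  have h3 : a ^ (k + 1) ≤ C ^ (L * (k + 1)) * m (k + 1) :=
    le_of_pow_le_pow_left₀ (by omega) (by have := hp (k + 1); positivity) h2
  have h4 := hmg k 1
  calc a ^ k ≤ a ^ (k + 1) := pow_le_pow_right₀ ha1 (by omega)
    _ ≤ C ^ (L * (k + 1)) * (C ^ (k + 1) * m k * m 1) := h3.trans (by gcongr)
    _ = (C ^ (L + 1)) ^ (k + 1) * m 1 * m k := by rw [← pow_mul]; ring
    _ ≤ (C ^ (L + 1)) ^ (k + 1) * m 1 ^ (k + 1) * m k := by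
      have := hp k
      gcongr
      exact le_self_pow₀ h1 (by omega)
    _ = _ := by rw [mul_pow]

lemma jw_nq (m : ℕ → ℝ) (hp : ∀ k, 0 < m k)
    (hl : ∀ k, m (k + 1) ^ 2 ≤ m k * m (k + 2))
    (hs : Summable fun k : ℕ => m k / (m (k + 1) * (k + 1))) (κ : ℝ) (hκ : 0 < κ) :
    ∃ K : ℝ, 0 < K ∧ ∀ k, κ ^ k ≤ K * m k := by
  by_cases hex : ∃ k0, κ * m k0 ≤ m (k0 + 1)
  · obtain ⟨k0, hk0⟩ := hex
    have hr : ∀ i, κ * m (k0 + i) ≤ m (k0 + i + 1) := by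
      intro i
      induction i with
      | zero => exact hk0
      | succ i ih =>
        have h1 := hl (k0 + i)
        have h2 := hp (k0 + i)
        have h3 := hp (k0 + i + 1)
        show κ * m (k0 + i + 1) ≤ m (k0 + i + 2)
        have h4 : m (k0 + i) * (κ * m (k0 + i + 1)) ≤ m (k0 + i) * m (k0 + i + 2) := by nlinarith
        exact le_of_mul_le_mul_left h4 h2
    have hu : ∀ i, κ ^ (k0 + i) / m (k0 + i) ≤ κ ^ k0 / m k0 := by
      intro i
      induction i with
      | zero => exact le_rfl
      | succ i ih =>
        refine le_trans ?_ ih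
        rw [div_le_div_iff₀ (hp _) (hp _)]
        have := hr i
        show κ ^ (k0 + i + 1) * m (k0 + i) ≤ κ ^ (k0 + i) * m (k0 + i + 1)
        rw [pow_succ, mul_assoc]
        gcongr
    refine ⟨∑ i ∈ Finset.range (k0 + 1), κ ^ i / m i, ?_, ?_⟩
    · apply Finset.sum_pos
      · intro i _; have := hp i; positivity
      · exact ⟨0, by simp⟩
    · have hle : ∀ i ≤ k0, κ ^ i / m i ≤ ∑ i ∈ Finset.range (k0 + 1), κ ^ i / m i := by
        intro i hi
        refine Finset.single_le_sum (f := fun i => κ ^ i / m i) ?_ (by simp; omega)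
        intro i _; have := hp i; positivity
      intro k
      rw [← div_le_iff₀ (hp k)]
      rcases le_total k k0 with h | h
      · exact hle k h
      · obtain ⟨i, rfl⟩ := Nat.exists_eq_add_of_le h
        exact (hu i).trans (hle k0 le_rfl)
  · exfalso
    push Not at hex
    have h1 : Summable fun k : ℕ => κ⁻¹ * (1 / ((k:ℝ) + 1)) := by
      refine Summable.of_nonneg_of_le (fun k => by positivity) (fun k => ?_) hs
      have a1 := hp k
      have a2 := hp (k + 1)
      rw [inv_mul_eq_div, div_div, div_le_div_iff₀ (by positivity) (by positivity)]
      have := hex k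
      have hk : (0:ℝ) < (k:ℝ) + 1 := by positivity
      nlinarith
    rw [summable_mul_left_iff (by positivity)] at h1
    have h2 : Summable fun k : ℕ => 1 / ((k:ℝ)) := by
      rw [← summable_nat_add_iff 1]
      simpa using h1
    exact Real.not_summable_one_div_natCast h2

/-- Taylor polynomial along a segment. -/
lemma j_taylor (φ : ℝ → ℂ) (n : ℕ) (hn : 1 ≤ n) (A : ℝ) (hA : 0 ≤ A)
    (hc : ContDiffOn ℝ n φ (Icc 0 1))
    (hb : ∀ i ≤ n, ∀ t ∈ Icc (0:ℝ) 1, ‖iteratedDerivWithin i φ (Icc 0 1) t‖ ≤ A * (i.factorial * (1/2) ^ i)) :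
    ∃ G : Polynomial ℂ, G.natDegree < n ∧ (∀ i, ‖G.coeff i‖ ≤ A) ∧
      ∀ t : ℝ, 0 ≤ t → t ≤ 1 → ‖φ t - G.eval (t:ℂ)‖ ≤ A * t ^ n := by
  obtain ⟨p, rfl⟩ : ∃ p, n = p + 1 := ⟨n - 1, by omega⟩
  set c : ℕ → ℂ := fun i => ((i.factorial:ℝ)⁻¹ : ℝ) • iteratedDerivWithin i φ (Icc 0 1) 0 with hcdef
  have hci : ∀ i ≤ p, ‖c i‖ ≤ A := by
    intro i hi
    have := hb i (by omega) 0 (by simp)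
    simp only [hcdef]
    have hf : (0:ℝ) < i.factorial := by exact_mod_cast i.factorial_pos
    rw [norm_smul, norm_inv, Real.norm_of_nonneg hf.le, inv_mul_le_iff₀ hf]
    refine this.trans ?_
    have : (1/2:ℝ) ^ i ≤ 1 := pow_le_one₀ (by norm_num) (by norm_num)
    have h3 : A * (i.factorial * (1/2) ^ i) ≤ A * (i.factorial * 1) := by gcongr
    linarith
  refine ⟨∑ i ∈ Finset.range (p + 1), Polynomial.C (c i) * Polynomial.X ^ i, ?_, ?_, ?_⟩
  · rw [Nat.lt_succ_iff]
    refine Polynomial.natDegree_sum_le_of_forall_le _ _ fun i hi => ?_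
    refine (Polynomial.natDegree_C_mul_X_pow_le _ _).trans ?_
    have := Finset.mem_range.mp hi; omega
  · intro i
    rw [Polynomial.finsetSum_coeff]
    simp only [Polynomial.coeff_C_mul_X_pow]
    rw [Finset.sum_ite_eq]
    split_ifs with h
    · exact hci i (by have := Finset.mem_range.mp h; omega)
    · simpa using hA
  · intro t h0 h1
    have := taylor_mean_remainder_bound (f := φ) (a := 0) (b := 1) (n := p) zero_le_one
      (by exact_mod_cast hc) (x := t) ⟨h0, h1⟩ (fun y hy => hb (p + 1) le_rfl y hy)
    rw [taylor_within_apply] at this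
    have e : ∑ k ∈ Finset.range (p + 1), ((k.factorial:ℝ)⁻¹ * (t - 0) ^ k) • iteratedDerivWithin k φ (Icc 0 1) 0
        = Polynomial.eval (t:ℂ) (∑ i ∈ Finset.range (p + 1), Polynomial.C (c i) * Polynomial.X ^ i) := by
      rw [Polynomial.eval_finsetSum]
      refine Finset.sum_congr rfl fun i _ => ?_
      simp only [hcdef, Polynomial.eval_mul, Polynomial.eval_C, Polynomial.eval_pow, Polynomial.eval_X,
        Complex.real_smul, sub_zero]
      push_cast; ring
    rw [e] at this
    refine this.trans ?_
    rw [sub_zero, Nat.factorial_succ]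
    have hf : (0:ℝ) < p.factorial := by exact_mod_cast p.factorial_pos
    rw [div_le_iff₀ hf]
    have h2 : ((p + 1 : ℕ):ℝ) * (1/2) ^ (p + 1) ≤ 1 := by
      have c1 : ((p + 1 : ℕ):ℝ) ≤ 2 ^ (p + 1) := by exact_mod_cast Nat.lt_two_pow_self.le
      calc ((p + 1 : ℕ):ℝ) * (1/2) ^ (p + 1) ≤ 2 ^ (p + 1) * (1/2) ^ (p + 1) := by gcongr
        _ = 1 := by rw [← mul_pow]; norm_num
    calc A * (((p + 1) * p.factorial : ℕ) * (1/2) ^ (p + 1)) * t ^ (p + 1)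
        = A * t ^ (p + 1) * p.factorial * (((p + 1 : ℕ):ℝ) * (1/2) ^ (p + 1)) := by push_cast; ring
      _ ≤ A * t ^ (p + 1) * p.factorial * 1 := by gcongr
      _ = _ := by ring


lemma j_line {E : Type*} [NormedAddCommGroup E] [NormedSpace ℝ E] (g : E → ℂ) (V : Set E) (hV : IsOpen V)
    (hg : ContDiffOn ℝ (⊤:ℕ∞) g V) (x w : E) (hseg : ∀ t ∈ Icc (0:ℝ) 1, x + t • w ∈ V) :
    ContDiffOn ℝ (⊤:ℕ∞) (fun t : ℝ => g (x + t • w)) (Icc 0 1) ∧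
    ∀ i : ℕ, ∀ t ∈ Icc (0:ℝ) 1, ‖iteratedDerivWithin i (fun t : ℝ => g (x + t • w)) (Icc 0 1) t‖ ≤
      ‖iteratedFDeriv ℝ i g (x + t • w)‖ * ‖w‖ ^ i := by
  set l : ℝ →L[ℝ] E := ContinuousLinearMap.toSpanSingleton ℝ w with hl
  set f : E → ℂ := fun y => g (x + y) with hf
  set s : Set E := (fun y => x + y) ⁻¹' V with hs
  have hso : IsOpen s := hV.preimage (by fun_prop)
  have hfs : ContDiffOn ℝ (⊤:ℕ∞) f s := by
    refine hg.comp (by fun_prop) (fun y hy => hy)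
  have hlo : IsOpen (l ⁻¹' s) := hso.preimage l.continuous
  have hφ : (fun t : ℝ => g (x + t • w)) = f ∘ l := by
    ext t; simp [hf, hl]
  have hcd : ContDiffOn ℝ (⊤:ℕ∞) (f ∘ l) (l ⁻¹' s) := hfs.comp l.contDiff.contDiffOn (fun y hy => hy)
  have hsub : Icc (0:ℝ) 1 ⊆ l ⁻¹' s := by
    intro t ht
    have := hseg t ht
    simpa [hs, hl] using this
  rw [hφ]
  refine ⟨hcd.mono hsub, fun i t ht => ?_⟩
  have hts := hsub ht
  have hat : ContDiffAt ℝ i (f ∘ l) t := (hcd.contDiffAt (hlo.mem_nhds hts)).of_le (by exact_mod_cast le_top)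
  rw [iteratedDerivWithin_eq_iteratedDeriv (uniqueDiffOn_Icc zero_lt_one) hat ht,
    ← norm_iteratedFDeriv_eq_norm_iteratedDeriv, ← iteratedFDerivWithin_of_isOpen i hlo hts,
    ContinuousLinearMap.iteratedFDerivWithin_comp_right l hfs hso.uniqueDiffOn hlo.uniqueDiffOn hts
      (i := i) (by exact_mod_cast le_top), iteratedFDerivWithin_of_isOpen i hso hts]
  refine (ContinuousMultilinearMap.norm_compContinuousLinearMap_le _ _).trans ?_
  have e : iteratedFDeriv ℝ i f (l t) = iteratedFDeriv ℝ i g (x + t • w) := by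
    rw [hf, iteratedFDeriv_comp_add_left]; simp [hl]
  rw [e]
  simp [hl]


lemma j_kk (k : ℕ) : (k:ℝ) ^ k ≤ 3 ^ k * k.factorial := by
  have h1 := Real.pow_div_factorial_le_exp (k:ℝ) (by positivity) k
  have hf : (0:ℝ) < k.factorial := by exact_mod_cast k.factorial_pos
  rw [div_le_iff₀ hf] at h1
  refine h1.trans ?_
  have : Real.exp k ≤ 3 ^ k := by
    have e : Real.exp (k:ℝ) = Real.exp 1 ^ k := by rw [← Real.exp_nat_mul, mul_one]
    rw [e]
    have := Real.exp_one_lt_d9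
    gcongr
    linarith
  gcongr

set_option maxHeartbeats 1000000 in
lemma j_part3 {E : Type*} [NormedAddCommGroup E] [NormedSpace ℝ E] (M m : ℕ → ℝ)
    (hM : ∀ k, M k = k.factorial * m k)
    (h0 : m 0 = 1) (hp : ∀ k, 0 < m k) (h1 : 1 ≤ m 1)
    (hl : ∀ k, m (k + 1) ^ 2 ≤ m k * m (k + 2)) (C : ℝ) (hC : 1 ≤ C)
    (hmg : ∀ a b, m (a + b) ≤ C ^ (a + b) * m a * m b)
    (hs : Summable fun k : ℕ => m k / (m (k + 1) * (k + 1)))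
    (j : ℕ) (hj : 1 ≤ j) (f : E → ℂ) (R : ℝ) (hR : 0 < R)
    (hg : ContDiffOn ℝ (⊤:ℕ∞) (fun x => f x ^ j) (Metric.ball 0 R))
    (hh : ContDiffOn ℝ (⊤:ℕ∞) (fun x => f x ^ (j + 1)) (Metric.ball 0 R))
    (hb : ∀ σ : ℝ, 0 < σ → ∃ A : ℝ, ∀ x ∈ Metric.ball (0:E) R, ∀ k : ℕ,
      ‖iteratedFDeriv ℝ k (fun x => f x ^ j) x‖ ≤ A * σ ^ k * M k ∧
      ‖iteratedFDeriv ℝ k (fun x => f x ^ (j + 1)) x‖ ≤ A * σ ^ k * M k) (σ' : ℝ) (hσ' : 0 < σ') :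
    ∃ B : ℝ, 0 < B ∧ ∀ k : ℕ, ∀ x ∈ Metric.ball (0:E) (R / 2), ∀ v : E, v ≠ 0 → k * ‖v‖ < R / 2 →
      ‖jfd k (fun i => f (x + (i:ℝ) • v))‖ ≤ B * σ' ^ k * M k * ‖v‖ ^ k := by
  obtain ⟨C0, hC0, hN⟩ := jN j hj
  have hL : 1 ≤ 2 * j * (j + 1) := by nlinarith
  obtain ⟨D, hD, hDa⟩ := jw_a m h0 hp h1 hl C hC hmg (2 * j * (j + 1)) hL
  set C1 := C0 + 1 with hC1
  have hC12 : 2 ≤ C1 := by linarith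
  set σ := σ' / (6 * C1 * D) with hσ
  have hσ0 : 0 < σ := by positivity
  obtain ⟨K1, hK1, hK⟩ := jw_nq m hp hl hs (6 * C1 / (R * σ')) (by positivity)
  obtain ⟨A0, hA0⟩ := hb σ hσ0
  set A := max A0 1 with hA
  have hA1 : 1 ≤ A := le_max_right _ _
  have hM0 : ∀ k, 0 < M k := fun k => by
    rw [hM]; have := hp k; have : (0:ℝ) < k.factorial := by exact_mod_cast k.factorial_pos
    positivity
  have hA' : ∀ x ∈ Metric.ball (0:E) R, ∀ k : ℕ,
      ‖iteratedFDeriv ℝ k (fun x => f x ^ j) x‖ ≤ A * σ ^ k * M k ∧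
      ‖iteratedFDeriv ℝ k (fun x => f x ^ (j + 1)) x‖ ≤ A * σ ^ k * M k := by
    intro x hx k
    have h2 : A0 * σ ^ k * M k ≤ A * σ ^ k * M k := by
      have := hM0 k
      gcongr
      exact le_max_left _ _
    exact ⟨(hA0 x hx k).1.trans h2, (hA0 x hx k).2.trans h2⟩
  have hfA : ∀ x ∈ Metric.ball (0:E) R, ‖f x‖ ≤ A := by
    intro x hx
    have h2 := (hA' x hx 0).1
    rw [norm_iteratedFDeriv_zero, hM, h0] at h2
    simp only [pow_zero, Nat.factorial_zero, Nat.cast_one, mul_one, norm_pow] at h2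
    rcases le_total ‖f x‖ 1 with h | h
    · exact h.trans hA1
    · exact (le_self_pow₀ h (by omega)).trans h2
  refine ⟨C1 * A ^ (2 * j + 2) * (K1 + D), by positivity, ?_⟩
  intro k x hx v hv hkv
  obtain ⟨a, ha1, hai, hak⟩ := hDa k
  set ρ := min (R / 2) (1 / (2 * σ * a)) with hρ
  have hρ0 : 0 < ρ := lt_min (by positivity) (by positivity)
  have hρR : ρ ≤ R / 2 := min_le_left _ _
  have hρa : ρ * (2 * σ * a) ≤ 1 := by
    rw [← le_div_iff₀ (by positivity)]; exact min_le_right _ _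
  have hv0 : 0 < ‖v‖ := norm_pos_iff.mpr hv
  set w : E := (ρ / ‖v‖) • v with hw
  have hwn : ‖w‖ = ρ := by
    rw [hw, norm_smul, Real.norm_of_nonneg (by positivity)]; field_simp
  have hxn : ‖x‖ < R / 2 := by simpa using hx
  have hseg : ∀ t ∈ Icc (0:ℝ) 1, x + t • w ∈ Metric.ball (0:E) R := by
    intro t ht
    rw [mem_ball_zero_iff]
    refine (norm_add_le _ _).trans_lt ?_
    rw [norm_smul, hwn, Real.norm_of_nonneg ht.1]
    have : t * ρ ≤ 1 * ρ := by have := ht.2; gcongr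
    linarith
  have hder : ∀ i ≤ 2 * j * (j + 1) * (k + 1), σ ^ i * M i * ρ ^ i ≤ i.factorial * (1/2) ^ i := by
    intro i hi
    have h2 := hai i hi
    have h3 : σ * a * ρ ≤ 1 / 2 := by linarith
    rw [hM]
    calc σ ^ i * (i.factorial * m i) * ρ ^ i ≤ σ ^ i * (i.factorial * a ^ i) * ρ ^ i := by gcongr
      _ = i.factorial * (σ * a * ρ) ^ i := by rw [mul_pow, mul_pow]; ring
      _ ≤ _ := by gcongr
  have htay : ∀ g : E → ℂ, ContDiffOn ℝ (⊤:ℕ∞) g (Metric.ball 0 R) →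
      (∀ y ∈ Metric.ball (0:E) R, ∀ k : ℕ, ‖iteratedFDeriv ℝ k g y‖ ≤ A * σ ^ k * M k) →
      ∃ G : Polynomial ℂ, G.natDegree < 2 * j * (j + 1) * (k + 1) ∧ (∀ i, ‖G.coeff i‖ ≤ A) ∧
      ∀ t : ℝ, 0 ≤ t → t ≤ 1 → ‖g (x + t • w) - G.eval (t:ℂ)‖ ≤ A * t ^ (2 * j * (j + 1) * (k + 1)) := by
    intro g hgc hgb
    obtain ⟨c1, c2⟩ := j_line g _ Metric.isOpen_ball hgc x w hseg
    refine j_taylor (fun t => g (x + t • w)) (2 * j * (j + 1) * (k + 1)) ?_ A (by linarith)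
      (contDiffOn_infty.mp c1 _) ?_
    · exact Nat.one_le_iff_ne_zero.mpr (Nat.mul_ne_zero (by omega) (by omega))
    · intro i hi t ht
      refine (c2 i t ht).trans ?_
      rw [hwn]
      calc _ ≤ A * σ ^ i * M i * ρ ^ i := by gcongr; exact hgb _ (hseg t ht) i
        _ = A * (σ ^ i * M i * ρ ^ i) := by ring
        _ ≤ _ := mul_le_mul_of_nonneg_left (hder i hi) (by linarith)
  obtain ⟨G, hGd, hGc, hGt⟩ := htay _ hg (fun y hy k => (hA' y hy k).1)
  obtain ⟨H, hHd, hHc, hHt⟩ := htay _ hh (fun y hy k => (hA' y hy k).2)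
  set h := ‖v‖ / ρ with hhd
  have hh0 : 0 < h := by positivity
  have hhw : ∀ i : ℕ, x + ((i:ℝ) * h) • w = x + (i:ℝ) • v := by
    intro i
    rw [hw, smul_smul, hhd]
    congr 2
    field_simp
  have hmain : ‖jfd k (fun i => f (x + (i:ℝ) • v))‖ ≤ C1 ^ (k + 1) * A ^ (2 * j + 2) * (k * h) ^ k := by
    by_cases hkh : k * h ≤ 1
    · have := hN k A G H (fun t => f (x + t • w)) hA1 hGd hHd hGc hHc
        (fun t t0 t1 => ⟨hGt t t0 t1, hHt t t0 t1, hfA _ (hseg t ⟨t0, t1⟩)⟩) h hh0 hkh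
      simp only [hhw] at this
      refine this.trans ?_
      gcongr
      linarith
    · push Not at hkh
      have h2 := jfd_le k (fun i => f (x + (i:ℝ) • v)) A (by
        intro i hi
        apply hfA
        rw [mem_ball_zero_iff]
        refine (norm_add_le _ _).trans_lt ?_
        rw [norm_smul, Real.norm_of_nonneg (by positivity)]
        have : (i:ℝ) * ‖v‖ ≤ k * ‖v‖ := by gcongr
        linarith)
      refine h2.trans ?_
      have c1 : (2:ℝ) ^ k ≤ C1 ^ (k + 1) := by
        calc (2:ℝ) ^ k ≤ C1 ^ k := by gcongr
          _ ≤ C1 ^ (k + 1) := pow_le_pow_right₀ (by linarith) (by omega)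
      have c2 : A ≤ A ^ (2 * j + 2) := le_self_pow₀ hA1 (by omega)
      have c3 : 1 ≤ (k * h) ^ k := one_le_pow₀ hkh.le
      calc 2 ^ k * A = 2 ^ k * A * 1 := by ring
        _ ≤ _ := by gcongr
  have hρk : (6 * C1 / 2) ^ k * (1 / ρ) ^ k ≤ (K1 + D) * (σ' ^ k * m k) := by
    have hmk := hp k
    rw [← mul_pow]
    have d1 : 0 ≤ K1 * (σ' ^ k * m k) := by positivity
    have d2 : 0 ≤ D * (σ' ^ k * m k) := by positivity
    rcases min_choice (R / 2) (1 / (2 * σ * a)) with e | e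
    · rw [← hρ] at e
      have : (6 * C1 / 2 * (1 / ρ)) = 6 * C1 / (R * σ') * σ' := by rw [e]; field_simp
      rw [this, mul_pow]
      calc (6 * C1 / (R * σ')) ^ k * σ' ^ k ≤ K1 * m k * σ' ^ k := by gcongr; exact hK k
        _ ≤ _ := by linarith
    · rw [← hρ] at e
      have : (6 * C1 / 2 * (1 / ρ)) = σ' / D * a := by rw [e, hσ]; field_simp
      rw [this, mul_pow]
      calc (σ' / D) ^ k * a ^ k ≤ (σ' / D) ^ k * (D ^ (k + 1) * m k) := by gcongr
        _ = D * (σ' ^ k * m k) := by rw [div_pow]; field_simp; ring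
        _ ≤ _ := by linarith
  refine hmain.trans ?_
  have e1 : (k * h) ^ k = (k:ℝ) ^ k * (‖v‖ ^ k * (1 / ρ) ^ k) := by
    rw [hhd, ← mul_pow, ← mul_pow]; congr 1; ring
  rw [e1, hM]
  have hp3 : (0:ℝ) ≤ ‖v‖ ^ k * (1 / ρ) ^ k := by positivity
  calc C1 ^ (k + 1) * A ^ (2 * j + 2) * ((k:ℝ) ^ k * (‖v‖ ^ k * (1 / ρ) ^ k))
      ≤ C1 ^ (k + 1) * A ^ (2 * j + 2) * ((3 ^ k * k.factorial) * (‖v‖ ^ k * (1 / ρ) ^ k)) := by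
        gcongr; exact j_kk k
    _ = C1 * A ^ (2 * j + 2) * k.factorial * ‖v‖ ^ k * ((6 * C1 / 2) ^ k * (1 / ρ) ^ k) := by
        rw [show 6 * C1 / 2 = 3 * C1 by ring, mul_pow 3 C1]; ring
    _ ≤ C1 * A ^ (2 * j + 2) * k.factorial * ‖v‖ ^ k * ((K1 + D) * (σ' ^ k * m k)) := by gcongr
    _ = _ := by ring


lemma j_succ_apply {E : Type*} [NormedAddCommGroup E] [NormedSpace ℝ E] (g : E → ℂ)
    (hg : ContDiff ℝ (⊤:ℕ∞) g) (n : ℕ) (x : E) (m : Fin (n + 1) → E) :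
    iteratedFDeriv ℝ (n + 1) g x m = fderiv ℝ (fun y => iteratedFDeriv ℝ n g y (Fin.tail m)) x (m 0) := by
  rw [iteratedFDeriv_succ_apply_left]
  have hd : DifferentiableAt ℝ (iteratedFDeriv ℝ n g) x :=
    (hg.differentiable_iteratedFDeriv (by exact_mod_cast WithTop.coe_lt_top n)) x
  have h1 := (ContinuousMultilinearMap.apply ℝ (fun _ : Fin n => E) ℂ (Fin.tail m)).hasFDerivAt.comp x hd.hasFDerivAt
  have h2 : fderiv ℝ (fun y => iteratedFDeriv ℝ n g y (Fin.tail m)) x = _ := h1.fderiv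
  rw [h2]
  rfl

lemma j_apply_contDiff {E : Type*} [NormedAddCommGroup E] [NormedSpace ℝ E] (g : E → ℂ)
    (hg : ContDiff ℝ (⊤:ℕ∞) g) (n : ℕ) (u : Fin n → E) :
    ContDiff ℝ (⊤:ℕ∞) (fun y => iteratedFDeriv ℝ n g y u) := by
  have h1 : ContDiff ℝ (⊤:ℕ∞) (iteratedFDeriv ℝ n g) := hg.iteratedFDeriv_right (by exact_mod_cast le_top)
  exact (ContinuousMultilinearMap.apply ℝ (fun _ : Fin n => E) ℂ u).contDiff.comp h1

lemma j_symm {E : Type*} [NormedAddCommGroup E] [NormedSpace ℝ E] (g : E → ℂ)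
    (hg : ContDiff ℝ (⊤:ℕ∞) g) (n : ℕ) : ∀ (σ : Equiv.Perm (Fin n)) (x : E) (v : Fin n → E),
    iteratedFDeriv ℝ n g x (v ∘ σ) = iteratedFDeriv ℝ n g x v := by
  induction n with
  | zero => intro σ x v; congr 1; ext i; exact i.elim0
  | succ n ih =>
    intro σ
    have hmem : σ ∈ Submonoid.closure (Set.range fun i : Fin n => Equiv.swap i.castSucc i.succ) := by
      rw [Equiv.Perm.mclosure_swap_castSucc_succ]; trivial
    induction hmem using Submonoid.closure_induction with
    | one => intro x v; rfl
    | mul a b _ _ ha hb =>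
      intro x v
      have : v ∘ (a * b) = (v ∘ a) ∘ b := rfl
      rw [this, hb, ha]
    | mem τ hτ =>
      obtain ⟨i, rfl⟩ := hτ
      intro x v
      rw [j_succ_apply g hg, j_succ_apply g hg]
      rcases Nat.eq_zero_or_pos n with rfl | hn
      · exact i.elim0
      obtain ⟨n, rfl⟩ : ∃ p, n = p + 1 := ⟨n - 1, by omega⟩
      refine Fin.cases ?_ (fun i => ?_) i
      · have e : ∀ m : Fin (n + 2) → E, ∀ y, iteratedFDeriv ℝ (n + 1) g y (Fin.tail m) =
            fderiv ℝ (fun y => iteratedFDeriv ℝ n g y (Fin.tail (Fin.tail m))) y (m 1) := by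
          intro m y; rw [j_succ_apply g hg]; rfl
        set m' := v ∘ (Equiv.swap (Fin.castSucc (0 : Fin (n+1))) (Fin.succ 0)) with hm'
        simp only [e]
        have t : Fin.tail (Fin.tail m') = Fin.tail (Fin.tail v) := by
          ext i
          simp only [Fin.tail, hm', Function.comp]
          rw [Equiv.swap_apply_of_ne_of_ne]
          · simp [Fin.ext_iff]
          · simp [Fin.ext_iff]
        have m0 : m' 0 = v 1 := by
          simp only [hm', Function.comp]
          congr 1
        have m1 : m' 1 = v 0 := by
          simp only [hm', Function.comp]
          congr 1
        rw [t, m0, m1]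
        set h : E → ℂ := fun y => iteratedFDeriv ℝ n g y (Fin.tail (Fin.tail v)) with hh
        have hc : ContDiff ℝ (⊤:ℕ∞) h := j_apply_contDiff g hg n _
        have hc1 : ContDiff ℝ (⊤:ℕ∞) (fderiv ℝ h) := hc.fderiv_right (by exact_mod_cast le_top)
        have hd : DifferentiableAt ℝ (fderiv ℝ h) x :=
          (hc1.differentiable (by simp)) x
        have k : ∀ a b : E, fderiv ℝ (fun y => fderiv ℝ h y a) x b = fderiv ℝ (fderiv ℝ h) x b a := by
          intro a b
          have := (hd.hasFDerivAt.clm_apply (hasFDerivAt_const a x)).fderiv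
          rw [this]; simp
        rw [k, k]
        have hs : IsSymmSndFDerivAt ℝ h x :=
          hc.contDiffAt.isSymmSndFDerivAt (by rw [minSmoothness_of_isRCLikeNormedField]; exact WithTop.coe_le_coe.mpr (le_top : (2:ℕ∞) ≤ ⊤))
        exact hs _ _
      · set m' := v ∘ (Equiv.swap (Fin.castSucc (Fin.succ i)) (Fin.succ (Fin.succ i))) with hm'
        have m0 : m' 0 = v 0 := by
          simp only [hm', Function.comp]
          rw [Equiv.swap_apply_of_ne_of_ne]
          · simp [Fin.ext_iff]
          · simp [Fin.ext_iff]
        have t : Fin.tail m' = (Fin.tail v) ∘ (Equiv.swap i.castSucc i.succ) := by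
          ext l
          simp only [Fin.tail, hm', Function.comp]
          congr 1
          rw [← Fin.succ_castSucc, Equiv.swap_apply_def, Equiv.swap_apply_def]
          simp only [Fin.succ_inj]
          split_ifs <;> rfl
        rw [m0, t]
        simp only [ih]

lemma j_polar_comb (k : ℕ) (r : Fin k → Fin k) :
    ∑ S : Finset (Fin k), (-1:ℂ) ^ (Sᶜ).card * (if ∀ i, r i ∈ S then 1 else 0) =
      if Function.Bijective r then 1 else 0 := by
  classical
  have h := Finset.prod_add (fun _ : Fin k => (1:ℂ)) (fun l => if l ∈ Set.range r then 0 else -1) Finset.univ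
  have e1 : ∏ l : Fin k, ((1:ℂ) + if l ∈ Set.range r then 0 else -1) =
      if Function.Bijective r then 1 else 0 := by
    split_ifs with hb
    · refine Finset.prod_eq_one fun l _ => ?_
      rw [if_pos (show l ∈ Set.range r from hb.2 l)]; ring
    · have : ¬ Function.Surjective r := fun hs => hb (Finite.surjective_iff_bijective.mp hs)
      rw [Function.Surjective] at this
      push Not at this
      obtain ⟨l, hl⟩ := this
      refine Finset.prod_eq_zero (Finset.mem_univ l) ?_
      rw [if_neg (show l ∉ Set.range r by rintro ⟨i, hi⟩; exact hl i hi)]; ring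
  rw [← e1, h, Finset.powerset_univ]
  refine Finset.sum_congr rfl fun S _ => ?_
  rw [Finset.prod_const_one, one_mul, ← Finset.compl_eq_univ_sdiff]
  split_ifs with hS
  · rw [mul_one, ← Finset.prod_const]
    refine Finset.prod_congr rfl fun l hl => ?_
    rw [if_neg]
    rintro ⟨i, rfl⟩
    exact (Finset.mem_compl.mp hl) (hS i)
  · push Not at hS
    obtain ⟨i, hi⟩ := hS
    rw [mul_zero, Finset.prod_eq_zero (Finset.mem_compl.mpr hi)]
    rw [if_pos (show r i ∈ Set.range r from ⟨i, rfl⟩)]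

lemma j_polar {E : Type*} [NormedAddCommGroup E] [NormedSpace ℝ E] (k : ℕ)
    (T : ContinuousMultilinearMap ℝ (fun _ : Fin k => E) ℂ)
    (hT : ∀ (σ : Equiv.Perm (Fin k)) (v : Fin k → E), T (v ∘ σ) = T v) (v : Fin k → E) :
    ∑ S : Finset (Fin k), (-1:ℂ) ^ (Sᶜ).card * T (fun _ => ∑ i ∈ S, v i) = k.factorial * T v := by
  classical
  have h1 : ∀ S : Finset (Fin k), T (fun _ => ∑ i ∈ S, v i) =
      ∑ r : Fin k → Fin k, (if ∀ i, r i ∈ S then 1 else 0) * T (v ∘ r) := by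
    intro S
    have := T.toMultilinearMap.map_sum_finset (fun _ i => v i) (fun _ => S)
    have h2 : T (fun _ => ∑ i ∈ S, v i) = ∑ r ∈ Fintype.piFinset (fun _ : Fin k => S), T (v ∘ r) := this
    rw [h2]
    simp only [ite_mul, one_mul, zero_mul]
    rw [← Finset.sum_filter]
    refine Finset.sum_congr ?_ (fun _ _ => rfl)
    ext r; simp [Fintype.mem_piFinset]
  simp only [h1, Finset.mul_sum]
  rw [Finset.sum_comm]
  have h3 : ∀ r : Fin k → Fin k, ∑ S : Finset (Fin k), (-1:ℂ) ^ (Sᶜ).card *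
      ((if ∀ i, r i ∈ S then 1 else 0) * T (v ∘ r)) = (if Function.Bijective r then 1 else 0) * T v := by
    intro r
    simp only [← mul_assoc]
    rw [← Finset.sum_mul, j_polar_comb]
    split_ifs with hb
    · have := hT (Equiv.ofBijective r hb) v
      simp only [one_mul]
      exact this
    · simp
  simp only [h3]
  rw [← Finset.sum_mul]
  congr 1
  rw [Finset.sum_boole]
  congr 1
  rw [← Fintype.card_subtype, Fintype.card_congr (Equiv.ofBijective
    (fun σ : Equiv.Perm (Fin k) => (⟨σ, σ.bijective⟩ : {r : Fin k → Fin k // Function.Bijective r})) ?_).symm,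
    Fintype.card_perm, Fintype.card_fin]
  constructor
  · intro a b hab
    ext i
    have := congrFun (congrArg Subtype.val hab) i
    simpa using congrArg Fin.val this
  · rintro ⟨r, hr⟩
    exact ⟨Equiv.ofBijective r hr, rfl⟩

lemma j_polar_norm {E : Type*} [NormedAddCommGroup E] [NormedSpace ℝ E] (k : ℕ)
    (T : ContinuousMultilinearMap ℝ (fun _ : Fin k => E) ℂ)
    (hT : ∀ (σ : Equiv.Perm (Fin k)) (v : Fin k → E), T (v ∘ σ) = T v) (B : ℝ) (hB : 0 ≤ B)
    (hd : ∀ v : E, ‖T (fun _ => v)‖ ≤ B * ‖v‖ ^ k) : ‖T‖ ≤ 6 ^ k * B := by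
  have hu : ∀ v : Fin k → E, (∀ i, ‖v i‖ ≤ 1) → ‖T v‖ ≤ 6 ^ k * B := by
    intro v hv
    have hf : (0:ℝ) < k.factorial := by exact_mod_cast k.factorial_pos
    have h1 : ‖(k.factorial:ℂ) * T v‖ ≤ 2 ^ k * (B * k ^ k) := by
      rw [← j_polar k T hT v]
      refine (norm_sum_le _ _).trans ?_
      have : (2:ℝ) ^ k * (B * k ^ k) = ∑ S : Finset (Fin k), B * (k:ℝ) ^ k := by
        simp [Fintype.card_finset]
      rw [this]
      refine Finset.sum_le_sum fun S _ => ?_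
      rw [norm_mul, norm_pow, norm_neg, norm_one, one_pow, one_mul]
      refine (hd _).trans ?_
      gcongr
      refine (norm_sum_le _ _).trans ?_
      calc ∑ i ∈ S, ‖v i‖ ≤ ∑ i ∈ S, (1:ℝ) := Finset.sum_le_sum fun i _ => hv i
        _ = S.card := by simp
        _ ≤ k := by
          have := Finset.card_le_univ S
          rw [Fintype.card_fin] at this
          exact_mod_cast this
    rw [norm_mul, Complex.norm_natCast] at h1
    have h2 := j_kk k
    have h3 : (k.factorial:ℝ) * ‖T v‖ ≤ k.factorial * (6 ^ k * B) := by
      refine h1.trans ?_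
      calc 2 ^ k * (B * (k:ℝ) ^ k) ≤ 2 ^ k * (B * (3 ^ k * k.factorial)) := by gcongr
        _ = k.factorial * ((2 * 3) ^ k * B) := by rw [mul_pow]; ring
        _ = _ := by norm_num
    exact le_of_mul_le_mul_left h3 hf
  refine ContinuousMultilinearMap.opNorm_le_bound (by positivity) fun v => ?_
  have e : v = fun i => ‖v i‖ • (‖v i‖⁻¹ • v i) := by
    ext i
    by_cases h : v i = 0
    · simp [h]
    · rw [smul_smul, mul_inv_cancel₀ (norm_ne_zero_iff.mpr h), one_smul]
  have h4 := hu (fun i => ‖v i‖⁻¹ • v i) (fun i => by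
    rw [norm_smul, norm_inv, norm_norm]
    exact inv_mul_le_one)
  conv_lhs => rw [e]
  rw [ContinuousMultilinearMap.map_smul_univ, norm_smul, norm_prod, mul_comm]
  simp only [norm_norm]
  gcongr


lemma j_lim_taylor {E F : Type} [NormedAddCommGroup E] [NormedSpace ℝ E]
    [NormedAddCommGroup F] [NormedSpace ℝ F] (g : E → F) (hg : ContDiff ℝ (⊤:ℕ∞) g) (r b : ℝ)
    (hb : ∀ x ∈ Metric.ball (0:E) r, ‖iteratedFDeriv ℝ 2 g x‖ ≤ b) (x v : E) (hx : x ∈ Metric.ball (0:E) r)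
    (hv : ‖x‖ + ‖v‖ < r) : ‖g (x + v) - g x - fderiv ℝ g x v‖ ≤ b * ‖v‖ * ‖v‖ := by
  have hc1 : ContDiff ℝ (⊤:ℕ∞) (fderiv ℝ g) := hg.fderiv_right (by exact_mod_cast le_top)
  have hd : ∀ y, DifferentiableAt ℝ g y := fun y => (hg.differentiable (by simp)) y
  have hd1 : ∀ y, DifferentiableAt ℝ (fderiv ℝ g) y := fun y => (hc1.differentiable (by simp)) y
  have hlip : ∀ y ∈ Metric.ball (0:E) r, ‖fderiv ℝ g y - fderiv ℝ g x‖ ≤ b * ‖y - x‖ := by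
    intro y hy
    refine Convex.norm_image_sub_le_of_norm_fderiv_le (s := Metric.ball (0:E) r) (fun z _ => hd1 z) ?_
      (convex_ball _ _) hx hy
    intro z hz
    rw [← norm_iteratedFDeriv_one, norm_iteratedFDeriv_fderiv]
    exact hb z hz
  have hb0 : 0 ≤ b := (norm_nonneg _).trans (hb x hx)
  have hsub : Metric.closedBall x ‖v‖ ⊆ Metric.ball (0:E) r := by
    intro y hy
    rw [mem_ball_zero_iff]
    have : ‖y - x‖ ≤ ‖v‖ := by simpa [dist_eq_norm] using hy
    have h2 : ‖y‖ ≤ ‖x‖ + ‖y - x‖ := by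
      calc ‖y‖ = ‖x + (y - x)‖ := by congr 1; abel
        _ ≤ _ := norm_add_le _ _
    linarith
  have := Convex.norm_image_sub_le_of_norm_fderiv_le' (s := Metric.closedBall x ‖v‖) (f := g)
    (φ := fderiv ℝ g x) (C := b * ‖v‖) (fun z _ => hd z) ?_ (convex_closedBall _ _)
    (x := x) (y := x + v) (Metric.mem_closedBall_self (norm_nonneg _)) (by simp)
  · simpa using this
  · intro y hy
    refine (hlip y (hsub hy)).trans ?_
    have : ‖y - x‖ ≤ ‖v‖ := by simpa [dist_eq_norm] using hy
    gcongr

lemma j_lim_key {E F : Type} [NormedAddCommGroup E] [NormedSpace ℝ E] [FiniteDimensional ℝ E]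
    [NormedAddCommGroup F] [NormedSpace ℝ F] [CompleteSpace F] (r : ℝ) (g : ℕ → E → F) (f : E → F) (b : ℝ)
    (hg : ∀ n, ContDiff ℝ (⊤:ℕ∞) (g n))
    (hb : ∀ n, ∀ x ∈ Metric.ball (0:E) r, ‖iteratedFDeriv ℝ 2 (g n) x‖ ≤ b)
    (hf : ∀ x ∈ Metric.ball (0:E) r, Tendsto (fun n => g n x) atTop (nhds (f x)))
    (x : E) (hx : x ∈ Metric.ball (0:E) r) :
    ∃ L : E →L[ℝ] F, HasFDerivAt f L x ∧ Tendsto (fun n => fderiv ℝ (g n) x) atTop (nhds L) := by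
  have hb0 : 0 ≤ b := (norm_nonneg _).trans (hb 0 x hx)
  have hxr : ‖x‖ < r := by simpa using hx
  have hmem : ∀ v : E, ‖x‖ + ‖v‖ < r → x + v ∈ Metric.ball (0:E) r := fun v hv => by
    rw [mem_ball_zero_iff]; exact (norm_add_le _ _).trans_lt hv
  -- pointwise Cauchy
  have hpc : ∀ v : E, ∀ ε > 0, ∃ N, ∀ p ≥ N, ∀ q ≥ N, ‖(fderiv ℝ (g p) x - fderiv ℝ (g q) x) v‖ ≤ ε := by
    intro v ε hε
    obtain ⟨s, hs0, hs1, hs2⟩ : ∃ s : ℝ, 0 < s ∧ ‖x‖ + s * ‖v‖ < r ∧ 2 * b * ‖v‖ ^ 2 * s ≤ ε / 2 := by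
      have h1 : ∀ᶠ s : ℝ in nhdsWithin 0 (Ioi 0), ‖x‖ + s * ‖v‖ < r := by
        apply eventually_nhdsWithin_of_eventually_nhds
        have : ContinuousAt (fun s : ℝ => ‖x‖ + s * ‖v‖) 0 := by fun_prop
        exact this.eventually_lt continuousAt_const (by simpa using hxr)
      have h2 : ∀ᶠ s : ℝ in nhdsWithin 0 (Ioi 0), 2 * b * ‖v‖ ^ 2 * s < ε / 2 := by
        apply eventually_nhdsWithin_of_eventually_nhds
        have : ContinuousAt (fun s : ℝ => 2 * b * ‖v‖ ^ 2 * s) 0 := by fun_prop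
        exact this.eventually_lt continuousAt_const (by simpa using hε)
      obtain ⟨s, ⟨a1, a2⟩, a3⟩ := ((h1.and h2).and self_mem_nhdsWithin).exists
      exact ⟨s, a3, a1, a2.le⟩
    have hsv : ‖x‖ + ‖s • v‖ < r := by rw [norm_smul, Real.norm_of_nonneg hs0.le]; exact hs1
    have c1 := (hf _ (hmem _ hsv)).cauchySeq
    have c2 := (hf _ hx).cauchySeq
    rw [Metric.cauchySeq_iff] at c1 c2
    obtain ⟨N1, hN1⟩ := c1 (s * ε / 4) (by positivity)
    obtain ⟨N2, hN2⟩ := c2 (s * ε / 4) (by positivity)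
    refine ⟨max N1 N2, fun p hp q hq => ?_⟩
    have d1 := hN1 p (le_of_max_le_left hp) q (le_of_max_le_left hq)
    have d2 := hN2 p (le_of_max_le_right hp) q (le_of_max_le_right hq)
    rw [dist_eq_norm] at d1 d2
    have t1 := j_lim_taylor (g p) (hg p) r b (hb p) x (s • v) hx hsv
    have t2 := j_lim_taylor (g q) (hg q) r b (hb q) x (s • v) hx hsv
    have e : s • ((fderiv ℝ (g p) x - fderiv ℝ (g q) x) v) =
        ((g p (x + s • v) - g q (x + s • v)) - (g p x - g q x))
        - ((g p (x + s • v) - g p x - fderiv ℝ (g p) x (s • v))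
          - (g q (x + s • v) - g q x - fderiv ℝ (g q) x (s • v))) := by
      rw [sub_apply, map_smul, map_smul, smul_sub]; abel
    have h3 : ‖s • ((fderiv ℝ (g p) x - fderiv ℝ (g q) x) v)‖ ≤ s * ε := by
      rw [e]
      refine (norm_sub_le _ _).trans ?_
      have n1 := norm_sub_le (g p (x + s • v) - g q (x + s • v)) (g p x - g q x)
      have n2 := norm_sub_le (g p (x + s • v) - g p x - fderiv ℝ (g p) x (s • v))
        (g q (x + s • v) - g q x - fderiv ℝ (g q) x (s • v))
      rw [norm_smul, Real.norm_of_nonneg hs0.le] at t1 t2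
      have h4 : 2 * (b * (s * ‖v‖) * (s * ‖v‖)) ≤ s * (ε / 2) := by
        calc 2 * (b * (s * ‖v‖) * (s * ‖v‖)) = s * (2 * b * ‖v‖ ^ 2 * s) := by ring
          _ ≤ _ := by gcongr
      linarith
    rw [norm_smul, Real.norm_of_nonneg hs0.le] at h3
    exact le_of_mul_le_mul_left h3 hs0
  have hcs : CauchySeq (fun n => fderiv ℝ (g n) x) := by
    obtain ⟨C, hC, hCb⟩ := (Module.finBasis ℝ E).exists_opNorm_le (F := F)
    rw [Metric.cauchySeq_iff]
    intro ε hε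
    have : ∀ i, ∃ N, ∀ p ≥ N, ∀ q ≥ N,
        ‖(fderiv ℝ (g p) x - fderiv ℝ (g q) x) (Module.finBasis ℝ E i)‖ ≤ ε / (2 * C) :=
      fun i => hpc _ _ (by positivity)
    choose N hN using this
    refine ⟨Finset.univ.sup N, fun p hp q hq => ?_⟩
    rw [dist_eq_norm]
    have := hCb (u := fderiv ℝ (g p) x - fderiv ℝ (g q) x) (M := ε / (2 * C)) (by positivity)
      (fun i => hN i p ((Finset.le_sup (Finset.mem_univ i)).trans hp) q
        ((Finset.le_sup (Finset.mem_univ i)).trans hq))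
    refine this.trans_lt ?_
    have : C * (ε / (2 * C)) = ε / 2 := by field_simp
    rw [this]; linarith
  obtain ⟨L, hL⟩ := cauchySeq_tendsto_of_complete hcs
  refine ⟨L, ?_, hL⟩
  have hlim : ∀ v : E, ‖x‖ + ‖v‖ < r → ‖f (x + v) - f x - L v‖ ≤ b * ‖v‖ * ‖v‖ := by
    intro v hv
    have h1 : Tendsto (fun n => ‖g n (x + v) - g n x - fderiv ℝ (g n) x v‖) atTop
        (nhds ‖f (x + v) - f x - L v‖) := by
      have hLv : Tendsto (fun n => fderiv ℝ (g n) x v) atTop (nhds (L v)) :=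
        ((ContinuousLinearMap.apply ℝ F v).continuous.tendsto L).comp hL
      exact (((hf _ (hmem v hv)).sub (hf _ hx)).sub hLv).norm
    exact le_of_tendsto' h1 (fun n => j_lim_taylor (g n) (hg n) r b (hb n) x v hx hv)
  rw [hasFDerivAt_iff_isLittleO_nhds_zero]
  have hO : (fun v : E => f (x + v) - f x - L v) =O[nhds 0] fun v => ‖v‖ * ‖v‖ := by
    refine IsBigO.of_bound b ?_
    have : ∀ᶠ v : E in nhds 0, ‖x‖ + ‖v‖ < r := by
      have : ContinuousAt (fun v : E => ‖x‖ + ‖v‖) 0 := by fun_prop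
      exact this.eventually_lt continuousAt_const (by simpa using hxr)
    filter_upwards [this] with v hv
    refine (hlim v hv).trans (le_of_eq ?_)
    rw [norm_mul, norm_norm]; ring
  refine hO.trans_isLittleO ?_
  have h2 : (fun v : E => ‖v‖ * ‖v‖) =o[nhds 0] fun v : E => (1:ℝ) * ‖v‖ := by
    refine IsLittleO.mul_isBigO ?_ (isBigO_refl _ _)
    rw [isLittleO_one_iff]
    simpa using (continuous_norm.tendsto (0:E))
  have h3 : (fun v : E => ‖v‖ * ‖v‖) =o[nhds 0] fun v : E => ‖v‖ := by simpa only [one_mul] using h2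
  exact h3.of_norm_right

lemma j_limit {E : Type} [NormedAddCommGroup E] [NormedSpace ℝ E] [FiniteDimensional ℝ E] (r : ℝ) (k : ℕ) :
    ∀ (F : Type) [NormedAddCommGroup F] [NormedSpace ℝ F] [CompleteSpace F] (g : ℕ → E → F) (f : E → F) (B : ℕ → ℝ),
    (∀ n, ContDiff ℝ (⊤:ℕ∞) (g n)) →
    (∀ n i, ∀ x ∈ Metric.ball (0:E) r, ‖iteratedFDeriv ℝ i (g n) x‖ ≤ B i) →
    (∀ x ∈ Metric.ball (0:E) r, Tendsto (fun n => g n x) atTop (nhds (f x))) →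
    ContDiffOn ℝ k f (Metric.ball 0 r) ∧
      ∀ x ∈ Metric.ball (0:E) r, ‖iteratedFDerivWithin ℝ k f (Metric.ball 0 r) x‖ ≤ B k := by
  have hud : UniqueDiffOn ℝ (Metric.ball (0:E) r) := Metric.isOpen_ball.uniqueDiffOn
  induction k with
  | zero =>
    intro F _ _ _ g f B hg hb hf
    constructor
    · rw [Nat.cast_zero, contDiffOn_zero]
      intro x hx
      obtain ⟨L, hL, _⟩ := j_lim_key r g f (B 2) hg (fun n => hb n 2) hf x hx
      exact hL.continuousAt.continuousWithinAt
    · intro x hx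
      rw [norm_iteratedFDerivWithin_zero]
      refine le_of_tendsto' (hf x hx).norm fun n => ?_
      have := hb n 0 x hx
      rwa [norm_iteratedFDeriv_zero] at this
  | succ k ih =>
    intro F _ _ _ g f B hg hb hf
    have hex : ∀ x : E, ∃ L : E →L[ℝ] F, x ∈ Metric.ball (0:E) r → (HasFDerivAt f L x ∧
        Tendsto (fun n => fderiv ℝ (g n) x) atTop (nhds L)) := by
      intro x
      by_cases hx : x ∈ Metric.ball (0:E) r
      · obtain ⟨L, hL⟩ := j_lim_key r g f (B 2) hg (fun n => hb n 2) hf x hx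
        exact ⟨L, fun _ => hL⟩
      · exact ⟨0, fun h => absurd h hx⟩
    choose L hL using hex
    have hfd : ∀ x ∈ Metric.ball (0:E) r, fderivWithin ℝ f (Metric.ball 0 r) x = L x := by
      intro x hx
      rw [fderivWithin_of_isOpen Metric.isOpen_ball hx, (hL x hx).1.fderiv]
    obtain ⟨i1, i2⟩ := ih (E →L[ℝ] F) (fun n => fderiv ℝ (g n)) (fderivWithin ℝ f (Metric.ball 0 r)) (fun i => B (i + 1))
      (fun n => (hg n).fderiv_right (by exact_mod_cast le_top))
      (fun n i x hx => by rw [norm_iteratedFDeriv_fderiv]; exact hb n (i + 1) x hx)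
      (fun x hx => by rw [hfd x hx]; exact (hL x hx).2)
    constructor
    · rw [Nat.cast_succ, contDiffOn_succ_iff_fderivWithin hud]
      exact ⟨fun x hx => (hL x hx).1.differentiableAt.differentiableWithinAt, by simp, i1⟩
    · intro x hx
      rw [← norm_iteratedFDerivWithin_fderivWithin hud hx]
      exact i2 x hx


lemma j_line_eq {E : Type*} [NormedAddCommGroup E] [NormedSpace ℝ E] (g : E → ℂ)
    (hg : ContDiff ℝ (⊤:ℕ∞) g) (x w : E) (i : ℕ) :
    iteratedDerivWithin i (fun t : ℝ => g (x + t • w)) (Icc 0 1) 0 =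
      iteratedFDeriv ℝ i g x (fun _ => w) := by
  set l : ℝ →L[ℝ] E := ContinuousLinearMap.toSpanSingleton ℝ w with hl
  set f : E → ℂ := fun y => g (x + y) with hf
  have hfs : ContDiff ℝ (⊤:ℕ∞) f := hg.comp (by fun_prop)
  have hφ : (fun t : ℝ => g (x + t • w)) = f ∘ l := by
    ext t; simp [hf, hl]
  have hcd : ContDiff ℝ (⊤:ℕ∞) (f ∘ l) := hfs.comp l.contDiff
  rw [hφ, iteratedDerivWithin_eq_iteratedDeriv (uniqueDiffOn_Icc zero_lt_one)
    (hcd.contDiffAt.of_le (by exact_mod_cast le_top)) (by simp), iteratedDeriv_eq_iteratedFDeriv,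
    ContinuousLinearMap.iteratedFDeriv_comp_right l hfs _ (i := i) (by exact_mod_cast le_top)]
  have e : iteratedFDeriv ℝ i f (l 0) = iteratedFDeriv ℝ i g x := by
    rw [hf, iteratedFDeriv_comp_add_left]; simp
  rw [e]
  simp [hl]

lemma j_fd_diag {E : Type*} [NormedAddCommGroup E] [NormedSpace ℝ E] (g : E → ℂ)
    (hg : ContDiff ℝ (⊤:ℕ∞) g) (x v : E) (k : ℕ) (B : ℝ)
    (h : ∀ᶠ s : ℝ in nhdsWithin 0 (Ioi 0),
      ‖jfd k (fun i => g (x + (i:ℝ) • (s • v)))‖ ≤ B * ‖s • v‖ ^ k) :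
    ‖iteratedFDeriv ℝ k g x (fun _ => v)‖ ≤ B * ‖v‖ ^ k := by
  set φ : ℝ → ℂ := fun t => g (x + t • v) with hφ
  have hφc : ContDiff ℝ (⊤:ℕ∞) φ := hg.comp (by fun_prop)
  obtain ⟨C, hC⟩ := exists_taylor_mean_remainder_bound (f := φ) (n := k) zero_le_one
    ((hφc.of_le (by exact_mod_cast le_top)).contDiffOn)
  set D : ℕ → ℂ := fun m => iteratedDerivWithin m φ (Icc 0 1) 0 with hD
  rw [← j_line_eq g hg x v k]
  change ‖D k‖ ≤ _
  have hsm : ∀ᶠ s : ℝ in nhdsWithin 0 (Ioi 0), s * k ≤ 1 := by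
    apply eventually_nhdsWithin_of_eventually_nhds
    have : ContinuousAt (fun s : ℝ => s * k) 0 := by fun_prop
    filter_upwards [this.eventually_lt (continuousAt_const (y := (1:ℝ))) (by simp)] with s hs using hs.le
  have key : ∀ᶠ s : ℝ in nhdsWithin 0 (Ioi 0), ‖D k‖ ≤ B * ‖v‖ ^ k + 2 ^ k * |C| * k ^ (k + 1) * s := by
    filter_upwards [h, hsm, self_mem_nhdsWithin] with s h1 h2 h3
    have hs : 0 < s := h3
    set P : ℕ → ℂ := fun i => taylorWithinEval φ k (Icc 0 1) 0 (i * s) with hP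
    have hPe : jfd k P = (s:ℂ) ^ k * D k := by
      have e1 : P = fun i : ℕ => ∑ m ∈ Finset.range (k + 1), ((m.factorial:ℂ)⁻¹ * (s:ℂ)^m * D m) * (i:ℂ) ^ m := by
        ext i
        simp only [hP, taylor_within_apply]
        refine Finset.sum_congr rfl fun m _ => ?_
        rw [Complex.real_smul]
        push_cast
        rw [sub_zero, mul_pow]
        ring
      rw [e1, jfd_sum, Finset.sum_range_succ, Finset.sum_eq_zero, zero_add, jfd_mul, jfd_pow_eq]
      · have : (k.factorial:ℂ) ≠ 0 := by exact_mod_cast k.factorial_ne_zero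
        field_simp
      · intro m hm
        rw [jfd_mul, jfd_pow_lt k m (by simpa using hm), mul_zero]
    have hsub := jfd_sub k (fun i => φ (i * s)) P
    have hle := jfd_le k (fun i => φ (i * s) - P i) (|C| * (k * s) ^ (k + 1)) (by
      intro i hi
      have hi' : (i:ℝ) ≤ k := by exact_mod_cast hi
      have hmem : (i:ℝ) * s ∈ Icc (0:ℝ) 1 := ⟨by positivity, by nlinarith⟩
      have := hC _ hmem
      refine this.trans ?_
      rw [sub_zero]
      have : C ≤ |C| := le_abs_self C
      gcongr)
    rw [hsub, hPe] at hle
    have e2 : (fun i : ℕ => g (x + (i:ℝ) • (s • v))) = fun i : ℕ => φ (i * s) := by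
      ext i; simp [hφ, smul_smul]
    rw [e2, norm_smul, Real.norm_of_nonneg hs.le] at h1
    have h4 : ‖(s:ℂ) ^ k * D k‖ ≤ B * (s * ‖v‖) ^ k + 2 ^ k * (|C| * (k * s) ^ (k + 1)) := by
      have := norm_le_norm_add_norm_sub (jfd k fun i : ℕ => φ (i * s)) ((s:ℂ) ^ k * D k)
      linarith
    rw [norm_mul, norm_pow, Complex.norm_real, Real.norm_of_nonneg hs.le] at h4
    have hsk : 0 < s ^ k := by positivity
    refine le_of_mul_le_mul_left (h4.trans (le_of_eq ?_)) hsk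
    ring
  have ht : Tendsto (fun s : ℝ => B * ‖v‖ ^ k + 2 ^ k * |C| * k ^ (k + 1) * s) (nhdsWithin 0 (Ioi 0))
      (nhds (B * ‖v‖ ^ k)) := by
    apply tendsto_nhdsWithin_of_tendsto_nhds
    have : Continuous (fun s : ℝ => B * ‖v‖ ^ k + 2 ^ k * |C| * k ^ (k + 1) * s) := by fun_prop
    simpa using this.tendsto 0
  exact ge_of_tendsto ht key

lemma j_fd_norm {E : Type*} [NormedAddCommGroup E] [NormedSpace ℝ E] (g : E → ℂ)
    (hg : ContDiff ℝ (⊤:ℕ∞) g) (x : E) (k : ℕ) (B δ : ℝ) (hB : 0 ≤ B) (hδ : 0 < δ)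
    (h : ∀ v : E, k * ‖v‖ < δ → ‖jfd k (fun i => g (x + (i:ℝ) • v))‖ ≤ B * ‖v‖ ^ k) :
    ‖iteratedFDeriv ℝ k g x‖ ≤ 6 ^ k * B := by
  refine j_polar_norm k _ (fun σ v => j_symm g hg k σ x v) B hB fun v => ?_
  refine j_fd_diag g hg x v k B ?_
  apply eventually_nhdsWithin_of_eventually_nhds
  have : ContinuousAt (fun s : ℝ => k * ‖s • v‖) 0 := by fun_prop
  filter_upwards [this.eventually_lt (continuousAt_const (y := δ)) (by simpa using hδ)] with s hs
  exact h _ hs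


lemma j_conv_fd {E : Type} [NormedAddCommGroup E] [NormedSpace ℝ E] [FiniteDimensional ℝ E]
    [MeasurableSpace E] [BorelSpace E] (μ : Measure E) [μ.IsAddHaarMeasure]
    (f F : E → ℂ) (R : ℝ) (hR : 0 < R) (hF : ∀ x ∈ Metric.ball (0:E) R, F x = f x)
    (hFi : LocallyIntegrable F μ) (φ : ContDiffBump (0:E)) (hφ : φ.rOut ≤ R / 4) (k : ℕ) (B : ℝ)
    (h : ∀ x ∈ Metric.ball (0:E) R, ∀ v : E, k * ‖v‖ < R →
      ‖jfd k (fun i => f (x + (i:ℝ) • v))‖ ≤ B * ‖v‖ ^ k)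
    (x : E) (hx : x ∈ Metric.ball (0:E) (R / 2)) (v : E) (hv : k * ‖v‖ < R / 4) :
    ‖jfd k (fun i => convolution (φ.normed μ) F (ContinuousLinearMap.lsmul ℝ ℝ) μ (x + (i:ℝ) • v))‖
      ≤ B * ‖v‖ ^ k := by
  have hx' : ‖x‖ < R / 2 := by simpa using hx
  have hex : ConvolutionExists (φ.normed μ) F (ContinuousLinearMap.lsmul ℝ ℝ) μ :=
    φ.hasCompactSupport_normed.convolutionExists_left _ φ.continuous_normed hFi
  have e : jfd k (fun i => convolution (φ.normed μ) F (ContinuousLinearMap.lsmul ℝ ℝ) μ (x + (i:ℝ) • v)) =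
      ∫ t, (φ.normed μ t : ℝ) • jfd k (fun i => F (x + (i:ℝ) • v - t)) ∂μ := by
    unfold jfd
    have e1 : ∀ i ∈ Finset.range (k + 1), ((-1 : ℂ) ^ (k - i) * (k.choose i : ℂ)) *
        convolution (φ.normed μ) F (ContinuousLinearMap.lsmul ℝ ℝ) μ (x + (i:ℝ) • v) =
        ∫ t, ((-1 : ℂ) ^ (k - i) * (k.choose i : ℂ)) * (φ.normed μ t • F (x + (i:ℝ) • v - t)) ∂μ := by
      intro i _
      rw [integral_const_mul]
      rfl
    rw [Finset.sum_congr rfl e1, ← integral_finsetSum]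
    · congr 1
      ext t
      rw [Finset.smul_sum]
      refine Finset.sum_congr rfl fun i _ => ?_
      rw [mul_smul_comm]
    · intro i _
      exact (hex (x + (i:ℝ) • v)).const_mul _
  rw [e]
  have hIntg : ∫ t, φ.normed μ t * (B * ‖v‖ ^ k) ∂μ = B * ‖v‖ ^ k := by
    rw [integral_mul_const, φ.integral_normed, one_mul]
  rw [← hIntg]
  refine norm_integral_le_of_norm_le (φ.integrable_normed.mul_const _) (ae_of_all _ fun t => ?_)
  rw [norm_smul, Real.norm_of_nonneg (φ.nonneg_normed t)]
  by_cases ht : t ∈ Metric.ball (0:E) φ.rOut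
  · refine mul_le_mul_of_nonneg_left ?_ (φ.nonneg_normed t)
    have ht' : ‖t‖ < R / 4 := by
      have : ‖t‖ < φ.rOut := by simpa using ht
      linarith
    have hxt : ‖x - t‖ < 3 * R / 4 := (norm_sub_le _ _).trans_lt (by linarith)
    have e2 : jfd k (fun i => F (x + (i:ℝ) • v - t)) = jfd k (fun i => f (x - t + (i:ℝ) • v)) := by
      refine jfd_congr k fun i hi => ?_
      have e3 : x + (i:ℝ) • v - t = x - t + (i:ℝ) • v := by abel
      rw [e3, hF]
      rw [mem_ball_zero_iff]
      have hi' : (i:ℝ) ≤ k := by exact_mod_cast hi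
      have : ‖(i:ℝ) • v‖ ≤ k * ‖v‖ := by
        rw [norm_smul, Real.norm_of_nonneg (by positivity)]; gcongr
      refine (norm_add_le _ _).trans_lt ?_
      linarith
    rw [e2]
    exact h _ (by rw [mem_ball_zero_iff]; linarith) v (by linarith)
  · have : φ.normed μ t = 0 := by
      rw [← Function.notMem_support, φ.support_normed_eq]; exact ht
    rw [this]; simp

lemma j_moll {E : Type} [NormedAddCommGroup E] [NormedSpace ℝ E] [FiniteDimensional ℝ E]
    [MeasurableSpace E] [BorelSpace E] (μ : Measure E) [μ.IsAddHaarMeasure]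
    (f : E → ℂ) (R : ℝ) (hR : 0 < R) (B : ℕ → ℝ) (hB : ∀ k, 0 ≤ B k)
    (h : ∀ k : ℕ, ∀ x ∈ Metric.ball (0:E) R, ∀ v : E, k * ‖v‖ < R →
      ‖jfd k (fun i => f (x + (i:ℝ) • v))‖ ≤ B k * ‖v‖ ^ k) (k : ℕ) :
    ContDiffOn ℝ k f (Metric.ball 0 (R / 2)) ∧
      ∀ x ∈ Metric.ball (0:E) (R / 2), ‖iteratedFDerivWithin ℝ k f (Metric.ball 0 (R / 2)) x‖ ≤ 6 ^ k * B k := by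
  have hb0 : ∀ x ∈ Metric.ball (0:E) R, ‖f x‖ ≤ B 0 := by
    intro x hx
    have := h 0 x hx 0 (by simpa using hR)
    simpa [jfd] using this
  have hcont : ∀ x ∈ Metric.ball (0:E) R, ContinuousAt f x := by
    intro x hx
    have hxb := Metric.isOpen_ball.mem_nhds hx
    have h1 : ∀ᶠ y in nhds x, ‖f y - f x‖ ≤ B 1 * ‖y - x‖ := by
      have : ContinuousAt (fun y : E => ‖y - x‖) x := by fun_prop
      filter_upwards [this.eventually_lt (continuousAt_const (y := R)) (by simpa using hR)] with y hy
      have := h 1 x hx (y - x) (by simpa using hy)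
      have e : jfd 1 (fun i => f (x + (i:ℝ) • (y - x))) = f y - f x := by
        simp [jfd, Finset.sum_range_succ]; ring
      rwa [e, pow_one] at this
    have h2 : Tendsto (fun y => B 1 * ‖y - x‖) (nhds x) (nhds 0) := by
      have : Continuous (fun y : E => B 1 * ‖y - x‖) := by fun_prop
      simpa using this.tendsto x
    exact tendsto_iff_norm_sub_tendsto_zero.mpr (squeeze_zero' (Eventually.of_forall fun _ => norm_nonneg _) h1 h2)
  set F : E → ℂ := (Metric.ball (0:E) R).indicator f with hFdef
  have hF : ∀ x ∈ Metric.ball (0:E) R, F x = f x := fun x hx => indicator_of_mem hx f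
  have hFi : Integrable F μ := by
    rw [hFdef, integrable_indicator_iff measurableSet_ball]
    have hco : ContinuousOn f (Metric.ball 0 R) := fun x hx => (hcont x hx).continuousWithinAt
    refine IntegrableOn.of_bound measure_ball_lt_top
      (hco.aestronglyMeasurable measurableSet_ball) (B 0) ?_
    filter_upwards [ae_restrict_mem measurableSet_ball] with x hx using hb0 x hx
  set φ : ℕ → ContDiffBump (0:E) := fun n =>
    { rIn := R / 8 * (1 / ((n:ℝ) + 1)), rOut := R / 4 * (1 / ((n:ℝ) + 1)), rIn_pos := by positivity,
      rIn_lt_rOut := by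
        have : 0 < 1 / ((n:ℝ) + 1) := by positivity
        nlinarith } with hφ
  have hφo : ∀ n, (φ n).rOut ≤ R / 4 := by
    intro n
    change R / 4 * (1 / ((n:ℝ) + 1)) ≤ R / 4
    have : 1 / ((n:ℝ) + 1) ≤ 1 := by
      rw [div_le_one (by positivity)]; linarith [(Nat.cast_nonneg n : (0:ℝ) ≤ n)]
    nlinarith
  have hφt : Tendsto (fun n => (φ n).rOut) atTop (nhds 0) := by
    have := (tendsto_one_div_add_atTop_nhds_zero_nat (𝕜 := ℝ)).const_mul (R / 4)
    rw [mul_zero] at this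
    exact this
  set g : ℕ → E → ℂ := fun n => convolution ((φ n).normed μ) F (ContinuousLinearMap.lsmul ℝ ℝ) μ with hg
  have hgc : ∀ n, ContDiff ℝ (⊤:ℕ∞) (g n) := fun n =>
    (φ n).hasCompactSupport_normed.contDiff_convolution_left _ (φ n).contDiff_normed hFi.locallyIntegrable
  refine j_limit (R / 2) k ℂ g f (fun k => 6 ^ k * B k) hgc ?_ ?_
  · intro n i x hx
    exact j_fd_norm (g n) (hgc n) x i (B i) (R / 4) (hB i) (by positivity) fun v hv =>
      j_conv_fd μ f F R hR hF hFi.locallyIntegrable (φ n) (hφo n) i (B i) (h i) x hx v hv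
  · intro x hx
    have hxR : x ∈ Metric.ball (0:E) R := Metric.ball_subset_ball (by linarith) hx
    refine ContDiffBump.convolution_tendsto_right hφt (Eventually.of_forall fun _ => hFi.aestronglyMeasurable)
      (g := fun _ => F) (k := fun _ => x) (x₀ := x) ?_ tendsto_const_nhds
    have h1 : Tendsto F (nhds x) (nhds (f x)) := by
      refine (hcont x hxR).tendsto.congr' ?_
      filter_upwards [Metric.isOpen_ball.mem_nhds hxR] with y hy using (hF y hy).symm
    exact h1.comp tendsto_snd

/-- the ring of germs at `0 ∈ ℝ^d` of `E^{(M)}`-functions has property (D)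
for a non-quasianalytic weight sequence `M` of moderate growth with `m` log-convex. -/
theorem statement4 (d : ℕ) (hd : 1 ≤ d) (M : ℕ → ℝ)
    (hM : IsWeightSeq M) (hnq : NonQuasianalytic M) (hmg : ModerateGrowth M)
    (hmlc : LogConvexSeq (mseq M))
    (f : EuclideanSpace ℝ (Fin d) → ℂ) (j : ℕ) (hj : 1 ≤ j)
    (h1 : ∃ U : Set (EuclideanSpace ℝ (Fin d)), IsOpen U ∧ 0 ∈ U ∧ BeurlingOn M (f ^ j) U)
    (h2 : ∃ U : Set (EuclideanSpace ℝ (Fin d)), IsOpen U ∧ 0 ∈ U ∧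
      BeurlingOn M (f ^ (j + 1)) U) :
    ∃ U : Set (EuclideanSpace ℝ (Fin d)), IsOpen U ∧ 0 ∈ U ∧ BeurlingOn M f U := by
  obtain ⟨hM0, hMp, hM1, -, -⟩ := hM
  obtain ⟨C0, hC0, hCm⟩ := hmg
  obtain ⟨U1, hU1, h01, hB1c, hB1⟩ := h1
  obtain ⟨U2, hU2, h02, hB2c, hB2⟩ := h2
  have hfp : ∀ k : ℕ, (0:ℝ) < k.factorial := fun k => by exact_mod_cast k.factorial_pos
  obtain ⟨R, hR, hRs⟩ : ∃ R > 0, Metric.closedBall (0 : EuclideanSpace ℝ (Fin d)) R ⊆ U1 ∩ U2 :=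
    Metric.nhds_basis_closedBall.mem_iff.mp ((hU1.inter hU2).mem_nhds ⟨h01, h02⟩)
  have hsubc : closure (Metric.ball (0 : EuclideanSpace ℝ (Fin d)) R) ⊆ Metric.closedBall 0 R :=
    Metric.closure_ball_subset_closedBall
  have hcomp : IsCompact (closure (Metric.ball (0 : EuclideanSpace ℝ (Fin d)) R)) :=
    (isCompact_closedBall _ _).of_isClosed_subset isClosed_closure hsubc
  have hsub1 : Metric.ball (0 : EuclideanSpace ℝ (Fin d)) R ⊆ U1 := fun x hx =>
    (hRs (hsubc (subset_closure hx))).1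
  have hsub2 : Metric.ball (0 : EuclideanSpace ℝ (Fin d)) R ⊆ U2 := fun x hx =>
    (hRs (hsubc (subset_closure hx))).2
  have hb : ∀ σ : ℝ, 0 < σ → ∃ A : ℝ, ∀ x ∈ Metric.ball (0 : EuclideanSpace ℝ (Fin d)) R, ∀ k : ℕ,
      ‖iteratedFDeriv ℝ k (fun x => f x ^ j) x‖ ≤ A * σ ^ k * M k ∧
      ‖iteratedFDeriv ℝ k (fun x => f x ^ (j + 1)) x‖ ≤ A * σ ^ k * M k := by
    intro σ hσ
    obtain ⟨A1, -, hA1⟩ := hB1 _ Metric.isOpen_ball hcomp (fun x hx => (hRs (hsubc hx)).1) σ hσ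
    obtain ⟨A2, -, hA2⟩ := hB2 _ Metric.isOpen_ball hcomp (fun x hx => (hRs (hsubc hx)).2) σ hσ
    refine ⟨max A1 A2, fun x hx k => ⟨?_, ?_⟩⟩
    · have := hA1 x hx k
      rw [iteratedFDerivWithin_of_isOpen k hU1 (hsub1 hx)] at this
      have h0 := hMp k
      exact this.trans (by gcongr; exact le_max_left _ _)
    · have := hA2 x hx k
      rw [iteratedFDerivWithin_of_isOpen k hU2 (hsub2 hx)] at this
      have h0 := hMp k
      exact this.trans (by gcongr; exact le_max_right _ _)
  have hmM : ∀ k, M k = k.factorial * mseq M k := fun k => by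
    have := (hfp k).ne'
    rw [mseq]; field_simp
  have hmp : ∀ k, 0 < mseq M k := fun k => div_pos (hMp k) (hfp k)
  have key := j_part3 M (mseq M) hmM (by simp [mseq, hM0]) hmp (by simpa [mseq] using hM1)
    (fun k => hmlc (k + 1) (by omega)) (max C0 1) (le_max_right _ _)
    (by
      intro a b
      have h3 := hCm a b
      rw [hmM (a + b), hmM a, hmM b] at h3
      have hab : (a.factorial : ℝ) * b.factorial ≤ (a + b).factorial := by
        exact_mod_cast Nat.le_of_dvd (Nat.factorial_pos _) (Nat.factorial_mul_factorial_dvd_factorial_add a b)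
      have hma := hmp a
      have hmb := hmp b
      refine le_of_mul_le_mul_left (h3.trans ?_) (hfp (a + b))
      calc C0 ^ (a + b) * (a.factorial * mseq M a) * (b.factorial * mseq M b)
          = (a.factorial * b.factorial) * (C0 ^ (a + b) * mseq M a * mseq M b) := by ring
        _ ≤ (a + b).factorial * (max C0 1 ^ (a + b) * mseq M a * mseq M b) := by
          gcongr
          exact le_max_left _ _)
    (by
      refine hnq.congr fun k => ?_
      have := (hfp k).ne'
      have := (hmp (k + 1)).ne'
      rw [hmM k, hmM (k + 1), Nat.factorial_succ]
      push_cast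
      field_simp)
    j hj f R hR (hB1c.mono hsub1) (hB2c.mono hsub2) hb
  obtain ⟨v0, hv0⟩ : ∃ v0 : EuclideanSpace ℝ (Fin d), v0 ≠ 0 := by
    haveI : Nonempty (Fin d) := ⟨⟨0, hd⟩⟩
    exact exists_ne 0
  have key2 : ∀ σ' : ℝ, 0 < σ' → ∃ B : ℝ, 0 < B ∧ ∀ k : ℕ,
      ContDiffOn ℝ k f (Metric.ball 0 (R / 2 / 2)) ∧ ∀ x ∈ Metric.ball (0 : EuclideanSpace ℝ (Fin d)) (R / 2 / 2),
        ‖iteratedFDerivWithin ℝ k f (Metric.ball 0 (R / 2 / 2)) x‖ ≤ 6 ^ k * (B * σ' ^ k * M k) := by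
    intro σ' hσ'
    obtain ⟨B, hB, hBk⟩ := key σ' hσ'
    refine ⟨B, hB, fun k => j_moll volume f (R / 2) (by positivity) (fun k => B * σ' ^ k * M k)
      (fun k => by have := hMp k; positivity) ?_ k⟩
    intro k x hx v hv
    by_cases hv1 : v = 0
    · rcases Nat.eq_zero_or_pos k with rfl | hk
      · have := hBk 0 x hx v0 hv0 (by simpa using hR)
        simpa [jfd] using this
      · have e : jfd k (fun i => f (x + (i:ℝ) • v)) = 0 := by
          have h4 := jfd_mul k (f x) (fun i => (i:ℂ) ^ 0)
          rw [jfd_pow_lt k 0 hk, mul_zero] at h4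
          simpa [hv1] using h4
        have := hMp k
        rw [e, norm_zero]; positivity
    · exact hBk k x hx v hv1 hv
  refine ⟨Metric.ball 0 (R / 2 / 2), Metric.isOpen_ball, by simpa using hR, ?_, ?_⟩
  · obtain ⟨B, -, hBk⟩ := key2 1 one_pos
    exact contDiffOn_infty.mpr fun k => (hBk k).1
  · intro V _ _ hV σ hσ
    obtain ⟨B, hB, hBk⟩ := key2 (σ / 6) (by positivity)
    refine ⟨B, hB, fun x hx k => ((hBk k).2 x (hV (subset_closure hx))).trans (le_of_eq ?_)⟩
    rw [div_pow]
    field_simp
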